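/- arXiv:1710.10694 — 2 statements merged into one kernel-verified Lean document; each statement's English description precedes it below -/
import Mathlib

section
/- Let (Ω, μ) be a probability space, T : Ω → Ω an invertible ergodic measure-preserving transformation with measurable inverse, and A : Ω → GL(d, ℝ) a measurable linear cocycle with ∫_Ω log⁺‖A(ω)‖ dμ(ω) < ∞ and ∫_Ω log⁺‖A(ω)⁻¹‖ dμ(ω) < ∞. Then there exist an integer k ≥ 1, real numbers λ₁ > λ₂ > ⋯ > λ_k, and for μ-a.e. ω a measurable direct sum decomposition ℝ^d = V^{λ₁}(ω) ⊕ ⋯ ⊕ V^{λ_k}(ω) into nonzero subspaces with A(ω) V^{λ_i}(ω) = V^{λ_i}(Tω), such that for every nonzero v ∈ V^{λ_i}(ω), lim_{N→+∞} (1/N) log ‖A^N(ω) v‖ = λ_i and lim_{N→+∞} (1/N) log ‖A^{−N}(ω) v‖ = −λ_i, where A^{−N}(ω) := A(T^{−N}ω)⁻¹ ⋯ A(T^{−1}ω)⁻¹. -/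
open MeasureTheory Filter Topology

/-- The operator norm of a square real matrix, with respect to Euclidean norms. -/
noncomputable def matOpNorm {d : ℕ} (M : Matrix (Fin d) (Fin d) ℝ) : ℝ :=
  ‖Matrix.toEuclideanCLM (𝕜 := ℝ) M‖

/-- The forward cocycle iterates `A^N(ω) = A(T^{N-1} ω) ⋯ A(T ω) A(ω)`. -/
noncomputable def cocycIter {Ω : Type*} {d : ℕ} (T : Ω → Ω)
    (A : Ω → Matrix (Fin d) (Fin d) ℝ) : ℕ → Ω → Matrix (Fin d) (Fin d) ℝ
  | 0, _ => 1
  | n + 1, ω => cocycIter T A n (T ω) * A ω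

/-- The backward cocycle iterates `A^{-N}(ω) = A(T^{-N} ω)⁻¹ ⋯ A(T^{-1} ω)⁻¹`, expressed
using the inverse map `Tinv` of `T`. -/
noncomputable def backCocycIter {Ω : Type*} {d : ℕ} (Tinv : Ω → Ω)
    (A : Ω → Matrix.GeneralLinearGroup (Fin d) ℝ) : ℕ → Ω → Matrix (Fin d) (Fin d) ℝ
  | 0, _ => 1
  | n + 1, ω => backCocycIter Tinv A n (Tinv ω) * ((A (Tinv ω))⁻¹ : Matrix (Fin d) (Fin d) ℝ)

/-
The cocycle is written as `Φ : ℤ → Ω → E →L[ℝ] E`, where `Φ 0 ω` may be a proper orthogonal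
projection. For each `c` the vectors growing forward at rate at most `c` form a measurable
invariant field of subspaces. If for every `c` this field is almost everywhere zero or everything,
then a recurrence argument upgrades the resulting dichotomy to exact growth at a single two-sided
exponent. Otherwise some slow field is a proper invariant subspace, and in the decomposition into it
and its orthogonal complement the cocycle is block triangular, with diagonal blocks of smaller rank.
By induction both blocks have Oseledets splittings. The off-diagonal block between the exponents
`a` and `b` is removed by a tempered change of coordinates: for `a ≠ b` the coboundary equation is
solved by a convergent series, and for `a = b` nothing has to be removed, since an off-diagonal term
of subexponential growth does not change the exponent. The Oseledets spaces are the images of the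
projections obtained in this way, with those vanishing almost everywhere discarded by ergodicity.
-/

section MaximalErgodic

variable {Ω : Type*} {T : Ω → Ω} {f : Ω → ℝ}

theorem partialSups_birkhoffSum_succ (T : Ω → Ω) (f : Ω → ℝ) (n : ℕ) (ω : Ω) :
    partialSups (birkhoffSum T f · ω) (n + 1) =
      max 0 (f ω + partialSups (birkhoffSum T f · (T ω)) n) := by
  induction n with
  | zero => rw [partialSups_add_one, partialSups_zero, partialSups_zero]; simp
  | succ n ih =>
    rw [partialSups_add_one, ih, partialSups_add_one, birkhoffSum_succ' T f (n + 1),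
      max_assoc, ← max_add_add_left]

theorem partialSups_birkhoffSum_succ_sub (T : Ω → Ω) (f : Ω → ℝ) (n : ℕ) (ω : Ω) :
    partialSups (birkhoffSum T f · ω) (n + 1) - partialSups (birkhoffSum T f · (T ω)) n =
      max (f ω) (-partialSups (birkhoffSum T f · (T ω)) n) := by
  rw [partialSups_birkhoffSum_succ, max_comm, ← max_sub_sub_right]
  simp

theorem bddAbove_birkhoffSum_comp_iff (T : Ω → Ω) (f : Ω → ℝ) (ω : Ω) :
    BddAbove (Set.range (birkhoffSum T f · (T ω))) ↔
      BddAbove (Set.range (birkhoffSum T f · ω)) := by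
  simp only [bddAbove_def, Set.forall_mem_range]
  constructor
  · rintro ⟨b, hb⟩
    refine ⟨max 0 (f ω + b), fun n => ?_⟩
    cases n with
    | zero => simp
    | succ n => simpa [birkhoffSum_succ'] using Or.inr (hb n)
  · rintro ⟨b, hb⟩
    exact ⟨b - f ω, fun n => le_sub_iff_add_le'.2 <| birkhoffSum_succ' T f n ω ▸ hb (n + 1)⟩

theorem tendsto_max_neg_partialSups_birkhoffSum {ω : Ω}
    (h : ¬BddAbove (Set.range (birkhoffSum T f · (T ω)))) :
    Tendsto (fun n => max (f ω) (-partialSups (birkhoffSum T f · (T ω)) n)) atTop (𝓝 (f ω)) := by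
  have htop : Tendsto (partialSups (birkhoffSum T f · (T ω))) atTop atTop :=
    tendsto_atTop_atTop_of_monotone' (partialSups _).monotone
      (bddAbove_range_partialSups.not.2 h)
  refine tendsto_const_nhds.congr' ?_
  filter_upwards [htop.eventually_ge_atTop (-f ω)] with n hn
  exact (max_eq_left (neg_le.1 hn)).symm

variable [MeasurableSpace Ω] {μ : Measure Ω}

theorem integrable_birkhoffSum (hT : MeasurePreserving T μ μ) (hf : Integrable f μ) (n : ℕ) :
    Integrable (birkhoffSum T f n) μ :=
  integrable_finsetSum _ fun i _ => (hT.iterate i).integrable_comp_of_integrable hf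

theorem integrable_partialSups {f : ℕ → Ω → ℝ} (hf : ∀ n, Integrable (f n) μ) (n : ℕ) :
    Integrable (fun ω => partialSups (f · ω) n) μ := by
  induction n with
  | zero => simpa using hf 0
  | succ n ih =>
    exact (ih.sup (hf (n + 1))).congr (.of_forall fun ω => (partialSups_add_one _ n).symm)

/- Write `M n` for the maximum of the first `n` Birkhoff sums, so that
`M (n + 1) - M n ∘ T = max f (-(M n ∘ T))`. Its integral is that of `M (n + 1) - M n`, hence
nonnegative, while it converges to `f` wherever the sums are unbounded. -/
theorem integral_nonneg_of_ae_not_bddAbove_birkhoffSum (hT : MeasurePreserving T μ μ)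
    (hf : Integrable f μ) (h : ∀ᵐ ω ∂μ, ¬BddAbove (Set.range (birkhoffSum T f · ω))) :
    0 ≤ ∫ ω, f ω ∂μ := by
  set M : ℕ → Ω → ℝ := fun n ω => partialSups (birkhoffSum T f · ω) n
  have hM : ∀ n, Integrable (M n) μ := integrable_partialSups (integrable_birkhoffSum hT hf)
  have hMT : ∀ n, Integrable (fun ω => M n (T ω)) μ := fun n =>
    hT.integrable_comp_of_integrable (hM n)
  have hM0 : ∀ n ω, 0 ≤ M n ω := fun n ω => by
    simpa using le_partialSups_of_le (birkhoffSum T f · ω) n.zero_le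
  have hinv : ∀ n, ∫ ω, M n (T ω) ∂μ = ∫ ω, M n ω ∂μ := fun n => by
    rw [← integral_map hT.measurable.aemeasurable (by rw [hT.map_eq]; exact (hM n).1), hT.map_eq]
  have hlim : Tendsto (fun n => ∫ ω, max (f ω) (-M n (T ω)) ∂μ) atTop (𝓝 (∫ ω, f ω ∂μ)) := by
    refine tendsto_integral_of_dominated_convergence (fun ω => |f ω|)
      (fun n => (hf.sup (hMT n).neg).1) hf.abs (fun n => ae_of_all _ fun ω => ?_) ?_
    · rw [Real.norm_eq_abs, abs_le]
      exact ⟨(neg_abs_le _).trans (le_max_left _ _),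
        max_le (le_abs_self _) ((neg_nonpos.2 (hM0 n _)).trans (abs_nonneg _))⟩
    · filter_upwards [hT.quasiMeasurePreserving.ae h] with ω hω
      exact tendsto_max_neg_partialSups_birkhoffSum hω
  refine ge_of_tendsto' hlim fun n => ?_
  calc 0 ≤ ∫ ω, (M (n + 1) ω - M n ω) ∂μ := integral_nonneg fun ω =>
        sub_nonneg.2 ((partialSups _).monotone n.le_succ)
    _ = ∫ ω, (M (n + 1) ω - M n (T ω)) ∂μ := by
        rw [integral_sub (hM _) (hM _), integral_sub (hM _) (hMT _), hinv]
    _ = ∫ ω, max (f ω) (-M n (T ω)) ∂μ := by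
        simp only [M, partialSups_birkhoffSum_succ_sub]

theorem ae_bddAbove_birkhoffSum (hT : Ergodic T μ) (hf : Integrable f μ)
    (hneg : ∫ ω, f ω ∂μ < 0) : ∀ᵐ ω ∂μ, BddAbove (Set.range (birkhoffSum T f · ω)) := by
  have hmeas : NullMeasurableSet {ω | BddAbove (Set.range (birkhoffSum T f · ω))} μ := by
    have : {ω | BddAbove (Set.range (birkhoffSum T f · ω))} =
        ⋃ b : ℕ, ⋂ n : ℕ, {ω | birkhoffSum T f n ω ≤ b} := by
      ext ω
      simp only [bddAbove_def, Set.forall_mem_range, Set.mem_ofPred_eq, Set.mem_iUnion,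
        Set.mem_iInter]
      exact ⟨fun ⟨b, hb⟩ => (exists_nat_ge b).imp fun m hm n => (hb n).trans hm,
        fun ⟨b, hb⟩ => ⟨b, hb⟩⟩
    rw [this]
    exact .iUnion fun b => .iInter fun n => nullMeasurableSet_le
      (integrable_birkhoffSum hT.toMeasurePreserving hf n).aemeasurable aemeasurable_const
  refine (hT.quasiErgodic.ae_mem_or_ae_notMem₀ hmeas ?_).resolve_right fun h =>
    hneg.not_ge (integral_nonneg_of_ae_not_bddAbove_birkhoffSum hT.toMeasurePreserving hf h)
  exact ae_of_all _ fun ω => propext (bddAbove_birkhoffSum_comp_iff T f ω)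

theorem ae_exists_birkhoffSum_le [IsProbabilityMeasure μ] (hT : Ergodic T μ)
    (hf : Integrable f μ) {c : ℝ} (hc : ∫ ω, f ω ∂μ < c) :
    ∀ᵐ ω ∂μ, ∃ b : ℝ, ∀ n : ℕ, birkhoffSum T f n ω ≤ c * n + b := by
  have hneg : ∫ ω, (f ω - c) ∂μ < 0 := by
    rw [integral_sub hf (integrable_const c)]
    simpa using hc
  filter_upwards [ae_bddAbove_birkhoffSum hT (hf.sub (integrable_const c)) hneg] with ω ⟨b, hb⟩
  refine ⟨b, fun n => ?_⟩
  have := hb (Set.mem_range_self n)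
  simp only [birkhoffSum, Pi.sub_apply, Finset.sum_sub_distrib, Finset.sum_const,
    Finset.card_range, nsmul_eq_mul] at this ⊢
  linarith

theorem ae_exists_iterate_le [IsProbabilityMeasure μ] (hT : Ergodic T μ) (hf : Integrable f μ)
    {ε : ℝ} (hε : 0 < ε) : ∀ᵐ ω ∂μ, ∃ K : ℝ, ∀ n : ℕ, f (T^[n] ω) ≤ K + ε * n := by
  set I := ∫ ω, f ω ∂μ
  have hpos : I < I + ε / 2 := by linarith
  have hneg : ∫ ω, (-f) ω ∂μ < -I + ε / 2 := by
    rw [integral_neg']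
    linarith
  filter_upwards [ae_exists_birkhoffSum_le hT hf hpos, ae_exists_birkhoffSum_le hT hf.neg hneg]
    with ω ⟨b, hb⟩ ⟨b', hb'⟩
  refine ⟨b + b' + I + ε / 2, fun n => ?_⟩
  have hupper := hb (n + 1)
  have hlower := hb' n
  rw [birkhoffSum_succ] at hupper
  rw [birkhoffSum_neg] at hlower
  push_cast at hupper
  linarith

end MaximalErgodic

section InvertibleDynamics

theorem perm_iterate_eq_zpow {Ω : Type*} (T : Equiv.Perm Ω) (n : ℕ) : T^[n] = ⇑(T ^ (n : ℤ)) := by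
  rw [zpow_natCast, Equiv.Perm.iterate_eq_pow]

theorem perm_inv_iterate_eq_zpow {Ω : Type*} (T : Equiv.Perm Ω) (n : ℕ) :
    (⇑T⁻¹)^[n] = ⇑(T ^ (-n : ℤ)) := by
  rw [perm_iterate_eq_zpow, inv_zpow, zpow_neg]

theorem perm_zpow_add_apply {Ω : Type*} (T : Equiv.Perm Ω) (m n : ℤ) (ω : Ω) :
    (T ^ (m + n)) ω = (T ^ m) ((T ^ n) ω) := by
  rw [zpow_add, Equiv.Perm.mul_apply]

variable {Ω : Type*} [MeasurableSpace Ω] {μ : Measure Ω} {T : Equiv.Perm Ω}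

theorem measurePreserving_perm_zpow (hT : MeasurePreserving T μ μ)
    (hT' : MeasurePreserving ⇑T⁻¹ μ μ) (n : ℤ) : MeasurePreserving ⇑(T ^ n) μ μ := by
  obtain ⟨n, rfl | rfl⟩ := n.eq_nat_or_neg
  · exact perm_iterate_eq_zpow T n ▸ hT.iterate n
  · exact perm_inv_iterate_eq_zpow T n ▸ hT'.iterate n

theorem ae_forall_zpow (hT : MeasurePreserving T μ μ) (hT' : MeasurePreserving ⇑T⁻¹ μ μ)
    {p : Ω → Prop} (hp : ∀ᵐ ω ∂μ, p ω) : ∀ᵐ ω ∂μ, ∀ k : ℤ, p ((T ^ k) ω) :=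
  ae_all_iff.2 fun k => (measurePreserving_perm_zpow hT hT' k).quasiMeasurePreserving.ae hp

theorem ae_forall_pos_of_monotone {p : ℝ → Ω → Prop} (hmono : ∀ ω, Monotone (p · ω))
    (h : ∀ ε > 0, ∀ᵐ ω ∂μ, p ε ω) : ∀ᵐ ω ∂μ, ∀ ε > 0, p ε ω := by
  have : ∀ᵐ ω ∂μ, ∀ n : ℕ, p (1 / ((n : ℝ) + 1)) ω :=
    ae_all_iff.2 fun n => h _ (by positivity)
  filter_upwards [this] with ω hω ε hε
  obtain ⟨n, hn⟩ := exists_nat_one_div_lt hε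
  exact hmono ω hn.le (hω n)

theorem ae_exists_zpow_le [IsProbabilityMeasure μ] (hT : Ergodic T μ) (hT' : Ergodic ⇑T⁻¹ μ)
    {g : Ω → ℝ} (hg : Integrable g μ) :
    ∀ᵐ ω ∂μ, ∀ ε > 0, ∃ K : ℝ, ∀ k : ℤ, g ((T ^ k) ω) ≤ K + ε * |(k : ℝ)| := by
  refine ae_forall_pos_of_monotone
    (fun ω ε ε' hle ⟨K, hK⟩ => ⟨K, fun k => (hK k).trans (by gcongr)⟩) fun ε hε => ?_
  filter_upwards [ae_exists_iterate_le hT hg hε, ae_exists_iterate_le hT' hg hε]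
    with ω ⟨K₁, h₁⟩ ⟨K₂, h₂⟩
  refine ⟨max K₁ K₂, fun k => ?_⟩
  obtain ⟨n, rfl | rfl⟩ := k.eq_nat_or_neg
  · have := h₁ n
    rw [perm_iterate_eq_zpow] at this
    simp only [Int.cast_natCast, Nat.abs_cast]
    linarith [le_max_left K₁ K₂]
  · have := h₂ n
    rw [perm_inv_iterate_eq_zpow] at this
    simp only [Int.cast_neg, Int.cast_natCast, abs_neg, Nat.abs_cast]
    linarith [le_max_right K₁ K₂]

end InvertibleDynamics

section UniformGrowth

theorem exp_sub_sum_mul_le_of_jumps {M : ℕ} {u w : ℕ → ℝ} {c : ℝ} (hu : ∀ i, 0 ≤ u i)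
    (hw : ∀ i, 0 ≤ w i)
    (h : ∀ i < M, Real.exp (c - w i) * u i ≤ u (i + 1) ∨
      ∃ n : ℕ, 0 < n ∧ i + n ≤ M ∧ Real.exp (c * n) * u i ≤ u (i + n))
    {i : ℕ} (hi : i ≤ M) :
    Real.exp (c * (M - i) - ∑ j ∈ Finset.Ico i M, w j) * u i ≤ u M := by
  induction hm : M - i using Nat.strong_induction_on generalizing i with
  | _ m ih =>
  have extend : ∀ (k : ℕ) (a : ℝ), i < k → k ≤ M → Real.exp a * u i ≤ u k →
      c * (k - i) - ∑ j ∈ Finset.Ico i k, w j ≤ a →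
      Real.exp (c * (M - i) - ∑ j ∈ Finset.Ico i M, w j) * u i ≤ u M := by
    intro k a hik hk hle ha
    refine le_trans ?_ (ih (M - k) (by omega) hk rfl)
    refine le_trans ?_ (mul_le_mul_of_nonneg_left hle (Real.exp_nonneg _))
    rw [← mul_assoc, ← Real.exp_add, ← Finset.sum_Ico_consecutive w hik.le hk]
    refine mul_le_mul_of_nonneg_right (Real.exp_le_exp.2 ?_) (hu i)
    linarith
  rcases hi.eq_or_lt with rfl | hlt
  · simp
  rcases h i hlt with hstep | ⟨n, hn, hnM, hjump⟩
  · exact extend (i + 1) _ i.lt_succ_self hlt hstep (by simp)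
  · refine extend (i + n) _ (by omega) hnM hjump ?_
    have := Finset.sum_nonneg fun j (_ : j ∈ Finset.Ico i (i + n)) => hw j
    push_cast
    linarith

/- The orbit of `y` jumps ahead with gain `c` at times outside `B`; it pays `g + |c|` for each
single step, taken at a time in `B` or too close to the end to jump. -/
theorem exp_sub_mul_le_iterate_of_jumps {Ω Y : Type*} {T : Ω → Ω} {S : Y → Y} {π : Y → Ω}
    (hπ : Function.Semiconj π S T) {ν : Y → ℝ} (hν : ∀ y, 0 ≤ ν y) {g : Ω → ℝ} (hg : ∀ ω, 0 ≤ g ω)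
    {c : ℝ} {N : ℕ} {B : Set Ω} (hstep : ∀ y, Real.exp (-g (π y)) * ν y ≤ ν (S y))
    (hjump : ∀ y, π y ∉ B → ∃ n : ℕ, 0 < n ∧ n ≤ N ∧ Real.exp (c * n) * ν y ≤ ν (S^[n] y))
    (M : ℕ) (y : Y) :
    Real.exp (c * M - (birkhoffSum T (B.indicator fun ω => g ω + |c|) M (π y)
      + ∑ i ∈ Finset.Ico (M - N) M, (g (T^[i] (π y)) + |c|))) * ν y ≤ ν (S^[M] y) := by
  set h : Ω → ℝ := fun ω => g ω + |c|
  have hh : ∀ ω, 0 ≤ h ω := fun ω => add_nonneg (hg ω) (abs_nonneg c)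
  have hind : ∀ ω, 0 ≤ B.indicator h ω := fun ω => Set.indicator_nonneg (fun ω _ => hh ω) ω
  set w : ℕ → ℝ := fun i => B.indicator h (T^[i] (π y)) + if M - N ≤ i then h (T^[i] (π y)) else 0
  have hbase : ∀ i, π (S^[i] y) = T^[i] (π y) := fun i => (hπ.iterate_right i) y
  have hsum : ∑ i ∈ Finset.Ico 0 M, w i = birkhoffSum T (B.indicator h) M (π y)
      + ∑ i ∈ Finset.Ico (M - N) M, h (T^[i] (π y)) := by
    rw [← Finset.range_eq_Ico, Finset.sum_add_distrib, birkhoffSum, ← Finset.sum_filter]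
    congr 2
    ext i
    simp [and_comm]
  have key := exp_sub_sum_mul_le_of_jumps (u := fun i => ν (S^[i] y)) (w := w) (c := c) (M := M)
    (fun i => hν _) (fun i => add_nonneg (hind _) (by split_ifs <;> simp [hh])) ?_ M.zero_le
  · simpa only [hsum, Nat.cast_zero, sub_zero, Function.iterate_zero, id_eq] using key
  intro i _
  by_cases hbad : T^[i] (π y) ∈ B ∨ M - N ≤ i
  · have hw : h (T^[i] (π y)) ≤ w i := by
      rcases hbad with hB | hN
      · simp only [w, Set.indicator_of_mem hB, le_add_iff_nonneg_right]
        split_ifs <;> simp [hh]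
      · simpa only [w, if_pos hN, le_add_iff_nonneg_left] using hind _
    left
    rw [Function.iterate_succ_apply']
    refine (mul_le_mul_of_nonneg_right (Real.exp_le_exp.2 ?_) (hν _)).trans (hstep _)
    rw [hbase]
    linarith [le_abs_self c]
  · push Not at hbad
    obtain ⟨n, hn, hnN, hle⟩ := hjump (S^[i] y) (by rw [hbase]; exact hbad.1)
    exact Or.inr ⟨n, hn, by omega, by rwa [add_comm i n, Function.iterate_add_apply]⟩

variable {Ω : Type*} [MeasurableSpace Ω] {μ : Measure Ω}

theorem exists_integral_indicator_compl_lt {G : ℕ → Set Ω} (hG : ∀ N, MeasurableSet (G N))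
    (hmono : Monotone G) (hae : ∀ᵐ ω ∂μ, ∃ N, ω ∈ G N) {h : Ω → ℝ} (hh : Integrable h μ)
    {δ : ℝ} (hδ : 0 < δ) : ∃ N, ∫ ω, (G N)ᶜ.indicator h ω ∂μ < δ := by
  have hlim := tendsto_setIntegral_of_antitone (s := fun N => (G N)ᶜ)
    (fun N => (hG N).compl) (fun _ _ hab => Set.compl_subset_compl.2 (hmono hab))
    ⟨0, hh.integrableOn⟩
  have hzero : ∫ x in ⋂ n, (G n)ᶜ, h x ∂μ = 0 := by
    refine setIntegral_measure_zero _ ?_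
    rw [← Set.compl_iUnion, ← mem_ae_iff]
    filter_upwards [hae] with ω hω using Set.mem_iUnion.2 hω
  rw [hzero] at hlim
  obtain ⟨N, hN⟩ := (hlim.eventually (gt_mem_nhds hδ)).exists
  exact ⟨N, by rwa [integral_indicator (hG N).compl]⟩

theorem birkhoffSum_perm_inv {α β : Type*} [AddCommMonoid β] (T : Equiv.Perm α) (f : α → β)
    (n : ℕ) (x : α) : birkhoffSum ⇑T⁻¹ (f ∘ ⇑T⁻¹) n (T^[n] x) = birkhoffSum T f n x := by
  induction n with
  | zero => simp
  | succ n ih =>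
    rw [birkhoffSum_succ', birkhoffSum_succ, Function.iterate_succ_apply', Function.comp_apply,
      Equiv.Perm.inv_eq_iff_eq.2 rfl, ih, add_comm]

variable {T : Equiv.Perm Ω} [IsProbabilityMeasure μ]

theorem ae_exists_birkhoffSum_segment_le (hT : Ergodic T μ) (hT' : Ergodic ⇑T⁻¹ μ) {f : Ω → ℝ}
    (hf : Integrable f μ) {c : ℝ} (hc : ∫ ω, f ω ∂μ < c) :
    ∀ᵐ ω ∂μ, ∃ K : ℝ, ∀ (M : ℕ) (ω₀ : Ω), ω₀ = ω ∨ T^[M] ω₀ = ω →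
      birkhoffSum T f M ω₀ ≤ c * M + K := by
  have hf' : Integrable (f ∘ ⇑T⁻¹) μ := hT'.toMeasurePreserving.integrable_comp_of_integrable hf
  have hc' : ∫ ω, (f ∘ ⇑T⁻¹) ω ∂μ < c := by
    rwa [Function.comp_def, ← integral_map hT'.measurable.aemeasurable (by
      rw [hT'.map_eq]; exact hf.1), hT'.map_eq]
  filter_upwards [ae_exists_birkhoffSum_le hT hf hc, ae_exists_birkhoffSum_le hT' hf' hc']
    with ω ⟨b, hb⟩ ⟨b', hb'⟩
  refine ⟨max b b', fun M ω₀ hω₀ => ?_⟩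
  rcases hω₀ with rfl | rfl
  · exact (hb M).trans (by gcongr; exact le_max_left _ _)
  · exact birkhoffSum_perm_inv T f M ω₀ ▸ (hb' M).trans (by gcongr; exact le_max_right _ _)

theorem ae_exists_sum_Ico_segment_le (hT : Ergodic T μ) (hT' : Ergodic ⇑T⁻¹ μ) {h : Ω → ℝ}
    (hh : Integrable h μ) (h0 : ∀ ω, 0 ≤ h ω) (N : ℕ) {δ : ℝ} (hδ : 0 < δ) :
    ∀ᵐ ω ∂μ, ∃ K : ℝ, ∀ (M : ℕ) (ω₀ : Ω), ω₀ = ω ∨ T^[M] ω₀ = ω →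
      ∑ i ∈ Finset.Ico (M - N) M, h (T^[i] ω₀) ≤ δ * M + K := by
  filter_upwards [ae_exists_zpow_le hT hT' hh] with ω hω
  obtain ⟨K, hK⟩ := hω (δ / (N + 1)) (by positivity)
  have hK0 : 0 ≤ K := (h0 ω).trans (by simpa using hK 0)
  refine ⟨N * K, fun M ω₀ hω₀ => ?_⟩
  have hterm : ∀ i ∈ Finset.Ico (M - N) M, h (T^[i] ω₀) ≤ K + δ / (N + 1) * M := by
    intro i hi
    obtain ⟨k, hk, hkM⟩ : ∃ k : ℤ, T^[i] ω₀ = (T ^ k) ω ∧ |k| ≤ M := by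
      have hiM := (Finset.mem_Ico.1 hi).2
      rcases hω₀ with rfl | rfl
      · exact ⟨i, by rw [perm_iterate_eq_zpow], by rw [Nat.abs_cast]; omega⟩
      · refine ⟨i - M, ?_, by rw [abs_le]; omega⟩
        rw [perm_iterate_eq_zpow, perm_iterate_eq_zpow, ← perm_zpow_add_apply, sub_add_cancel]
    rw [hk]
    refine (hK k).trans ?_
    gcongr
    exact_mod_cast hkM
  have hcard : ((M - (M - N) : ℕ) : ℝ) ≤ N := by exact_mod_cast (by omega : M - (M - N) ≤ N)
  calc ∑ i ∈ Finset.Ico (M - N) M, h (T^[i] ω₀)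
      ≤ ((M - (M - N) : ℕ) : ℝ) * (K + δ / (N + 1) * M) := by
        simpa only [Nat.card_Ico, nsmul_eq_mul] using Finset.sum_le_card_nsmul _ _ _ hterm
    _ ≤ N * (K + δ / (N + 1) * M) := by gcongr
    _ = N / (N + 1) * (δ * M) + N * K := by field_simp; ring
    _ ≤ 1 * (δ * M) + N * K := by
        gcongr
        exact (div_le_one (by positivity)).2 (by linarith)
    _ = δ * M + N * K := by rw [one_mul]

theorem ae_exists_exp_mul_le_iterate {Y : Type*} {S : Y → Y} {π : Y → Ω} (hT : Ergodic T μ)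
    (hT' : Ergodic ⇑T⁻¹ μ) (hπ : Function.Semiconj π S T) {ν : Y → ℝ} (hν : ∀ y, 0 ≤ ν y)
    {g : Ω → ℝ} (hg : Integrable g μ) (hg0 : ∀ ω, 0 ≤ g ω) {c c' : ℝ} (hc : c' < c)
    {G : ℕ → Set Ω} (hG : ∀ N, MeasurableSet (G N)) (hmono : Monotone G)
    (hae : ∀ᵐ ω ∂μ, ∃ N, ω ∈ G N) (hstep : ∀ y, Real.exp (-g (π y)) * ν y ≤ ν (S y))
    (hjump : ∀ N y, π y ∈ G N →
      ∃ n : ℕ, 0 < n ∧ n ≤ N ∧ Real.exp (c * n) * ν y ≤ ν (S^[n] y)) :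
    ∀ᵐ ω ∂μ, ∃ K : ℝ, ∀ (M : ℕ) (y : Y), π y = ω ∨ π (S^[M] y) = ω →
      Real.exp (c' * M - K) * ν y ≤ ν (S^[M] y) := by
  obtain ⟨δ, hδ, rfl⟩ : ∃ δ > 0, c' = c - 2 * δ := ⟨(c - c') / 2, by linarith, by ring⟩
  have hh : Integrable (fun ω => g ω + |c|) μ := hg.add (integrable_const _)
  obtain ⟨N, hN⟩ := exists_integral_indicator_compl_lt hG hmono hae hh hδ
  have hchop := exp_sub_mul_le_iterate_of_jumps hπ hν hg0 (B := (G N)ᶜ) hstep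
    fun y hy => hjump N y (Set.notMem_compl_iff.1 hy)
  filter_upwards [ae_exists_birkhoffSum_segment_le hT hT' (hh.indicator (hG N).compl) hN,
    ae_exists_sum_Ico_segment_le hT hT' hh (fun ω => add_nonneg (hg0 ω) (abs_nonneg c)) N hδ]
    with ω ⟨K₁, hK₁⟩ ⟨K₂, hK₂⟩
  refine ⟨K₁ + K₂, fun M y hy => (mul_le_mul_of_nonneg_right ?_ (hν y)).trans (hchop M y)⟩
  rw [hπ.iterate_right M y] at hy
  refine Real.exp_le_exp.2 ?_
  linarith [hK₁ M (π y) hy, hK₂ M (π y) hy]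

end UniformGrowth

section ExponentialRates

theorem exists_norm_le_mul_exp_of_norm_sub_le {W : Type*} [SeminormedAddCommGroup W] {v : ℕ → W}
    {K ε : ℝ} (hε : 0 < ε) (h : ∀ n, ‖v (n + 1) - v n‖ ≤ K * Real.exp (ε * n)) :
    ∃ K', ∀ n, ‖v n‖ ≤ K' * Real.exp (ε * n) := by
  have hr : 0 < Real.exp ε - 1 := by linarith [Real.one_lt_exp_iff.mpr hε]
  have hK0 : 0 ≤ K := by simpa using (norm_nonneg _).trans (h 0)
  refine ⟨‖v 0‖ + K / (Real.exp ε - 1), fun n => ?_⟩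
  induction n with
  | zero => simpa using by positivity
  | succ n ih =>
    calc ‖v (n + 1)‖
        ≤ ‖v n‖ + ‖v (n + 1) - v n‖ := by simpa using norm_add_le (v n) (v (n + 1) - v n)
      _ ≤ (‖v 0‖ + K / (Real.exp ε - 1)) * Real.exp (ε * n) + K * Real.exp (ε * n) :=
          add_le_add ih (h n)
      _ = (‖v 0‖ + K / (Real.exp ε - 1) * Real.exp ε) * Real.exp (ε * n) := by
          field_simp
          ring
      _ ≤ (‖v 0‖ * Real.exp ε + K / (Real.exp ε - 1) * Real.exp ε) * Real.exp (ε * n) := by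
          gcongr
          exact le_mul_of_one_le_right (norm_nonneg _) (Real.one_le_exp hε.le)
      _ = (‖v 0‖ + K / (Real.exp ε - 1)) * Real.exp (ε * (n + 1 : ℕ)) := by
          push_cast
          rw [mul_add, mul_one, Real.exp_add]
          ring

/-- A two-sided sequence grows at most like `exp (a k)`, up to subexponential factors in `|k|`. -/
def HasRate {W : Type*} [Norm W] (u : ℤ → W) (a : ℝ) : Prop :=
  ∀ ε > 0, ∃ K : ℝ, ∀ k : ℤ, ‖u k‖ ≤ K * Real.exp (a * k + ε * |(k : ℝ)|)

namespace HasRate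

variable {W : Type*} [NormedAddCommGroup W] {u v : ℤ → W} {a b : ℝ}

theorem add (hu : HasRate u a) (hv : HasRate v a) : HasRate (fun k => u k + v k) a := by
  intro ε hε
  obtain ⟨K, hK⟩ := hu ε hε
  obtain ⟨K', hK'⟩ := hv ε hε
  refine ⟨K + K', fun k => (norm_add_le _ _).trans ?_⟩
  rw [add_mul]
  exact add_le_add (hK k) (hK' k)

theorem neg (hu : HasRate u a) : HasRate (fun k => -u k) a := by
  simpa only [HasRate, norm_neg] using hu

theorem sub (hu : HasRate u a) (hv : HasRate v a) : HasRate (fun k => u k - v k) a := by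
  simpa only [sub_eq_add_neg] using hu.add hv.neg

theorem zero : HasRate (fun _ => (0 : W)) a := fun _ _ => ⟨0, fun k => by simp⟩

theorem sum {ι : Type*} (s : Finset ι) {u : ι → ℤ → W} (hu : ∀ i ∈ s, HasRate (u i) a) :
    HasRate (fun k => ∑ i ∈ s, u i k) a := by
  classical
  induction s using Finset.induction_on with
  | empty => simpa using zero
  | insert i s his ih =>
    simp only [Finset.sum_insert his]
    exact (hu i (Finset.mem_insert_self i s)).add
      (ih fun j hj => hu j (Finset.mem_insert_of_mem hj))

theorem of_norm_le {C : ℝ} (hu : ∀ k, ‖u k‖ ≤ C) : HasRate u 0 := fun ε hε => ⟨C, fun k => by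
  have h1 : 1 ≤ Real.exp (0 * k + ε * |(k : ℝ)|) := Real.one_le_exp (by
    rw [zero_mul, zero_add]; positivity)
  exact (hu k).trans (le_mul_of_one_le_right ((norm_nonneg _).trans (hu 0)) h1)⟩

theorem const (w : W) : HasRate (fun _ => w) 0 := of_norm_le fun _ => le_rfl

theorem of_le_exp {g : ℤ → ℝ} (hg : ∀ ε > 0, ∃ K, ∀ k : ℤ, g k ≤ K + ε * |(k : ℝ)|)
    (hu : ∀ k, ‖u k‖ ≤ Real.exp (g k)) : HasRate u 0 := by
  intro ε hε
  obtain ⟨K, hK⟩ := hg ε hε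
  refine ⟨Real.exp K, fun k => (hu k).trans ?_⟩
  rw [← Real.exp_add, zero_mul, zero_add]
  exact Real.exp_le_exp.mpr (hK k)

theorem mul {M : Type*} [NormedRing M] {u v : ℤ → M} (hu : HasRate u a) (hv : HasRate v b) :
    HasRate (fun k => u k * v k) (a + b) := by
  intro ε hε
  obtain ⟨K, hK⟩ := hu (ε / 2) (half_pos hε)
  obtain ⟨K', hK'⟩ := hv (ε / 2) (half_pos hε)
  refine ⟨K * K', fun k => (norm_mul_le _ _).trans ?_⟩
  refine (mul_le_mul (hK k) (hK' k) (norm_nonneg _) ((norm_nonneg _).trans (hK k))).trans ?_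
  rw [mul_mul_mul_comm, ← Real.exp_add]
  refine le_of_eq ?_
  congr 2
  ring

theorem comp_neg (hu : HasRate u a) : HasRate (fun k => u (-k)) (-a) := by
  intro ε hε
  obtain ⟨K, hK⟩ := hu ε hε
  refine ⟨K, fun k => ?_⟩
  simpa using hK (-k)

theorem exists_nonneg_const (hu : HasRate u a) {ε : ℝ} (hε : 0 < ε) :
    ∃ K, 0 ≤ K ∧ ∀ k : ℤ, ‖u k‖ ≤ K * Real.exp (a * k + ε * |(k : ℝ)|) := by
  obtain ⟨K, hK⟩ := hu ε hε
  exact ⟨K, by simpa using (norm_nonneg _).trans (hK 0), hK⟩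

theorem of_forall_lt {δ : ℝ} (hδ : 0 < δ)
    (h : ∀ ε, 0 < ε → ε < δ →
      ∃ K : ℝ, ∀ k : ℤ, ‖u k‖ ≤ K * Real.exp (a * k + ε * |(k : ℝ)|)) :
    HasRate u a := by
  intro ε hε
  obtain ⟨K, hK⟩ := h (min ε (δ / 2)) (lt_min hε (half_pos hδ))
    ((min_le_right _ _).trans_lt (half_lt_self hδ))
  have hK0 : 0 ≤ K := by simpa using (norm_nonneg _).trans (hK 0)
  refine ⟨K, fun k => (hK k).trans ?_⟩
  gcongr
  exact min_le_left _ _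

theorem exists_dist_le_geometric (hu : HasRate (fun n => u (n + 1) - u n) a) {ε : ℝ}
    (hε : 0 < ε) : ∃ K : ℝ, ∀ (n : ℤ) (j : ℕ), dist (u (n + j)) (u (n + (j + 1 : ℕ))) ≤
      K * Real.exp (a * n + ε * |(n : ℝ)|) * Real.exp (a + ε) ^ j := by
  obtain ⟨K, hK0, hK⟩ := hu.exists_nonneg_const hε
  refine ⟨K, fun n j => ?_⟩
  have habs : ε * |(n : ℝ) + j| ≤ ε * (|(n : ℝ)| + j) := by
    gcongr
    simpa using abs_add_le (n : ℝ) (j : ℝ)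
  calc dist (u (n + j)) (u (n + (j + 1 : ℕ)))
      = ‖u (n + j + 1) - u (n + j)‖ := by
        rw [dist_eq_norm, norm_sub_rev, Nat.cast_succ, add_assoc]
    _ ≤ K * Real.exp (a * (n + j) + ε * |(n : ℝ) + j|) := by simpa using hK (n + j)
    _ ≤ K * Real.exp (a * n + ε * |(n : ℝ)| + j * (a + ε)) := by
        refine mul_le_mul_of_nonneg_left (Real.exp_le_exp.mpr ?_) hK0
        linarith
    _ = K * Real.exp (a * n + ε * |(n : ℝ)|) * Real.exp (a + ε) ^ j := by
        rw [Real.exp_add, Real.exp_nat_mul, mul_assoc]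

theorem exists_limit [CompleteSpace W] (ha : a < 0)
    (hu : HasRate (fun n => u (n + 1) - u n) a) :
    ∃ l, Tendsto u atTop (𝓝 l) ∧ HasRate (fun n => l - u n) a := by
  have hr {ε : ℝ} (hε : ε < -a) : Real.exp (a + ε) < 1 :=
    Real.exp_lt_one_iff.mpr (by linarith)
  obtain ⟨K, hK⟩ := exists_dist_le_geometric hu (ε := -a / 2) (by linarith)
  obtain ⟨l, hl⟩ := cauchySeq_tendsto_of_complete
    (cauchySeq_of_le_geometric _ _ (hr (by linarith)) (hK 0))
  have hl' : Tendsto u atTop (𝓝 l) := by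
    rw [← Nat.map_cast_int_atTop, tendsto_map'_iff]
    simpa [Function.comp_def] using hl
  refine ⟨l, hl', of_forall_lt (neg_pos.mpr ha) fun ε hε hεa => ?_⟩
  obtain ⟨K, hK⟩ := exists_dist_le_geometric hu hε
  refine ⟨K / (1 - Real.exp (a + ε)), fun n => ?_⟩
  have hn : Tendsto (fun j : ℕ => u (n + j)) atTop (𝓝 l) :=
    hl'.comp (tendsto_atTop_add_const_left _ _ tendsto_natCast_atTop_atTop)
  have hdist := dist_le_of_le_geometric_of_tendsto₀ _ _ (hr hεa) (hK n) hn
  rw [Nat.cast_zero, add_zero, dist_comm, dist_eq_norm] at hdist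
  exact hdist.trans_eq (mul_div_right_comm _ _ _)

theorem of_differences (h1 : HasRate (fun n => u (n + 1) - u n) 0)
    (h2 : HasRate (fun n => u (n - 1) - u n) 0) : HasRate u 0 := by
  intro ε hε
  obtain ⟨K1, hK1⟩ := h1 ε hε
  obtain ⟨K2, hK2⟩ := h2 ε hε
  obtain ⟨C1, hC1⟩ := exists_norm_le_mul_exp_of_norm_sub_le (v := fun n : ℕ => u n)
    (K := K1) hε fun n => by simpa using hK1 n
  obtain ⟨C2, hC2⟩ := exists_norm_le_mul_exp_of_norm_sub_le (v := fun n : ℕ => u (-n))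
    (K := K2) hε fun n => by
    have : ‖u (-n - 1) - u (-n)‖ ≤ _ := hK2 (-n)
    rw [← neg_add'] at this
    simpa using this
  refine ⟨max C1 C2, fun k => ?_⟩
  obtain ⟨n, rfl | rfl⟩ := k.eq_nat_or_neg
  · refine (hC1 n).trans ?_
    simp only [Int.cast_natCast, Nat.abs_cast, zero_mul, zero_add]
    gcongr
    exact le_max_left _ _
  · refine (hC2 n).trans ?_
    simp only [Int.cast_neg, Int.cast_natCast, abs_neg, Nat.abs_cast, zero_mul, zero_add]
    gcongr
    exact le_max_right _ _

end HasRate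

end ExponentialRates

section TwistedCohomology

theorem hasRate_zero_of_twisted_cocycle {Ω M : Type*} [NormedRing M] {T : Equiv.Perm Ω}
    {c x y : ℤ → Ω → M} {a : ℝ} {ω : Ω}
    (hcoc : ∀ m n : ℤ, c (m + n) ω = c n ω + x n ω * c m ((T ^ n) ω) * y n ω)
    (hx : HasRate (fun n => x n ω) (-a)) (hy : HasRate (fun n => y n ω) a)
    (hc₁ : HasRate (fun n => c 1 ((T ^ n) ω)) 0)
    (hc₂ : HasRate (fun n => c (-1) ((T ^ n) ω)) 0) :
    HasRate (fun n => c n ω) 0 := by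
  have hdiff (m n : ℤ) : c (n + m) ω - c n ω = x n ω * c m ((T ^ n) ω) * y n ω := by
    rw [add_comm, hcoc, add_sub_cancel_left]
  refine HasRate.of_differences ?_ ?_
  · simpa only [hdiff, add_zero, neg_add_cancel] using (hx.mul hc₁).mul hy
  · simpa only [sub_eq_add_neg _ (1 : ℤ), hdiff, add_zero, neg_add_cancel] using
      (hx.mul hc₂).mul hy

variable {Ω : Type*} [MeasurableSpace Ω] {μ : Measure Ω}
  {M : Type*} [NormedRing M] [CompleteSpace M] [MeasurableSpace M] [BorelSpace M]

theorem exists_twisted_coboundary_of_lt {T : Equiv.Perm Ω} (hT : MeasurePreserving T μ μ)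
    (hT' : MeasurePreserving ⇑T⁻¹ μ μ) {c x y : ℤ → Ω → M} {a b : ℝ} (hab : b < a)
    (hc : ∀ n, Measurable (c n))
    (hcoc : ∀ᵐ ω ∂μ, ∀ m n : ℤ, c (m + n) ω = c n ω + x n ω * c m ((T ^ n) ω) * y n ω)
    (hx : ∀ᵐ ω ∂μ, HasRate (fun n => x n ω) (-a)) (hy : ∀ᵐ ω ∂μ, HasRate (fun n => y n ω) b)
    (hc₁ : ∀ᵐ ω ∂μ, HasRate (fun n => c 1 ((T ^ n) ω)) 0) :
    ∃ L : Ω → M, Measurable L ∧ ∀ᵐ ω ∂μ, HasRate (fun k => L ω + c k ω) (b - a) ∧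
      ∀ k : ℤ, L ω + c k ω = x k ω * L ((T ^ k) ω) * y k ω := by
  have hlim : ∀ᵐ ω ∂μ, ∃ l, Tendsto (fun n => -c n ω) atTop (𝓝 l) ∧
      HasRate (fun n => l - -c n ω) (b - a) := by
    filter_upwards [hcoc, hx, hy, hc₁] with ω h1 h2 h3 h4
    refine HasRate.exists_limit (by linarith) ?_
    have : ∀ n : ℤ, -c (n + 1) ω - -c n ω = -(x n ω * c 1 ((T ^ n) ω) * y n ω) := by
      intro n
      rw [add_comm, h1]
      abel
    simp only [this]
    have := ((h2.mul h4).mul h3).neg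
    rwa [show -a + 0 + b = b - a by ring] at this
  obtain ⟨L, hLm, hL⟩ := measurable_limit_of_tendsto_metrizable_ae (μ := μ)
    (f := fun (n : ℤ) ω => -c n ω) (L := atTop) (fun n => (hc n).neg.aemeasurable)
    (hlim.mono fun ω ⟨l, hl, _⟩ => ⟨l, hl⟩)
  refine ⟨L, hLm, ?_⟩
  filter_upwards [hlim, hL, ae_forall_zpow hT hT' hL, hcoc] with ω ⟨l, hl, hlr⟩ h1 h2 h3
  obtain rfl := tendsto_nhds_unique hl h1
  refine ⟨by simpa only [sub_neg_eq_add] using hlr, fun k => ?_⟩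
  have e1 : Tendsto (fun m : ℤ => -c (m + k) ω) atTop (𝓝 (L ω)) :=
    h1.comp (tendsto_atTop_add_const_right _ k tendsto_id)
  have e2 : Tendsto (fun m : ℤ => -c (m + k) ω) atTop
      (𝓝 (-c k ω + x k ω * L ((T ^ k) ω) * y k ω)) := by
    have : ∀ m : ℤ, -c (m + k) ω = -c k ω + x k ω * -c m ((T ^ k) ω) * y k ω := by
      intro m
      rw [h3, mul_neg, neg_mul]
      abel
    simp only [this]
    exact (((h2 k).const_mul _).mul_const _).const_add _
  rw [tendsto_nhds_unique e1 e2]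
  abel

theorem exists_twisted_coboundary_of_gt {T : Equiv.Perm Ω} (hT : MeasurePreserving T μ μ)
    (hT' : MeasurePreserving ⇑T⁻¹ μ μ) {c x y : ℤ → Ω → M} {a b : ℝ} (hab : a < b)
    (hc : ∀ n, Measurable (c n))
    (hcoc : ∀ᵐ ω ∂μ, ∀ m n : ℤ, c (m + n) ω = c n ω + x n ω * c m ((T ^ n) ω) * y n ω)
    (hx : ∀ᵐ ω ∂μ, HasRate (fun n => x n ω) (-a)) (hy : ∀ᵐ ω ∂μ, HasRate (fun n => y n ω) b)
    (hc₂ : ∀ᵐ ω ∂μ, HasRate (fun n => c (-1) ((T ^ n) ω)) 0) :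
    ∃ L : Ω → M, Measurable L ∧ ∀ᵐ ω ∂μ, HasRate (fun k => L ω + c k ω) (b - a) ∧
      ∀ k : ℤ, L ω + c k ω = x k ω * L ((T ^ k) ω) * y k ω := by
  obtain ⟨L, hLm, hL⟩ := exists_twisted_coboundary_of_lt (T := T⁻¹) hT' (by simpa using hT)
    (c := fun n => c (-n)) (x := fun n => x (-n)) (y := fun n => y (-n))
    (neg_lt_neg hab) (fun n => hc _)
    (hcoc.mono fun ω h m n => by rw [neg_add, h, inv_zpow, ← zpow_neg])
    (hx.mono fun ω h => h.comp_neg) (hy.mono fun ω h => h.comp_neg)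
    (hc₂.mono fun ω h => by simpa [inv_zpow, ← zpow_neg] using h.comp_neg)
  refine ⟨L, hLm, hL.mono fun ω ⟨hrate, heq⟩ => ⟨?_, fun k => ?_⟩⟩
  · simpa only [neg_neg, neg_sub_neg, neg_sub] using hrate.comp_neg
  · simpa [inv_zpow, ← zpow_neg] using heq (-k)

theorem exists_twisted_coboundary_of_ne {T : Equiv.Perm Ω} (hT : MeasurePreserving T μ μ)
    (hT' : MeasurePreserving ⇑T⁻¹ μ μ) {c x y : ℤ → Ω → M} {a b : ℝ} (hab : a ≠ b)
    (hc : ∀ n, Measurable (c n))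
    (hcoc : ∀ᵐ ω ∂μ, ∀ m n : ℤ, c (m + n) ω = c n ω + x n ω * c m ((T ^ n) ω) * y n ω)
    (hx : ∀ᵐ ω ∂μ, HasRate (fun n => x n ω) (-a)) (hy : ∀ᵐ ω ∂μ, HasRate (fun n => y n ω) b)
    (hc₁ : ∀ᵐ ω ∂μ, HasRate (fun n => c 1 ((T ^ n) ω)) 0)
    (hc₂ : ∀ᵐ ω ∂μ, HasRate (fun n => c (-1) ((T ^ n) ω)) 0) :
    ∃ L : Ω → M, Measurable L ∧ ∀ᵐ ω ∂μ, HasRate (fun k => L ω + c k ω) (b - a) ∧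
      ∀ k : ℤ, L ω + c k ω = x k ω * L ((T ^ k) ω) * y k ω := by
  rcases hab.lt_or_gt with hab | hab
  · exact exists_twisted_coboundary_of_gt hT hT' hab hc hcoc hx hy hc₂
  · exact exists_twisted_coboundary_of_lt hT hT' hab hc hcoc hx hy hc₁

end TwistedCohomology

section LinearCocycles

variable {Ω : Type*} {M : Type*} [Ring M]

/-- A linear cocycle over `T` with values in a ring. The idempotents `Φ 0 ω` need not be `1`: the
cocycle acts invertibly on the corners that they cut out. -/
structure IsLinearCocycle (T : Equiv.Perm Ω) (Φ : ℤ → Ω → M) : Prop where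
  apply_add : ∀ m n ω, Φ (m + n) ω = Φ m ((T ^ n) ω) * Φ n ω

theorem perm_zpow_neg_apply_zpow (T : Equiv.Perm Ω) (n : ℤ) (ω : Ω) :
    (T ^ (-n)) ((T ^ n) ω) = ω := by
  rw [← perm_zpow_add_apply, neg_add_cancel, zpow_zero, Equiv.Perm.one_apply]

namespace IsLinearCocycle

variable {T : Equiv.Perm Ω} {Φ : ℤ → Ω → M}

theorem zero_mul_apply (h : IsLinearCocycle T Φ) (n : ℤ) (ω : Ω) :
    Φ 0 ((T ^ n) ω) * Φ n ω = Φ n ω := by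
  simpa using (h.apply_add 0 n ω).symm

theorem apply_mul_zero (h : IsLinearCocycle T Φ) (n : ℤ) (ω : Ω) : Φ n ω * Φ 0 ω = Φ n ω := by
  simpa using (h.apply_add n 0 ω).symm

theorem zero_mul_zero (h : IsLinearCocycle T Φ) (ω : Ω) : Φ 0 ω * Φ 0 ω = Φ 0 ω :=
  h.apply_mul_zero 0 ω

theorem apply_mul_neg (h : IsLinearCocycle T Φ) (n : ℤ) (ω : Ω) :
    Φ n ω * Φ (-n) ((T ^ n) ω) = Φ 0 ((T ^ n) ω) := by
  simpa using (h.apply_add n (-n) ((T ^ n) ω)).symm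

theorem neg_mul_apply (h : IsLinearCocycle T Φ) (n : ℤ) (ω : Ω) :
    Φ (-n) ((T ^ n) ω) * Φ n ω = Φ 0 ω := by
  simpa using (h.apply_add (-n) n ω).symm

theorem zero_mul_neg (h : IsLinearCocycle T Φ) (n : ℤ) (ω : Ω) :
    Φ 0 ω * Φ (-n) ((T ^ n) ω) = Φ (-n) ((T ^ n) ω) := by
  simpa using h.zero_mul_apply (-n) ((T ^ n) ω)

theorem neg_add_apply (h : IsLinearCocycle T Φ) (m n : ℤ) (ω : Ω) :
    Φ (-(m + n)) ((T ^ (m + n)) ω) =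
      Φ (-n) ((T ^ n) ω) * Φ (-m) ((T ^ m) ((T ^ n) ω)) := by
  rw [neg_add_rev, h.apply_add, ← perm_zpow_add_apply, ← perm_zpow_add_apply, neg_add_cancel_left]

end IsLinearCocycle

end LinearCocycles

section Splittings

variable {Ω : Type*} {M : Type*} [NormedRing M]

/-- At the point `ω`, the operators `pr l`, `l ∈ S`, are complementary projections of the image of
`Φ 0`, equivariant under the cocycle `Φ`, on which `Φ` grows at the exact two-sided rate `l`. -/
structure SplitsAt (T : Equiv.Perm Ω) (Φ : ℤ → Ω → M) (S : Finset ℝ) (pr : ℝ → Ω → M) (ω : Ω) :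
    Prop where
  sum_eq : ∑ l ∈ S, pr l ω = Φ 0 ω
  eq_zero : ∀ l ∉ S, pr l ω = 0
  mul_self : ∀ l, pr l ω * pr l ω = pr l ω
  mul_of_ne : ∀ l l', l ≠ l' → pr l ω * pr l' ω = 0
  comm : ∀ l (n : ℤ), Φ n ω * pr l ω = pr l ((T ^ n) ω) * Φ n ω
  rate : ∀ l, HasRate (fun k => Φ k ω * pr l ω) l
  rate_inv : ∀ l, HasRate (fun k => pr l ω * Φ (-k) ((T ^ k) ω)) (-l)

/-- The cocycle `Φ` admits a measurable Oseledets splitting almost everywhere; the Oseledets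
subspaces are encoded by the projections onto them along the sum of the others. -/
def IsOseledetsRegular [MeasurableSpace Ω] [MeasurableSpace M] (T : Equiv.Perm Ω) (μ : Measure Ω)
    (Φ : ℤ → Ω → M) : Prop :=
  ∃ (S : Finset ℝ) (pr : ℝ → Ω → M), (∀ l, Measurable (pr l)) ∧ ∀ᵐ ω ∂μ, SplitsAt T Φ S pr ω

namespace SplitsAt

variable {T : Equiv.Perm Ω} {Φ : ℤ → Ω → M} {S : Finset ℝ} {pr : ℝ → Ω → M} {ω : Ω}

theorem sum_mul_of_forall_ne {x : M} {l : ℝ} (h : SplitsAt T Φ S pr ω)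
    (hx : ∀ l', l' ≠ l → pr l' ω * x = 0) : Φ 0 ω * x = pr l ω * x := by
  rw [← h.sum_eq, Finset.sum_mul]
  exact Finset.sum_eq_single l (fun l' _ hl' => hx l' hl') fun hl => by
    rw [h.eq_zero l hl, zero_mul]

theorem mul_sum_of_forall_ne {x : M} {l : ℝ} (h : SplitsAt T Φ S pr ω)
    (hx : ∀ l', l' ≠ l → x * pr l' ω = 0) : x * Φ 0 ω = x * pr l ω := by
  rw [← h.sum_eq, Finset.mul_sum]
  exact Finset.sum_eq_single l (fun l' _ hl' => hx l' hl') fun hl => by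
    rw [h.eq_zero l hl, mul_zero]

theorem zero_mul_proj (h : SplitsAt T Φ S pr ω) (l : ℝ) : Φ 0 ω * pr l ω = pr l ω := by
  rw [h.sum_mul_of_forall_ne fun l' hl' => h.mul_of_ne l' l hl', h.mul_self]

theorem proj_mul_zero (h : SplitsAt T Φ S pr ω) (l : ℝ) : pr l ω * Φ 0 ω = pr l ω := by
  rw [h.mul_sum_of_forall_ne fun l' hl' => h.mul_of_ne l l' hl'.symm, h.mul_self]

theorem sum_eq_of_subset {S' : Finset ℝ} (h : SplitsAt T Φ S pr ω) (hS : S ⊆ S') :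
    ∑ l ∈ S', pr l ω = Φ 0 ω := by
  rw [← h.sum_eq]
  exact (Finset.sum_subset hS fun l _ hl => h.eq_zero l hl).symm

theorem neg_mul_proj {n : ℤ} (h : SplitsAt T Φ S pr ((T ^ n) ω)) (l : ℝ) :
    Φ (-n) ((T ^ n) ω) * pr l ((T ^ n) ω) = pr l ω * Φ (-n) ((T ^ n) ω) := by
  rw [h.comm, perm_zpow_neg_apply_zpow]

theorem apply_mul_proj_mul_neg {n : ℤ} (h : SplitsAt T Φ S pr ω)
    (h' : SplitsAt T Φ S pr ((T ^ n) ω)) (hΦ : IsLinearCocycle T Φ) (l : ℝ) :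
    Φ n ω * pr l ω * Φ (-n) ((T ^ n) ω) = pr l ((T ^ n) ω) := by
  rw [h.comm, mul_assoc, hΦ.apply_mul_neg, h'.proj_mul_zero]

theorem hasRate_proj (h : ∀ k : ℤ, SplitsAt T Φ S pr ((T ^ k) ω)) (hΦ : IsLinearCocycle T Φ)
    (l : ℝ) : HasRate (fun k : ℤ => pr l ((T ^ k) ω)) 0 := by
  have h0 : SplitsAt T Φ S pr ω := by simpa using h 0
  have hrate := (h0.rate l).mul (h0.rate_inv l)
  rw [add_neg_cancel] at hrate
  convert hrate using 2 with k
  rw [mul_assoc, ← mul_assoc (pr l ω), h0.mul_self, ← mul_assoc,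
    h0.apply_mul_proj_mul_neg (h k) hΦ]

theorem conj {U V : Ω → M} (h : SplitsAt T Φ S pr ω) (hVU : ∀ ω, V ω * U ω = 1)
    (hU : HasRate (fun k : ℤ => U ((T ^ k) ω)) 0) (hV : HasRate (fun k : ℤ => V ((T ^ k) ω)) 0) :
    SplitsAt T (fun n ω => U ((T ^ n) ω) * Φ n ω * V ω) S (fun l ω => U ω * pr l ω * V ω) ω := by
  have cancel (y : M) (ω : Ω) : V ω * (U ω * y) = y := by rw [← mul_assoc, hVU, one_mul]
  have comm (l : ℝ) (n : ℤ) (y : M) :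
      Φ n ω * (pr l ω * y) = pr l ((T ^ n) ω) * (Φ n ω * y) := by
    rw [← mul_assoc, h.comm, mul_assoc]
  refine ⟨?_, fun l hl => ?_, fun l => ?_, fun l l' hll => ?_, fun l n => ?_, fun l => ?_,
    fun l => ?_⟩
  · rw [← Finset.sum_mul, ← Finset.mul_sum, h.sum_eq, zpow_zero, Equiv.Perm.one_apply]
  · rw [h.eq_zero l hl, mul_zero, zero_mul]
  · simp only [mul_assoc, cancel]
    rw [← mul_assoc (pr l ω), h.mul_self]
  · simp only [mul_assoc, cancel]
    rw [← mul_assoc (pr l ω), h.mul_of_ne l l' hll, zero_mul, mul_zero]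
  · simp only [mul_assoc, cancel, comm]
  · simpa only [mul_assoc, cancel, zero_add, add_zero] using
      (hU.mul (h.rate l)).mul (HasRate.const (V ω))
  · simpa only [mul_assoc, cancel, perm_zpow_neg_apply_zpow, zero_add, add_zero] using
      ((HasRate.const (U ω)).mul (h.rate_inv l)).mul hV

end SplitsAt

end Splittings

section TriangularCocycles

variable {Ω : Type*}

/-- `c` is a cocycle twisted by the linear cocycles `F` and `Q`, which live in orthogonal corners:
the data of a block upper triangular cocycle with diagonal blocks `F` and `Q`. -/
structure IsTwistedCocycle {M : Type*} [Ring M] (T : Equiv.Perm Ω) (F Q c : ℤ → Ω → M) :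
    Prop where
  left : IsLinearCocycle T F
  right : IsLinearCocycle T Q
  left_mul_right : ∀ ω, F 0 ω * Q 0 ω = 0
  right_mul_left : ∀ ω, Q 0 ω * F 0 ω = 0
  left_mul : ∀ n ω, F 0 ω * c n ω = c n ω
  mul_right : ∀ n ω, c n ω * Q 0 ω = c n ω
  apply_add : ∀ m n ω, c (m + n) ω = c n ω + F (-n) ((T ^ n) ω) * c m ((T ^ n) ω) * Q n ω

/-- The block upper triangular cocycle with diagonal blocks `F` and `Q`. Its off-diagonal block is
`F n ω * c n ω`, so that `c n ω` maps the corner of `Q` to that of `F` over the same point `ω`. -/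
def triangularCocycle {M : Type*} [Ring M] (F Q c : ℤ → Ω → M) (n : ℤ) (ω : Ω) : M :=
  F n ω + F n ω * c n ω + Q n ω

/-- The twisted cocycle obtained from `c` by adding the twisted coboundary of `L`. -/
def addTwistedCoboundary {M : Type*} [Ring M] (T : Equiv.Perm Ω) (F Q c : ℤ → Ω → M) (L : Ω → M)
    (n : ℤ) (ω : Ω) : M :=
  c n ω + (L ω - F (-n) ((T ^ n) ω) * L ((T ^ n) ω) * Q n ω)

theorem mul_eq_zero_of_corner {M : Type*} [Ring M] {a b e f : M} (ha : a * e = a) (hb : f * b = b)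
    (hef : e * f = 0) : a * b = 0 := by
  rw [← ha, ← hb, mul_assoc, ← mul_assoc e, hef, zero_mul, mul_zero]

namespace IsTwistedCocycle

section Algebra

variable {M : Type*} [Ring M] {T : Equiv.Perm Ω} {F Q c : ℤ → Ω → M}

theorem apply_zero (h : IsTwistedCocycle T F Q c) (ω : Ω) : c 0 ω = 0 := by
  simpa [h.left_mul, h.mul_right] using h.apply_add 0 0 ω

theorem left_mul_neg (h : IsTwistedCocycle T F Q c) (k : ℤ) (ω : Ω) :
    F (-k) ((T ^ k) ω) * c (-k) ((T ^ k) ω) = -(c k ω * Q (-k) ((T ^ k) ω)) := by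
  have hcancel := congrArg (· * Q (-k) ((T ^ k) ω)) (h.apply_add (-k) k ω)
  simp only [neg_add_cancel, h.apply_zero, zero_mul, add_mul] at hcancel
  rw [mul_assoc _ (Q k ω), h.right.apply_mul_neg, mul_assoc (F _ _), h.mul_right] at hcancel
  exact (neg_eq_of_add_eq_zero_right hcancel.symm).symm

theorem triangularCocycle_mul_add (h : IsTwistedCocycle T F Q c) (n : ℤ) {ω : Ω} {x y : M}
    (hx : F 0 ω * x = x) (hy : Q 0 ω * y = y) :
    triangularCocycle F Q c n ω * (x + y) = F n ω * x + F n ω * (c n ω * y) + Q n ω * y := by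
  have hFy : F n ω * y = 0 :=
    mul_eq_zero_of_corner (h.left.apply_mul_zero n ω) hy (h.left_mul_right ω)
  have hcx : c n ω * x = 0 := mul_eq_zero_of_corner (h.mul_right n ω) hx (h.right_mul_left ω)
  have hQx : Q n ω * x = 0 :=
    mul_eq_zero_of_corner (h.right.apply_mul_zero n ω) hx (h.right_mul_left ω)
  simp only [triangularCocycle, add_mul, mul_add, mul_assoc, hFy, hcx, hQx, mul_zero]
  abel

theorem add_mul_triangularCocycle (h : IsTwistedCocycle T F Q c) (n : ℤ) {ω : Ω} {x y : M}
    (hx : x * F 0 ((T ^ n) ω) = x) (hy : y * Q 0 ((T ^ n) ω) = y) :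
    (x + y) * triangularCocycle F Q c n ω = x * F n ω + x * F n ω * c n ω + y * Q n ω := by
  have hyF : y * F n ω = 0 :=
    mul_eq_zero_of_corner hy (h.left.zero_mul_apply n ω) (h.right_mul_left _)
  have hxQ : x * Q n ω = 0 :=
    mul_eq_zero_of_corner hx (h.right.zero_mul_apply n ω) (h.left_mul_right _)
  simp only [triangularCocycle, add_mul, mul_add, ← mul_assoc, hyF, hxQ, add_zero, zero_add]

theorem add_coboundary (h : IsTwistedCocycle T F Q c) {L : Ω → M} (hL : ∀ ω, F 0 ω * L ω = L ω)
    (hL' : ∀ ω, L ω * Q 0 ω = L ω) : IsTwistedCocycle T F Q (addTwistedCoboundary T F Q c L) where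
  left := h.left
  right := h.right
  left_mul_right := h.left_mul_right
  right_mul_left := h.right_mul_left
  left_mul n ω := by
    simp only [addTwistedCoboundary, mul_add, mul_sub, h.left_mul, hL, ← mul_assoc,
      h.left.zero_mul_neg]
  mul_right n ω := by
    simp only [addTwistedCoboundary, add_mul, sub_mul, h.mul_right, hL', mul_assoc,
      h.right.apply_mul_zero]
  apply_add m n ω := by
    simp only [addTwistedCoboundary, mul_add, add_mul, mul_sub, sub_mul]
    rw [h.apply_add, h.left.neg_add_apply, h.right.apply_add, perm_zpow_add_apply]
    simp only [mul_assoc]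
    abel

theorem one_add_mul_triangularCocycle_mul_one_sub (h : IsTwistedCocycle T F Q c) {L : Ω → M}
    (hL : ∀ ω, F 0 ω * L ω = L ω) (hL' : ∀ ω, L ω * Q 0 ω = L ω) (n : ℤ) (ω : Ω) :
    (1 + L ((T ^ n) ω)) * triangularCocycle F Q (addTwistedCoboundary T F Q c L) n ω *
      (1 - L ω) = triangularCocycle F Q c n ω := by
  have hLF : L ((T ^ n) ω) * F n ω = 0 :=
    mul_eq_zero_of_corner (hL' _) (h.left.zero_mul_apply n ω) (h.right_mul_left _)
  have hQL : Q n ω * L ω = 0 :=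
    mul_eq_zero_of_corner (h.right.apply_mul_zero n ω) (hL ω) (h.right_mul_left ω)
  have hcL : c n ω * L ω = 0 :=
    mul_eq_zero_of_corner (h.mul_right n ω) (hL ω) (h.right_mul_left ω)
  have hLL : L ω * L ω = 0 := mul_eq_zero_of_corner (hL' ω) (hL ω) (h.right_mul_left ω)
  have hFFL : F n ω * (F (-n) ((T ^ n) ω) * (L ((T ^ n) ω) * Q n ω)) = L ((T ^ n) ω) * Q n ω := by
    rw [← mul_assoc, h.left.apply_mul_neg, ← mul_assoc, hL]
  have hLL' (y : M) : L ((T ^ n) ω) * (L ((T ^ n) ω) * y) = 0 := by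
    rw [← mul_assoc, mul_eq_zero_of_corner (hL' _) (hL _) (h.right_mul_left _), zero_mul]
  have hLF' (y : M) : L ((T ^ n) ω) * (F n ω * y) = 0 := by rw [← mul_assoc, hLF, zero_mul]
  simp only [triangularCocycle, addTwistedCoboundary, mul_add, add_mul, mul_sub, sub_mul, one_mul,
    mul_one, mul_assoc, hFFL, hLF, hLF', hLL', hQL, hcL, hLL, mul_zero,
    zero_mul]
  abel

end Algebra

variable {M : Type*} [NormedRing M] {T : Equiv.Perm Ω} {F Q c : ℤ → Ω → M} {S S' : Finset ℝ}
  {p q : ℝ → Ω → M} {ω : Ω}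

theorem splitsAt_add (h : IsTwistedCocycle T F Q c)
    (hF : ∀ k : ℤ, SplitsAt T F S p ((T ^ k) ω)) (hQ : ∀ k : ℤ, SplitsAt T Q S' q ((T ^ k) ω))
    (hcomm : ∀ l k, p l ω * c k ω = c k ω * q l ω)
    (hrate : ∀ l, HasRate (fun k => p l ω * c k ω) 0) :
    SplitsAt T (triangularCocycle F Q c) (S ∪ S') (fun l ω => p l ω + q l ω) ω := by
  have hF0 : SplitsAt T F S p ω := by simpa using hF 0
  have hQ0 : SplitsAt T Q S' q ω := by simpa using hQ 0
  have hpq (l l' : ℝ) : p l ω * q l' ω = 0 :=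
    mul_eq_zero_of_corner (hF0.proj_mul_zero l) (hQ0.zero_mul_proj l') (h.left_mul_right ω)
  have hqp (l l' : ℝ) : q l ω * p l' ω = 0 :=
    mul_eq_zero_of_corner (hQ0.proj_mul_zero l) (hF0.zero_mul_proj l') (h.right_mul_left ω)
  have hright (l : ℝ) (n : ℤ) : triangularCocycle F Q c n ω * (p l ω + q l ω) =
      F n ω * p l ω + F n ω * (p l ω * c n ω) + Q n ω * q l ω := by
    rw [h.triangularCocycle_mul_add n (hF0.zero_mul_proj l) (hQ0.zero_mul_proj l), hcomm]
  refine ⟨?_, fun l hl => ?_, fun l => ?_, fun l l' hll => ?_, fun l n => ?_, fun l => ?_,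
    fun l => ?_⟩
  · rw [Finset.sum_add_distrib, hF0.sum_eq_of_subset Finset.subset_union_left,
      hQ0.sum_eq_of_subset Finset.subset_union_right, triangularCocycle, h.apply_zero, mul_zero,
      add_zero]
  · rw [Finset.mem_union, not_or] at hl
    rw [hF0.eq_zero l hl.1, hQ0.eq_zero l hl.2, add_zero]
  · simp only [mul_add, add_mul, hpq, hqp, hF0.mul_self, hQ0.mul_self, add_zero, zero_add]
  · simp only [mul_add, add_mul, hpq, hqp, hF0.mul_of_ne l l' hll, hQ0.mul_of_ne l l' hll,
      add_zero]
  · rw [hright, h.add_mul_triangularCocycle n ((hF n).proj_mul_zero l) ((hQ n).proj_mul_zero l),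
      ← hF0.comm, ← hQ0.comm, mul_assoc]
  · have hoff := (hF0.rate l).mul (hrate l)
    simp only [mul_assoc, ← mul_assoc (p l ω) (p l ω), hF0.mul_self, add_zero] at hoff
    simpa only [hright] using ((hF0.rate l).add hoff).add (hQ0.rate l)
  · have hpcq (k : ℤ) : p l ω * c k ω * q l ω = p l ω * c k ω := by
      rw [hcomm, mul_assoc, hQ0.mul_self]
    have hleft (k : ℤ) : (p l ω + q l ω) * triangularCocycle F Q c (-k) ((T ^ k) ω) =
        p l ω * F (-k) ((T ^ k) ω) - p l ω * c k ω * (q l ω * Q (-k) ((T ^ k) ω)) +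
          q l ω * Q (-k) ((T ^ k) ω) := by
      rw [h.add_mul_triangularCocycle (-k)
        (by rw [perm_zpow_neg_apply_zpow]; exact hF0.proj_mul_zero l)
        (by rw [perm_zpow_neg_apply_zpow]; exact hQ0.proj_mul_zero l), mul_assoc (p l ω),
        h.left_mul_neg, mul_neg, ← sub_eq_add_neg, ← mul_assoc (p l ω * c k ω), hpcq,
        ← mul_assoc]
    have hoff := (hrate l).mul (hQ0.rate_inv l)
    rw [zero_add] at hoff
    simpa only [hleft] using ((hF0.rate_inv l).sub hoff).add (hQ0.rate_inv l)

theorem splitsAt_of_blocks (h : IsTwistedCocycle T F Q c)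
    (hF : ∀ k : ℤ, SplitsAt T F S p ((T ^ k) ω)) (hQ : ∀ k : ℤ, SplitsAt T Q S' q ((T ^ k) ω))
    (hoff : ∀ l ∈ S, ∀ l' ∈ S', l ≠ l' → ∀ k, p l ω * c k ω * q l' ω = 0)
    (hdiag : ∀ l ∈ S, l ∈ S' → HasRate (fun k => p l ω * c k ω * q l ω) 0) :
    SplitsAt T (triangularCocycle F Q c) (S ∪ S') (fun l ω => p l ω + q l ω) ω := by
  have hF0 : SplitsAt T F S p ω := by simpa using hF 0
  have hQ0 : SplitsAt T Q S' q ω := by simpa using hQ 0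
  have hoff' {l l' : ℝ} (hll : l ≠ l') (k : ℤ) : p l ω * c k ω * q l' ω = 0 := by
    by_cases hl : l ∈ S
    · by_cases hl' : l' ∈ S'
      · exact hoff l hl l' hl' hll k
      · rw [hQ0.eq_zero l' hl', mul_zero]
    · rw [hF0.eq_zero l hl, zero_mul, zero_mul]
  have hpc (l : ℝ) (k : ℤ) : p l ω * c k ω = p l ω * c k ω * q l ω := by
    rw [← hQ0.mul_sum_of_forall_ne fun l' hl' => hoff' hl'.symm k, mul_assoc, h.mul_right]
  have hcq (l : ℝ) (k : ℤ) : c k ω * q l ω = p l ω * c k ω * q l ω := by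
    rw [mul_assoc, ← hF0.sum_mul_of_forall_ne fun l' hl' => by rw [← mul_assoc, hoff' hl'],
      ← mul_assoc, h.left_mul]
  refine h.splitsAt_add hF hQ (fun l k => by rw [hpc, hcq]) fun l => ?_
  rw [funext (hpc l)]
  by_cases hl : l ∈ S ∧ l ∈ S'
  · exact hdiag l hl.1 hl.2
  · rcases not_and_or.mp hl with hl | hl
    · simpa only [hF0.eq_zero l hl, zero_mul] using HasRate.zero
    · simpa only [hQ0.eq_zero l hl, mul_zero] using HasRate.zero

theorem splitsAt_of_blocks_addTwistedCoboundary (h : IsTwistedCocycle T F Q c) {L : Ω → M}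
    (hL : ∀ ω, F 0 ω * L ω = L ω) (hL' : ∀ ω, L ω * Q 0 ω = L ω)
    (hLrate : HasRate (fun k : ℤ => L ((T ^ k) ω)) 0)
    (hF : ∀ k : ℤ, SplitsAt T F S p ((T ^ k) ω)) (hQ : ∀ k : ℤ, SplitsAt T Q S' q ((T ^ k) ω))
    (hoff : ∀ l ∈ S, ∀ l' ∈ S', l ≠ l' →
      ∀ k, p l ω * addTwistedCoboundary T F Q c L k ω * q l' ω = 0)
    (hdiag : ∀ l ∈ S, l ∈ S' →
      HasRate (fun k => p l ω * addTwistedCoboundary T F Q c L k ω * q l ω) 0) :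
    SplitsAt T (triangularCocycle F Q c) (S ∪ S')
      (fun l ω => (1 + L ω) * (p l ω + q l ω) * (1 - L ω)) ω := by
  have hinv (ω : Ω) : (1 - L ω) * (1 + L ω) = 1 := by
    have hLL : L ω * L ω = 0 := mul_eq_zero_of_corner (hL' ω) (hL ω) (h.right_mul_left ω)
    rw [sub_mul, mul_add, mul_add, hLL, one_mul, one_mul, mul_one, add_zero, add_sub_cancel_right]
  have hsplit := ((h.add_coboundary hL hL').splitsAt_of_blocks hF hQ hoff hdiag).conj hinv
    ((HasRate.const 1).add hLrate) ((HasRate.const 1).sub hLrate)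
  simpa only [h.one_add_mul_triangularCocycle_mul_one_sub hL hL'] using hsplit

end IsTwistedCocycle

end TriangularCocycles

section TriangularRegularity

variable {Ω M : Type*} [NormedRing M] {T : Equiv.Perm Ω} {F Q c : ℤ → Ω → M} {S S' : Finset ℝ}
  {p q : ℝ → Ω → M}

theorem mul_addTwistedCoboundary_mul {ω : Ω} {n : ℤ} {l l' : ℝ}
    (hF : SplitsAt T F S p ((T ^ n) ω)) (hQ : SplitsAt T Q S' q ω) (L : Ω → M) :
    p l ω * addTwistedCoboundary T F Q c L n ω * q l' ω =
      addTwistedCoboundary T F Q (fun n ω => p l ω * c n ω * q l' ω)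
        (fun ω => p l ω * L ω * q l' ω) n ω := by
  have hcob : p l ω * (F (-n) ((T ^ n) ω) * L ((T ^ n) ω) * Q n ω) * q l' ω =
      F (-n) ((T ^ n) ω) * (p l ((T ^ n) ω) * L ((T ^ n) ω) * q l' ((T ^ n) ω)) * Q n ω :=
    calc _ = p l ω * F (-n) ((T ^ n) ω) * L ((T ^ n) ω) * (Q n ω * q l' ω) := by
          simp only [mul_assoc]
      _ = F (-n) ((T ^ n) ω) * p l ((T ^ n) ω) * L ((T ^ n) ω) * (q l' ((T ^ n) ω) * Q n ω) := by
          rw [hF.neg_mul_proj, hQ.comm]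
      _ = _ := by simp only [mul_assoc]
  simp only [addTwistedCoboundary, mul_add, add_mul, mul_sub, sub_mul, hcob]

theorem mul_sum_sum_mul {ω : Ω} (hF : SplitsAt T F S p ω) (hQ : SplitsAt T Q S' q ω)
    {x : ℝ → ℝ → M} (hx : ∀ l ∈ S, ∀ l' ∈ S', p l ω * x l l' * q l' ω = x l l') {l l' : ℝ}
    (hl : l ∈ S) (hl' : l' ∈ S') : p l ω * (∑ i ∈ S, ∑ j ∈ S', x i j) * q l' ω = x l l' := by
  have hright (i : ℝ) (hi : i ∈ S) : (∑ j ∈ S', x i j) * q l' ω = x i l' := by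
    rw [Finset.sum_mul, Finset.sum_eq_single_of_mem l' hl' fun j hj hne => ?_, ← hx i hi l' hl',
      mul_assoc, hQ.mul_self]
    rw [← hx i hi j hj, mul_assoc, hQ.mul_of_ne j l' hne, mul_zero]
  rw [mul_assoc, Finset.sum_mul, Finset.sum_congr rfl hright, Finset.mul_sum,
    Finset.sum_eq_single_of_mem l hl fun i hi hne => ?_, ← hx l hl l' hl', ← mul_assoc,
    ← mul_assoc, hF.mul_self]
  rw [← hx i hi l' hl', ← mul_assoc, ← mul_assoc, hF.mul_of_ne l i hne.symm, zero_mul, zero_mul]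

namespace IsTwistedCocycle

theorem block_apply_add (h : IsTwistedCocycle T F Q c) {ω : Ω} (m : ℤ) {n : ℤ}
    (hF : SplitsAt T F S p ((T ^ n) ω)) (hQ : SplitsAt T Q S' q ω) (l l' : ℝ) :
    p l ω * c (m + n) ω * q l' ω = p l ω * c n ω * q l' ω + p l ω * F (-n) ((T ^ n) ω) *
      (p l ((T ^ n) ω) * c m ((T ^ n) ω) * q l' ((T ^ n) ω)) * (Q n ω * q l' ω) := by
  have hp (y : M) : p l ω * (F (-n) ((T ^ n) ω) * (p l ((T ^ n) ω) * y)) =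
      p l ω * (F (-n) ((T ^ n) ω) * y) := by
    rw [← mul_assoc, ← mul_assoc, ← hF.neg_mul_proj, mul_assoc _ (p l _) (p l _), hF.mul_self,
      hF.neg_mul_proj, mul_assoc]
  have hq : q l' ((T ^ n) ω) * (Q n ω * q l' ω) = Q n ω * q l' ω := by
    rw [← mul_assoc, ← hQ.comm, mul_assoc, hQ.mul_self]
  simp only [h.apply_add, mul_add, add_mul, mul_assoc, hp, hq]

theorem hasRate_block (h : IsTwistedCocycle T F Q c) {ω : Ω}
    (hF : ∀ k : ℤ, SplitsAt T F S p ((T ^ k) ω)) (hQ : ∀ k : ℤ, SplitsAt T Q S' q ((T ^ k) ω))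
    {s : ℤ} (hc : HasRate (fun k => c s ((T ^ k) ω)) 0) (l l' : ℝ) :
    HasRate (fun k => p l ((T ^ k) ω) * c s ((T ^ k) ω) * q l' ((T ^ k) ω)) 0 := by
  simpa only [add_zero] using
    ((SplitsAt.hasRate_proj hF h.left l).mul hc).mul (SplitsAt.hasRate_proj hQ h.right l')

theorem eq_mul_add_block_mul (h : IsTwistedCocycle T F Q c) {ω : Ω} {L : Ω → M} {k : ℤ} {l l' : ℝ}
    (hF : SplitsAt T F S p ω) (hQ : SplitsAt T Q S' q ω)
    (hF' : SplitsAt T F S p ((T ^ k) ω)) (hQ' : SplitsAt T Q S' q ((T ^ k) ω))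
    (hL : p l ((T ^ k) ω) * L ((T ^ k) ω) * q l' ((T ^ k) ω) = L ((T ^ k) ω))
    (hcob : L ω + p l ω * c k ω * q l' ω =
      p l ω * F (-k) ((T ^ k) ω) * L ((T ^ k) ω) * (Q k ω * q l' ω)) :
    L ((T ^ k) ω) = F k ω * p l ω * (L ω + p l ω * c k ω * q l' ω) *
      (q l' ω * Q (-k) ((T ^ k) ω)) := by
  rw [← hL, ← hF.apply_mul_proj_mul_neg hF' h.left, ← hQ.apply_mul_proj_mul_neg hQ' h.right, hcob]
  have hp (y : M) : p l ω * (p l ω * y) = p l ω * y := by rw [← mul_assoc, hF.mul_self]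
  have hq (y : M) : q l' ω * (q l' ω * y) = q l' ω * y := by rw [← mul_assoc, hQ.mul_self]
  simp only [mul_assoc, hp, hq]

variable [MeasurableSpace Ω] {μ : Measure Ω} [CompleteSpace M] [MeasurableSpace M] [BorelSpace M]
  [SecondCountableTopology M]

theorem exists_block_coboundary_of_ne (h : IsTwistedCocycle T F Q c)
    (hT : MeasurePreserving T μ μ) (hT' : MeasurePreserving ⇑T⁻¹ μ μ)
    (hcm : ∀ n, Measurable (c n)) (hpm : ∀ l, Measurable (p l)) (hqm : ∀ l, Measurable (q l))
    (hF : ∀ᵐ ω ∂μ, ∀ k : ℤ, SplitsAt T F S p ((T ^ k) ω))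
    (hQ : ∀ᵐ ω ∂μ, ∀ k : ℤ, SplitsAt T Q S' q ((T ^ k) ω))
    (hc₁ : ∀ᵐ ω ∂μ, HasRate (fun n => c 1 ((T ^ n) ω)) 0)
    (hc₂ : ∀ᵐ ω ∂μ, HasRate (fun n => c (-1) ((T ^ n) ω)) 0) {l l' : ℝ} (hll : l ≠ l') :
    ∃ L : Ω → M, Measurable L ∧ ∀ᵐ ω ∂μ, p l ω * L ω * q l' ω = L ω ∧
      HasRate (fun k : ℤ => L ((T ^ k) ω)) 0 ∧
      ∀ k, addTwistedCoboundary T F Q (fun n ω => p l ω * c n ω * q l' ω) L k ω = 0 := by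
  have hF0 : ∀ᵐ ω ∂μ, SplitsAt T F S p ω := hF.mono fun ω h => by simpa using h 0
  have hQ0 : ∀ᵐ ω ∂μ, SplitsAt T Q S' q ω := hQ.mono fun ω h => by simpa using h 0
  obtain ⟨L, hLm, hL⟩ := exists_twisted_coboundary_of_ne hT hT' hll
    (c := fun n ω => p l ω * c n ω * q l' ω) (x := fun n ω => p l ω * F (-n) ((T ^ n) ω))
    (y := fun n ω => Q n ω * q l' ω) (fun n => ((hpm l).mul (hcm n)).mul (hqm l'))
    (by filter_upwards [hF, hQ0] with ω hF hQ m n using h.block_apply_add m (hF n) hQ l l')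
    (hF0.mono fun ω h => h.rate_inv l) (hQ0.mono fun ω h => h.rate l')
    (by filter_upwards [hF, hQ, hc₁] with ω hF hQ hc using h.hasRate_block hF hQ hc l l')
    (by filter_upwards [hF, hQ, hc₂] with ω hF hQ hc using h.hasRate_block hF hQ hc l l')
  have hblock : ∀ᵐ ω ∂μ, p l ω * L ω * q l' ω = L ω := by
    filter_upwards [hL, hF0, hQ0] with ω hL hF hQ
    simpa [h.apply_zero, hF.proj_mul_zero, hQ.zero_mul_proj] using (hL.2 0).symm
  refine ⟨L, hLm, ?_⟩
  filter_upwards [hL, hF0, hQ0, hF, hQ, hblock, ae_forall_zpow hT hT' hblock]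
    with ω ⟨hrate, hcob⟩ hF0 hQ0 hF hQ hblock hblocks
  refine ⟨hblock, ?_, fun k => ?_⟩
  · have := ((hF0.rate l).mul hrate).mul (hQ0.rate_inv l')
    rw [show l + (l' - l) + -l' = 0 by ring] at this
    simpa only [← h.eq_mul_add_block_mul hF0 hQ0 (hF _) (hQ _) (hblocks _) (hcob _)] using this
  · rw [addTwistedCoboundary, ← add_sub_assoc, add_comm _ (L ω), hcob, ← (hF k).neg_mul_proj,
      hQ0.comm, sub_eq_zero]
    conv_rhs => rw [← hblocks k]
    simp only [mul_assoc]

theorem exists_block_coboundary (h : IsTwistedCocycle T F Q c)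
    (hT : MeasurePreserving T μ μ) (hT' : MeasurePreserving ⇑T⁻¹ μ μ)
    (hcm : ∀ n, Measurable (c n)) (hpm : ∀ l, Measurable (p l)) (hqm : ∀ l, Measurable (q l))
    (hF : ∀ᵐ ω ∂μ, ∀ k : ℤ, SplitsAt T F S p ((T ^ k) ω))
    (hQ : ∀ᵐ ω ∂μ, ∀ k : ℤ, SplitsAt T Q S' q ((T ^ k) ω))
    (hc₁ : ∀ᵐ ω ∂μ, HasRate (fun n => c 1 ((T ^ n) ω)) 0)
    (hc₂ : ∀ᵐ ω ∂μ, HasRate (fun n => c (-1) ((T ^ n) ω)) 0) (l l' : ℝ) :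
    ∃ L : Ω → M, Measurable L ∧ ∀ᵐ ω ∂μ, p l ω * L ω * q l' ω = L ω ∧
      HasRate (fun k : ℤ => L ((T ^ k) ω)) 0 ∧
      (l ≠ l' → ∀ k,
        addTwistedCoboundary T F Q (fun n ω => p l ω * c n ω * q l' ω) L k ω = 0) ∧
      (l = l' → HasRate
        (fun k => addTwistedCoboundary T F Q (fun n ω => p l ω * c n ω * q l' ω) L k ω) 0) := by
  rcases eq_or_ne l l' with rfl | hll
  · refine ⟨0, measurable_const, ?_⟩
    filter_upwards [hF, hQ, hc₁, hc₂] with ω hF hQ hc₁ hc₂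
    have hF0 : SplitsAt T F S p ω := by simpa using hF 0
    have hQ0 : SplitsAt T Q S' q ω := by simpa using hQ 0
    refine ⟨by simp, HasRate.zero, fun hl => absurd rfl hl, fun _ => ?_⟩
    have hrate := hasRate_zero_of_twisted_cocycle (c := fun k ω => p l ω * c k ω * q l ω)
      (x := fun n ω => p l ω * F (-n) ((T ^ n) ω)) (y := fun n ω => Q n ω * q l ω)
      (fun m n => h.block_apply_add m (hF n) hQ0 l l) (hF0.rate_inv l) (hQ0.rate l)
      (h.hasRate_block hF hQ hc₁ l l) (h.hasRate_block hF hQ hc₂ l l)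
    simpa [addTwistedCoboundary] using hrate
  · obtain ⟨L, hLm, hL⟩ := h.exists_block_coboundary_of_ne hT hT' hcm hpm hqm hF hQ hc₁ hc₂ hll
    exact ⟨L, hLm, hL.mono fun ω hL => ⟨hL.1, hL.2.1, fun _ => hL.2.2, fun hl => absurd hl hll⟩⟩

theorem exists_coboundary_blockDiagonal (h : IsTwistedCocycle T F Q c)
    (hT : MeasurePreserving T μ μ) (hT' : MeasurePreserving ⇑T⁻¹ μ μ) (hFm : Measurable (F 0))
    (hQm : Measurable (Q 0)) (hcm : ∀ n, Measurable (c n)) (hpm : ∀ l, Measurable (p l))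
    (hqm : ∀ l, Measurable (q l)) (hF : ∀ᵐ ω ∂μ, ∀ k : ℤ, SplitsAt T F S p ((T ^ k) ω))
    (hQ : ∀ᵐ ω ∂μ, ∀ k : ℤ, SplitsAt T Q S' q ((T ^ k) ω))
    (hc₁ : ∀ᵐ ω ∂μ, HasRate (fun n => c 1 ((T ^ n) ω)) 0)
    (hc₂ : ∀ᵐ ω ∂μ, HasRate (fun n => c (-1) ((T ^ n) ω)) 0) :
    ∃ L : Ω → M, Measurable L ∧ (∀ ω, F 0 ω * L ω = L ω) ∧ (∀ ω, L ω * Q 0 ω = L ω) ∧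
      ∀ᵐ ω ∂μ, HasRate (fun k : ℤ => L ((T ^ k) ω)) 0 ∧
        (∀ l ∈ S, ∀ l' ∈ S', l ≠ l' →
          ∀ k, p l ω * addTwistedCoboundary T F Q c L k ω * q l' ω = 0) ∧
        ∀ l ∈ S, l ∈ S' →
          HasRate (fun k => p l ω * addTwistedCoboundary T F Q c L k ω * q l ω) 0 := by
  choose X hXm hX using h.exists_block_coboundary hT hT' hcm hpm hqm hF hQ hc₁ hc₂
  have hX' := (eventually_all_finset S).mpr fun l _ => (eventually_all_finset S').mpr
    fun l' _ => hX l l'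
  have hsum : ∀ᵐ ω ∂μ, F 0 ω * (∑ l ∈ S, ∑ l' ∈ S', X l l' ω) * Q 0 ω =
      ∑ l ∈ S, ∑ l' ∈ S', X l l' ω := by
    filter_upwards [hX', hF, hQ] with ω hX hF hQ
    have hF0 : SplitsAt T F S p ω := by simpa using hF 0
    have hQ0 : SplitsAt T Q S' q ω := by simpa using hQ 0
    simp only [Finset.mul_sum, Finset.sum_mul]
    refine Finset.sum_congr rfl fun l hl => Finset.sum_congr rfl fun l' hl' => ?_
    rw [← (hX l hl l' hl').1, ← mul_assoc, ← mul_assoc, hF0.zero_mul_proj, mul_assoc,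
      hQ0.proj_mul_zero]
  have hblock : ∀ᵐ ω ∂μ, ∀ l ∈ S, ∀ l' ∈ S',
      p l ω * (F 0 ω * (∑ l ∈ S, ∑ l' ∈ S', X l l' ω) * Q 0 ω) * q l' ω = X l l' ω := by
    filter_upwards [hX', hF, hQ, hsum] with ω hX hF hQ hsum l hl l' hl'
    rw [hsum, mul_sum_sum_mul (by simpa using hF 0) (by simpa using hQ 0)
      (fun l hl l' hl' => (hX l hl l' hl').1) hl hl']
  refine ⟨fun ω => F 0 ω * (∑ l ∈ S, ∑ l' ∈ S', X l l' ω) * Q 0 ω,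
    (hFm.mul <| Finset.measurable_fun_sum _ fun l _ =>
      Finset.measurable_fun_sum _ fun l' _ => hXm l l').mul hQm,
    fun ω => by rw [← mul_assoc, ← mul_assoc, h.left.zero_mul_zero],
    fun ω => by rw [mul_assoc, h.right.zero_mul_zero], ?_⟩
  filter_upwards [hX', hF, hQ, ae_forall_zpow hT hT' hsum, hblock, ae_forall_zpow hT hT' hblock]
    with ω hX hF hQ hsum hblock hblocks
  refine ⟨?_, fun l hl l' hl' hll k => ?_, fun l hl hl' => ?_⟩
  · simp only [hsum]
    exact HasRate.sum S fun l hl => HasRate.sum S' fun l' hl' => (hX l hl l' hl').2.1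
  · rw [mul_addTwistedCoboundary_mul (hF k) (by simpa using hQ 0), ← (hX l hl l' hl').2.2.1 hll k,
      addTwistedCoboundary, addTwistedCoboundary, hblock l hl l' hl', hblocks k l hl l' hl']
  · convert (hX l hl l hl').2.2.2 rfl using 2 with k
    rw [mul_addTwistedCoboundary_mul (hF k) (by simpa using hQ 0), addTwistedCoboundary,
      addTwistedCoboundary, hblock l hl l hl', hblocks k l hl l hl']

theorem isOseledetsRegular (h : IsTwistedCocycle T F Q c) (hT : MeasurePreserving T μ μ)
    (hT' : MeasurePreserving ⇑T⁻¹ μ μ) (hFm : Measurable (F 0)) (hQm : Measurable (Q 0))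
    (hcm : ∀ n, Measurable (c n)) (hF : IsOseledetsRegular T μ F) (hQ : IsOseledetsRegular T μ Q)
    (hc₁ : ∀ᵐ ω ∂μ, HasRate (fun n => c 1 ((T ^ n) ω)) 0)
    (hc₂ : ∀ᵐ ω ∂μ, HasRate (fun n => c (-1) ((T ^ n) ω)) 0) :
    IsOseledetsRegular T μ (triangularCocycle F Q c) := by
  obtain ⟨S, p, hpm, hF⟩ := hF
  obtain ⟨S', q, hqm, hQ⟩ := hQ
  replace hF := ae_forall_zpow hT hT' hF
  replace hQ := ae_forall_zpow hT hT' hQ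
  obtain ⟨L, hLm, hL, hL', hae⟩ :=
    h.exists_coboundary_blockDiagonal hT hT' hFm hQm hcm hpm hqm hF hQ hc₁ hc₂
  refine ⟨S ∪ S', fun l ω => (1 + L ω) * (p l ω + q l ω) * (1 - L ω), fun l =>
    ((measurable_const.add hLm).mul ((hpm l).add (hqm l))).mul (measurable_const.sub hLm), ?_⟩
  filter_upwards [hF, hQ, hae] with ω hF hQ ⟨hLrate, hoff, hdiag⟩
  exact h.splitsAt_of_blocks_addTwistedCoboundary hL hL' hLrate hF hQ hoff hdiag

end IsTwistedCocycle

end TriangularRegularity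

section InvariantProjections

variable {Ω M : Type*} [Ring M]

/-- A field of projections onto subspaces of the images of `Φ 0`, invariant under the cocycle. -/
structure IsInvariantProjection (T : Equiv.Perm Ω) (Φ : ℤ → Ω → M) (R : Ω → M) : Prop where
  mul_self : ∀ ω, R ω * R ω = R ω
  zero_mul_proj : ∀ ω, Φ 0 ω * R ω = R ω
  proj_mul_zero : ∀ ω, R ω * Φ 0 ω = R ω
  invariant : ∀ n ω, R ((T ^ n) ω) * (Φ n ω * R ω) = Φ n ω * R ω

/-- The restriction of the cocycle `Φ` to the images of the invariant projections `R`. -/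
def restrictCocycle (Φ : ℤ → Ω → M) (R : Ω → M) (n : ℤ) (ω : Ω) : M := Φ n ω * R ω

/-- The cocycle induced by `Φ` on the quotient by the images of the invariant projections `R`,
realised on the images of the complementary projections. -/
def quotientCocycle (T : Equiv.Perm Ω) (Φ : ℤ → Ω → M) (R : Ω → M) (n : ℤ) (ω : Ω) : M :=
  (Φ 0 ((T ^ n) ω) - R ((T ^ n) ω)) * Φ n ω

/-- The off-diagonal part of `Φ`, from the complement of the invariant projections `R` to their
images, transported back to the starting point. -/
def shearCocycle (T : Equiv.Perm Ω) (Φ : ℤ → Ω → M) (R : Ω → M) (n : ℤ) (ω : Ω) : M :=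
  Φ (-n) ((T ^ n) ω) * R ((T ^ n) ω) * Φ n ω * (Φ 0 ω - R ω)

namespace IsInvariantProjection

variable {T : Equiv.Perm Ω} {Φ : ℤ → Ω → M} {R : Ω → M}

theorem invariant_neg (hR : IsInvariantProjection T Φ R) (n : ℤ) (ω : Ω) :
    R ω * (Φ (-n) ((T ^ n) ω) * R ((T ^ n) ω)) = Φ (-n) ((T ^ n) ω) * R ((T ^ n) ω) := by
  simpa only [perm_zpow_neg_apply_zpow] using hR.invariant (-n) ((T ^ n) ω)

theorem restrictCocycle_zero (hR : IsInvariantProjection T Φ R) (ω : Ω) :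
    restrictCocycle Φ R 0 ω = R ω := hR.zero_mul_proj ω

theorem compl_mul_proj (hR : IsInvariantProjection T Φ R) (ω : Ω) : (Φ 0 ω - R ω) * R ω = 0 := by
  rw [sub_mul, hR.zero_mul_proj, hR.mul_self, sub_self]

theorem proj_mul_compl (hR : IsInvariantProjection T Φ R) (ω : Ω) : R ω * (Φ 0 ω - R ω) = 0 := by
  rw [mul_sub, hR.proj_mul_zero, hR.mul_self, sub_self]

theorem compl_mul_zero (hR : IsInvariantProjection T Φ R) (hΦ : IsLinearCocycle T Φ) (ω : Ω) :
    (Φ 0 ω - R ω) * Φ 0 ω = Φ 0 ω - R ω := by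
  rw [sub_mul, hΦ.zero_mul_zero, hR.proj_mul_zero]

theorem compl_mul_self (hR : IsInvariantProjection T Φ R) (hΦ : IsLinearCocycle T Φ) (ω : Ω) :
    (Φ 0 ω - R ω) * (Φ 0 ω - R ω) = Φ 0 ω - R ω := by
  rw [mul_sub, hR.compl_mul_zero hΦ, hR.compl_mul_proj, sub_zero]

theorem quotientCocycle_zero (hR : IsInvariantProjection T Φ R) (hΦ : IsLinearCocycle T Φ)
    (ω : Ω) : quotientCocycle T Φ R 0 ω = Φ 0 ω - R ω := by
  rw [quotientCocycle, zpow_zero, Equiv.Perm.one_apply, hR.compl_mul_zero hΦ]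

theorem compl_mul_apply_mul_proj (hR : IsInvariantProjection T Φ R) (hΦ : IsLinearCocycle T Φ)
    (n : ℤ) (ω : Ω) : (Φ 0 ((T ^ n) ω) - R ((T ^ n) ω)) * (Φ n ω * R ω) = 0 := by
  rw [sub_mul, hR.invariant, ← mul_assoc, hΦ.zero_mul_apply, sub_self]

theorem quotientCocycle_mul_compl (hR : IsInvariantProjection T Φ R) (hΦ : IsLinearCocycle T Φ)
    (n : ℤ) (ω : Ω) : quotientCocycle T Φ R n ω * (Φ 0 ω - R ω) = quotientCocycle T Φ R n ω := by
  rw [quotientCocycle, mul_assoc, mul_sub, mul_sub, hR.compl_mul_apply_mul_proj hΦ,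
    hΦ.apply_mul_zero, sub_zero]

theorem isLinearCocycle_restrictCocycle (hR : IsInvariantProjection T Φ R)
    (hΦ : IsLinearCocycle T Φ) : IsLinearCocycle T (restrictCocycle Φ R) where
  apply_add m n ω := by
    rw [restrictCocycle, restrictCocycle, restrictCocycle, mul_assoc, hR.invariant, ← mul_assoc,
      hΦ.apply_add]

theorem isLinearCocycle_quotientCocycle (hR : IsInvariantProjection T Φ R)
    (hΦ : IsLinearCocycle T Φ) : IsLinearCocycle T (quotientCocycle T Φ R) where
  apply_add m n ω :=
    calc quotientCocycle T Φ R (m + n) ω = quotientCocycle T Φ R m ((T ^ n) ω) * Φ n ω := by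
          rw [quotientCocycle, quotientCocycle, hΦ.apply_add, perm_zpow_add_apply, mul_assoc]
      _ = quotientCocycle T Φ R m ((T ^ n) ω) * (Φ 0 ((T ^ n) ω) - R ((T ^ n) ω)) * Φ n ω := by
          rw [hR.quotientCocycle_mul_compl hΦ]
      _ = _ := mul_assoc ..

theorem restrictCocycle_neg_mul_shearCocycle (hR : IsInvariantProjection T Φ R) (m n : ℤ)
    (ω : Ω) :
    restrictCocycle Φ R (-n) ((T ^ n) ω) * shearCocycle T Φ R m ((T ^ n) ω) =
      Φ (-n) ((T ^ n) ω) * shearCocycle T Φ R m ((T ^ n) ω) := by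
  simp only [restrictCocycle, shearCocycle, mul_assoc]
  rw [← mul_assoc (Φ (-m) _) (R _), ← mul_assoc (R _) (_ * _), hR.invariant_neg]

theorem neg_mul_proj_mul_apply (hR : IsInvariantProjection T Φ R) (hΦ : IsLinearCocycle T Φ)
    (n : ℤ) (ω : Ω) :
    Φ (-n) ((T ^ n) ω) * R ((T ^ n) ω) * Φ n ω = R ω + shearCocycle T Φ R n ω := by
  have hdiag : Φ (-n) ((T ^ n) ω) * R ((T ^ n) ω) * Φ n ω * R ω = R ω := by
    rw [mul_assoc, mul_assoc, hR.invariant, ← mul_assoc, hΦ.neg_mul_apply, hR.zero_mul_proj]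
  rw [shearCocycle, mul_sub, hdiag, add_sub_cancel, mul_assoc _ (Φ n ω), hΦ.apply_mul_zero]

theorem shearCocycle_add (hR : IsInvariantProjection T Φ R) (hΦ : IsLinearCocycle T Φ) (m n : ℤ)
    (ω : Ω) : shearCocycle T Φ R (m + n) ω = shearCocycle T Φ R n ω +
      restrictCocycle Φ R (-n) ((T ^ n) ω) * shearCocycle T Φ R m ((T ^ n) ω) *
        quotientCocycle T Φ R n ω := by
  have hquot : shearCocycle T Φ R m ((T ^ n) ω) * (Φ n ω * (Φ 0 ω - R ω)) =
      shearCocycle T Φ R m ((T ^ n) ω) * quotientCocycle T Φ R n ω := by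
    rw [← hR.quotientCocycle_mul_compl hΦ, quotientCocycle, shearCocycle]
    simp only [mul_assoc]
    rw [← mul_assoc (_ - _) (_ - _), hR.compl_mul_self hΦ]
  calc shearCocycle T Φ R (m + n) ω
      = Φ (-n) ((T ^ n) ω) * (Φ (-m) ((T ^ m) ((T ^ n) ω)) * R ((T ^ m) ((T ^ n) ω)) *
          Φ m ((T ^ n) ω)) * (Φ n ω * (Φ 0 ω - R ω)) := by
        rw [shearCocycle, hΦ.neg_add_apply, hΦ.apply_add, perm_zpow_add_apply]
        simp only [mul_assoc]
    _ = Φ (-n) ((T ^ n) ω) * R ((T ^ n) ω) * Φ n ω * (Φ 0 ω - R ω) + Φ (-n) ((T ^ n) ω) *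
          (shearCocycle T Φ R m ((T ^ n) ω) * (Φ n ω * (Φ 0 ω - R ω))) := by
        rw [hR.neg_mul_proj_mul_apply hΦ, mul_add, add_mul]
        simp only [mul_assoc]
    _ = _ := by
        rw [hquot, hR.restrictCocycle_neg_mul_shearCocycle, ← mul_assoc _ (shearCocycle _ _ _ _ _),
          ← shearCocycle]

theorem isTwistedCocycle (hR : IsInvariantProjection T Φ R) (hΦ : IsLinearCocycle T Φ) :
    IsTwistedCocycle T (restrictCocycle Φ R) (quotientCocycle T Φ R) (shearCocycle T Φ R) where
  left := hR.isLinearCocycle_restrictCocycle hΦ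
  right := hR.isLinearCocycle_quotientCocycle hΦ
  left_mul_right ω := by
    rw [hR.restrictCocycle_zero, hR.quotientCocycle_zero hΦ, hR.proj_mul_compl]
  right_mul_left ω := by
    rw [hR.restrictCocycle_zero, hR.quotientCocycle_zero hΦ, hR.compl_mul_proj]
  left_mul n ω := by
    rw [hR.restrictCocycle_zero, shearCocycle, ← mul_assoc, ← mul_assoc, hR.invariant_neg]
  mul_right n ω := by
    rw [hR.quotientCocycle_zero hΦ, shearCocycle, mul_assoc, hR.compl_mul_self hΦ]
  apply_add := hR.shearCocycle_add hΦ

theorem triangularCocycle_eq (hR : IsInvariantProjection T Φ R) (hΦ : IsLinearCocycle T Φ) :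
    triangularCocycle (restrictCocycle Φ R) (quotientCocycle T Φ R) (shearCocycle T Φ R) = Φ := by
  ext n ω
  have hoff : Φ n ω * R ω * shearCocycle T Φ R n ω = R ((T ^ n) ω) * Φ n ω - Φ n ω * R ω :=
    calc _ = Φ n ω * (R ω * (Φ (-n) ((T ^ n) ω) * R ((T ^ n) ω))) * Φ n ω * (Φ 0 ω - R ω) := by
          simp only [shearCocycle, mul_assoc]
      _ = R ((T ^ n) ω) * Φ n ω * (Φ 0 ω - R ω) := by
          rw [hR.invariant_neg, ← mul_assoc, hΦ.apply_mul_neg, hR.zero_mul_proj]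
      _ = _ := by rw [mul_assoc, mul_sub, hΦ.apply_mul_zero, mul_sub, hR.invariant]
  rw [triangularCocycle, restrictCocycle, hoff, quotientCocycle, sub_mul, hΦ.zero_mul_apply]
  abel

end IsInvariantProjection

end InvariantProjections

section IntegrableCocycles

variable {Ω E : Type*} [MeasurableSpace Ω] [NormedAddCommGroup E] [InnerProductSpace ℝ E]
  [FiniteDimensional ℝ E]

/-- A log-integrable linear cocycle over `T` acting on the images of the orthogonal projections
`Φ 0 ω`. -/
structure IsIntegrableCocycle (T : Equiv.Perm Ω) (μ : Measure Ω)
    (Φ : ℤ → Ω → E →L[ℝ] E) : Prop extends IsLinearCocycle T Φ where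
  measurable : ∀ n, Measurable (Φ n)
  isSelfAdjoint : ∀ ω, IsSelfAdjoint (Φ 0 ω)
  integrable_one : Integrable (fun ω => Real.posLog ‖Φ 1 ω‖) μ
  integrable_neg_one : Integrable (fun ω => Real.posLog ‖Φ (-1) ω‖) μ

/-- A measurable field of orthogonal projections onto subspaces invariant under `Φ`. -/
structure IsInvariantField (T : Equiv.Perm Ω) (Φ : ℤ → Ω → E →L[ℝ] E)
    (R : Ω → E →L[ℝ] E) : Prop where
  measurable : Measurable R
  mul_self : ∀ ω, R ω * R ω = R ω
  isSelfAdjoint : ∀ ω, IsSelfAdjoint (R ω)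
  zero_mul_proj : ∀ ω, Φ 0 ω * R ω = R ω
  invariant : ∀ n ω, R ((T ^ n) ω) * (Φ n ω * R ω) = Φ n ω * R ω

variable {μ : Measure Ω} {T : Equiv.Perm Ω} {Φ : ℤ → Ω → E →L[ℝ] E}
  {R : Ω → E →L[ℝ] E}

theorem le_exp_posLog (x : ℝ) : x ≤ Real.exp (Real.posLog x) := by
  rcases le_or_gt x 0 with h | h
  · exact h.trans (Real.exp_nonneg _)
  · exact (Real.exp_log h).ge.trans (Real.exp_le_exp.mpr (le_max_right _ _))

theorem integrable_posLog_norm_of_le {V : Type*} [NormedAddCommGroup V] [MeasurableSpace V]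
    [OpensMeasurableSpace V] {X Y : Ω → V} (hX : Measurable X)
    (hY : Integrable (fun ω => Real.posLog ‖Y ω‖) μ) (h : ∀ ω, ‖X ω‖ ≤ ‖Y ω‖) :
    Integrable (fun ω => Real.posLog ‖X ω‖) μ := by
  refine hY.mono' (Real.continuous_posLog.measurable.comp hX.norm).aestronglyMeasurable
    (Eventually.of_forall fun ω => ?_)
  rw [Real.norm_of_nonneg Real.posLog_nonneg]
  exact Real.posLog_le_posLog (norm_nonneg _) (h ω)

theorem ae_hasRate_of_integrable_posLog [IsProbabilityMeasure μ] (hT : Ergodic T μ)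
    (hT' : Ergodic ⇑T⁻¹ μ) {V : Type*} [NormedAddCommGroup V] {X : Ω → V}
    (hX : Integrable (fun ω => Real.posLog ‖X ω‖) μ) :
    ∀ᵐ ω ∂μ, HasRate (fun k => X ((T ^ k) ω)) 0 := by
  filter_upwards [ae_exists_zpow_le hT hT' hX] with ω hω
  exact HasRate.of_le_exp hω fun k => le_exp_posLog _

theorem IsIntegrableCocycle.isStarProjection (hΦ : IsIntegrableCocycle T μ Φ) (ω : Ω) :
    IsStarProjection (Φ 0 ω) := ⟨hΦ.zero_mul_zero ω, hΦ.isSelfAdjoint ω⟩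

namespace IsInvariantField

theorem isStarProjection (hR : IsInvariantField T Φ R) (ω : Ω) : IsStarProjection (R ω) :=
  ⟨hR.mul_self ω, hR.isSelfAdjoint ω⟩

theorem isInvariantProjection (hR : IsInvariantField T Φ R) (hΦ : IsIntegrableCocycle T μ Φ) :
    IsInvariantProjection T Φ R where
  mul_self := hR.mul_self
  zero_mul_proj := hR.zero_mul_proj
  proj_mul_zero ω := by
    have hstar := congrArg star (hR.zero_mul_proj ω)
    rwa [star_mul, (hR.isSelfAdjoint ω).star_eq, (hΦ.isSelfAdjoint ω).star_eq] at hstar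
  invariant := hR.invariant

theorem isStarProjection_compl (hR : IsInvariantField T Φ R) (hΦ : IsIntegrableCocycle T μ Φ)
    (ω : Ω) : IsStarProjection (Φ 0 ω - R ω) :=
  (hR.isStarProjection ω).sub_of_mul_eq_right (hΦ.isStarProjection ω) (hR.zero_mul_proj ω)

theorem isIntegrableCocycle_restrictCocycle (hR : IsInvariantField T Φ R)
    (hΦ : IsIntegrableCocycle T μ Φ) : IsIntegrableCocycle T μ (restrictCocycle Φ R) := by
  have hm (n : ℤ) : Measurable (restrictCocycle Φ R n) := (hΦ.measurable n).mul hR.measurable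
  have hle (n : ℤ) (ω : Ω) : ‖restrictCocycle Φ R n ω‖ ≤ ‖Φ n ω‖ := (norm_mul_le _ _).trans
    (mul_le_of_le_one_right (norm_nonneg _) (hR.isStarProjection ω).norm_le)
  have hproj := hR.isInvariantProjection hΦ
  exact {
    toIsLinearCocycle := hproj.isLinearCocycle_restrictCocycle hΦ.toIsLinearCocycle
    measurable := hm
    isSelfAdjoint := fun ω => by
      simpa only [hproj.restrictCocycle_zero] using hR.isSelfAdjoint ω
    integrable_one := integrable_posLog_norm_of_le (hm 1) hΦ.integrable_one (hle 1)
    integrable_neg_one :=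
      integrable_posLog_norm_of_le (hm (-1)) hΦ.integrable_neg_one (hle (-1)) }

theorem isIntegrableCocycle_quotientCocycle (hR : IsInvariantField T Φ R)
    (hΦ : IsIntegrableCocycle T μ Φ) (hT : MeasurePreserving T μ μ)
    (hT' : MeasurePreserving ⇑T⁻¹ μ μ) : IsIntegrableCocycle T μ (quotientCocycle T Φ R) := by
  have hm (n : ℤ) : Measurable (quotientCocycle T Φ R n) :=
    (((hΦ.measurable 0).sub hR.measurable).comp
      (measurePreserving_perm_zpow hT hT' n).measurable).mul (hΦ.measurable n)
  have hle (n : ℤ) (ω : Ω) : ‖quotientCocycle T Φ R n ω‖ ≤ ‖Φ n ω‖ := (norm_mul_le _ _).trans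
    (mul_le_of_le_one_left (norm_nonneg _) (hR.isStarProjection_compl hΦ _).norm_le)
  have hproj := hR.isInvariantProjection hΦ
  exact {
    toIsLinearCocycle := hproj.isLinearCocycle_quotientCocycle hΦ.toIsLinearCocycle
    measurable := hm
    isSelfAdjoint := fun ω => by
      simpa only [hproj.quotientCocycle_zero hΦ.toIsLinearCocycle] using
        (hR.isStarProjection_compl hΦ ω).isSelfAdjoint
    integrable_one := integrable_posLog_norm_of_le (hm 1) hΦ.integrable_one (hle 1)
    integrable_neg_one :=
      integrable_posLog_norm_of_le (hm (-1)) hΦ.integrable_neg_one (hle (-1)) }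

variable [IsProbabilityMeasure μ]

theorem ae_hasRate_shearCocycle (hR : IsInvariantField T Φ R) (hΦ : IsIntegrableCocycle T μ Φ)
    (hT : Ergodic T μ) (hT' : Ergodic ⇑T⁻¹ μ) (n : ℤ)
    (hn : Integrable (fun ω => Real.posLog ‖Φ n ω‖) μ)
    (hn' : Integrable (fun ω => Real.posLog ‖Φ (-n) ω‖) μ) :
    ∀ᵐ ω ∂μ, HasRate (fun k => shearCocycle T Φ R n ((T ^ k) ω)) 0 := by
  filter_upwards [ae_hasRate_of_integrable_posLog hT hT' hn,
    ae_forall_zpow hT.toMeasurePreserving hT'.toMeasurePreserving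
      (ae_hasRate_of_integrable_posLog hT hT' hn')] with ω hpos hneg
  have hback : HasRate (fun k : ℤ => Φ (-n) ((T ^ n) ((T ^ k) ω))) 0 := by
    simpa only [← perm_zpow_add_apply, add_comm] using hneg n
  have hproj : HasRate (fun k : ℤ => R ((T ^ n) ((T ^ k) ω))) 0 :=
    HasRate.of_norm_le fun k => (hR.isStarProjection _).norm_le
  have hcompl : HasRate (fun k : ℤ => Φ 0 ((T ^ k) ω) - R ((T ^ k) ω)) 0 :=
    HasRate.of_norm_le fun k => (hR.isStarProjection_compl hΦ _).norm_le
  simpa only [add_zero, shearCocycle] using ((hback.mul hproj).mul hpos).mul hcompl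

theorem isOseledetsRegular (hR : IsInvariantField T Φ R) (hΦ : IsIntegrableCocycle T μ Φ)
    (hT : Ergodic T μ) (hT' : Ergodic ⇑T⁻¹ μ)
    (hF : IsOseledetsRegular T μ (restrictCocycle Φ R))
    (hQ : IsOseledetsRegular T μ (quotientCocycle T Φ R)) : IsOseledetsRegular T μ Φ := by
  have hproj := hR.isInvariantProjection hΦ
  have hmp := hT.toMeasurePreserving
  have hmp' := hT'.toMeasurePreserving
  have hshear (n : ℤ) : Measurable (shearCocycle T Φ R n) := by
    have hTn := (measurePreserving_perm_zpow hmp hmp' n).measurable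
    exact ((((hΦ.measurable (-n)).comp hTn).mul (hR.measurable.comp hTn)).mul
      (hΦ.measurable n)).mul ((hΦ.measurable 0).sub hR.measurable)
  rw [← hproj.triangularCocycle_eq hΦ.toIsLinearCocycle]
  exact (hproj.isTwistedCocycle hΦ.toIsLinearCocycle).isOseledetsRegular hmp hmp'
    ((hR.isIntegrableCocycle_restrictCocycle hΦ).measurable 0)
    ((hR.isIntegrableCocycle_quotientCocycle hΦ hmp hmp').measurable 0) hshear hF hQ
    (hR.ae_hasRate_shearCocycle hΦ hT hT' 1 hΦ.integrable_one hΦ.integrable_neg_one)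
    (hR.ae_hasRate_shearCocycle hΦ hT hT' (-1) hΦ.integrable_neg_one
      (by simpa only [neg_neg] using hΦ.integrable_one))

end IsInvariantField

end IntegrableCocycles

section MeasurableProjections

variable {Ω E : Type*} [MeasurableSpace Ω] [NormedAddCommGroup E] [InnerProductSpace ℝ E]

theorem measurable_norm_apply {X : Ω → E →L[ℝ] E} (hX : Measurable X) (v : E) :
    Measurable fun ω => ‖X ω v‖ :=
  (by fun_prop : Continuous fun A : E →L[ℝ] E => ‖A v‖).measurable.comp hX

variable [FiniteDimensional ℝ E]

theorem measurable_of_forall_inner {X : Ω → E →L[ℝ] E}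
    (hX : ∀ x y, Measurable fun ω => inner ℝ x (X ω y)) : Measurable X := by
  let b := stdOrthonormalBasis ℝ E
  have hsum : X = fun ω => ∑ i, ∑ j, inner ℝ (b i) (X ω (b j)) •
      InnerProductSpace.rankOne ℝ (b i) (b j) := by
    funext ω
    refine ContinuousLinearMap.coe_injective (b.toBasis.ext fun k => ?_)
    simp [b.inner_eq_ite, ite_smul, b.sum_repr']
  rw [hsum]
  exact Finset.measurable_fun_sum _ fun i _ => Finset.measurable_fun_sum _ fun j _ =>
    (hX _ _).smul_const _

theorem measurable_of_isSelfAdjoint {X : Ω → E →L[ℝ] E} (hsa : ∀ ω, IsSelfAdjoint (X ω))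
    (hX : ∀ x, Measurable fun ω => inner ℝ x (X ω x)) : Measurable X := by
  refine measurable_of_forall_inner fun x y => ?_
  have hpolar (ω : Ω) : inner ℝ x (X ω y) =
      (inner ℝ (x + y) (X ω (x + y)) - inner ℝ x (X ω x) - inner ℝ y (X ω y)) / 2 := by
    have hsymm : inner ℝ y (X ω x) = inner ℝ x (X ω y) := by
      rw [real_inner_comm]
      exact (hsa ω).isSymmetric x y
    rw [map_add, inner_add_left, inner_add_right, inner_add_right, hsymm]
    ring
  simp only [hpolar]
  exact (((hX _).sub (hX _)).sub (hX _)).div_const 2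

theorem measurable_starProjection_of_norm_sub {F : Ω → Submodule ℝ E}
    (hF : ∀ x, Measurable fun ω => ‖x - (F ω).starProjection x‖) :
    Measurable fun ω => (F ω).starProjection := by
  refine measurable_of_isSelfAdjoint (fun ω => isSelfAdjoint_starProjection _) fun x => ?_
  have hpyth (ω : Ω) : inner ℝ x ((F ω).starProjection x) =
      ‖x‖ ^ 2 - ‖x - (F ω).starProjection x‖ ^ 2 := by
    have horth := (F ω).starProjection_inner_eq_zero x _ ((F ω).starProjection_apply_mem x)
    rw [inner_sub_left, real_inner_self_eq_norm_sq] at horth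
    rw [norm_sub_sq_real]
    linarith
  simp only [hpyth]
  exact measurable_const.sub ((hF x).pow_const 2)

/-- The subspace of vectors with bounded images under a family of operators. -/
def boundedSubmodule {ι : Type*} (Z : ι → E →L[ℝ] E) : Submodule ℝ E where
  carrier := {v | ∃ C : ℝ, ∀ i, ‖Z i v‖ ≤ C}
  zero_mem' := ⟨0, fun i => by simp⟩
  add_mem' := by
    rintro v w ⟨C, hC⟩ ⟨C', hC'⟩
    exact ⟨C + C', fun i => by
      rw [map_add]
      exact (norm_add_le _ _).trans (add_le_add (hC i) (hC' i))⟩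
  smul_mem' := by
    rintro a v ⟨C, hC⟩
    exact ⟨‖a‖ * C, fun i => by
      rw [map_smul, norm_smul]
      exact mul_le_mul_of_nonneg_left (hC i) (norm_nonneg _)⟩

theorem norm_sub_starProjection_lt_iff (F : Submodule ℝ E) (x : E) (r : ℝ) :
    ‖x - F.starProjection x‖ < r ↔ ∃ v ∈ F, ‖x - v‖ < r := by
  rw [Submodule.starProjection_minimal, ciInf_lt_iff]
  · simp
  · exact ⟨0, by rintro _ ⟨v, rfl⟩; exact norm_nonneg _⟩

/-- Compactness reduces proximity to `boundedSubmodule` to conditions on finitely many operators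
and vectors in a countable dense set. -/
theorem norm_sub_starProjection_boundedSubmodule_lt_iff {ι : Type*} (Z : ι → E →L[ℝ] E) (x : E)
    (r : ℝ) : ‖x - (boundedSubmodule Z).starProjection x‖ < r ↔
      ∃ q : ℚ, (q : ℝ) < r ∧ ∃ C : ℕ, ∀ s : Finset ι, ∃ k : ℕ,
        ‖x - TopologicalSpace.denseSeq E k‖ < q ∧
        ∀ i ∈ s, ‖Z i (TopologicalSpace.denseSeq E k)‖ < C := by
  rw [norm_sub_starProjection_lt_iff]
  constructor
  · rintro ⟨v, ⟨C, hC⟩, hv⟩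
    obtain ⟨q, hvq, hqr⟩ := exists_rat_btwn hv
    obtain ⟨C', hC'⟩ := exists_nat_gt C
    refine ⟨q, hqr, C', fun s => ?_⟩
    have hopen : IsOpen ({w | ‖x - w‖ < q} ∩ ⋂ i ∈ s, {w | ‖Z i w‖ < C'}) :=
      (isOpen_lt (by fun_prop) continuous_const).inter
        (isOpen_biInter_finset fun i _ => isOpen_lt (by fun_prop) continuous_const)
    obtain ⟨k, hk⟩ := (TopologicalSpace.denseRange_denseSeq E).exists_mem_open hopen
      ⟨v, hvq, by simpa using fun i _ => (hC i).trans_lt hC'⟩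
    exact ⟨k, hk.1, by simpa using hk.2⟩
  · rintro ⟨q, hqr, C, h⟩
    obtain ⟨v, hv, hvC⟩ := (isCompact_closedBall x (q : ℝ)).inter_iInter_nonempty
      (fun i : ι => {w | ‖Z i w‖ ≤ C}) (fun i => isClosed_le (by fun_prop) continuous_const)
      (fun s => by
        obtain ⟨k, hk, hkC⟩ := h s
        exact ⟨TopologicalSpace.denseSeq E k, mem_closedBall_iff_norm'.2 hk.le,
          by simpa using fun i hi => (hkC i hi).le⟩)
    exact ⟨v, ⟨C, by simpa using hvC⟩, (mem_closedBall_iff_norm'.1 hv).trans_lt hqr⟩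

theorem measurable_starProjection_boundedSubmodule {ι : Type*} [Countable ι]
    {Z : ι → Ω → E →L[ℝ] E} (hZ : ∀ i, Measurable (Z i)) :
    Measurable fun ω => (boundedSubmodule fun i => Z i ω).starProjection := by
  refine measurable_starProjection_of_norm_sub fun x => measurable_of_Iio fun r => ?_
  simp only [Set.preimage, Set.mem_Iio, norm_sub_starProjection_boundedSubmodule_lt_iff]
  refine Measurable.setOf (.exists fun q => .and measurable_const (.exists fun C =>
    .forall fun s => .exists fun k => .and measurable_const (.forall fun i =>
      .imp measurable_const ?_)))
  exact measurableSet_setOfPred.1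
    (measurableSet_lt (measurable_norm_apply (hZ _) _) measurable_const)

end MeasurableProjections

section SlowProjections

variable {Ω E : Type*} [NormedAddCommGroup E] [InnerProductSpace ℝ E] {Φ : ℤ → Ω → E →L[ℝ] E}

/-- The operators whose simultaneous boundedness on a vector expresses that this vector lies in the
image of `Φ 0` and grows at rate at most `c`. -/
noncomputable def growthFamily (Φ : ℤ → Ω → E →L[ℝ] E) (c : ℝ) : ℕ ⊕ ℕ → Ω → E →L[ℝ] E
  | Sum.inl n => fun ω => (n : ℝ) • (1 - Φ 0 ω)
  | Sum.inr n => fun ω => Real.exp (-(n * c)) • Φ n ω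

/-- The vectors in the image of `Φ 0 ω` whose forward growth rate is at most `c`. -/
noncomputable def slowSubmodule (Φ : ℤ → Ω → E →L[ℝ] E) (c : ℝ) (ω : Ω) : Submodule ℝ E :=
  boundedSubmodule fun i => growthFamily Φ c i ω

theorem mem_slowSubmodule {c : ℝ} {ω : Ω} {v : E} :
    v ∈ slowSubmodule Φ c ω ↔
      Φ 0 ω v = v ∧ ∃ C : ℝ, ∀ n : ℕ, ‖Φ n ω v‖ ≤ C * Real.exp (n * c) := by
  have hinr (n : ℕ) (C : ℝ) :
      ‖growthFamily Φ c (Sum.inr n) ω v‖ ≤ C ↔ ‖Φ n ω v‖ ≤ C * Real.exp (n * c) := by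
    rw [growthFamily, smul_apply, norm_smul, Real.norm_eq_abs, Real.abs_exp, Real.exp_neg,
      inv_mul_le_iff₀ (Real.exp_pos _), mul_comm]
  constructor
  · rintro ⟨C, hC⟩
    refine ⟨?_, C, fun n => (hinr n C).1 (hC (Sum.inr n))⟩
    by_contra hne
    have hpos : 0 < ‖v - Φ 0 ω v‖ := norm_pos_iff.2 (sub_ne_zero.2 (Ne.symm hne))
    obtain ⟨n, hn⟩ := exists_nat_gt (C / ‖v - Φ 0 ω v‖)
    have hle := hC (Sum.inl n)
    simp only [growthFamily, smul_apply, norm_smul, Real.norm_natCast, sub_apply,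
      one_apply_eq_self] at hle
    rw [div_lt_iff₀ hpos] at hn
    exact hle.not_gt hn
  · rintro ⟨h0, C, hC⟩
    have hC0 : 0 ≤ C := by simpa using (norm_nonneg _).trans (hC 0)
    refine ⟨C, ?_⟩
    rintro (n | n)
    · simpa [growthFamily, h0] using hC0
    · exact (hinr n C).2 (hC n)

variable {T : Equiv.Perm Ω}

theorem IsLinearCocycle.apply_mem_slowSubmodule (hΦ : IsLinearCocycle T Φ) {c : ℝ} {ω : Ω}
    {v : E} (hv : v ∈ slowSubmodule Φ c ω) (n : ℤ) : Φ n ω v ∈ slowSubmodule Φ c ((T ^ n) ω) := by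
  obtain ⟨-, C, hC⟩ := mem_slowSubmodule.1 hv
  have hC0 : 0 ≤ C := by simpa using (norm_nonneg _).trans (hC 0)
  have hcoc (m : ℤ) : Φ m ((T ^ n) ω) (Φ n ω v) = Φ (m + n) ω v := by rw [hΦ.apply_add]; rfl
  simp only [mem_slowSubmodule, hcoc]
  refine ⟨by rw [zero_add], ∑ j ∈ Finset.range n.natAbs, ‖Φ (j + n) ω v‖ * Real.exp (-(j * c)) +
    C * Real.exp (n * c), fun k => ?_⟩
  rw [add_mul]
  by_cases hk : k < n.natAbs
  · calc ‖Φ (k + n) ω v‖ = ‖Φ (k + n) ω v‖ * Real.exp (-(k * c)) * Real.exp (k * c) := by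
          rw [mul_assoc, ← Real.exp_add, neg_add_cancel, Real.exp_zero, mul_one]
      _ ≤ (∑ j ∈ Finset.range n.natAbs, ‖Φ (j + n) ω v‖ * Real.exp (-(j * c))) *
          Real.exp (k * c) := by
        gcongr
        exact Finset.single_le_sum (f := fun j : ℕ => ‖Φ (j + n) ω v‖ * Real.exp (-(j * c)))
          (fun j _ => by positivity) (Finset.mem_range.2 hk)
      _ ≤ _ := le_add_of_nonneg_right (by positivity)
  · obtain ⟨m, hm⟩ : ∃ m : ℕ, (k : ℤ) + n = m := Int.eq_ofNat_of_zero_le (by omega)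
    have hm' : (m : ℝ) = n + k := by exact_mod_cast (hm.symm.trans (add_comm _ _))
    calc ‖Φ (k + n) ω v‖ ≤ C * Real.exp (m * c) := by rw [hm]; exact hC m
      _ = C * Real.exp (n * c) * Real.exp (k * c) := by
        rw [mul_assoc, ← Real.exp_add, ← add_mul, hm']
      _ ≤ _ := le_add_of_nonneg_left (mul_nonneg
        (Finset.sum_nonneg fun j _ => by positivity) (Real.exp_nonneg _))

variable [FiniteDimensional ℝ E]

/-- The field of orthogonal projections onto the vectors of growth rate at most `c`. -/
noncomputable def slowProjection (Φ : ℤ → Ω → E →L[ℝ] E) (c : ℝ) (ω : Ω) : E →L[ℝ] E :=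
  (slowSubmodule Φ c ω).starProjection

theorem slowProjection_apply_mem (c : ℝ) (ω : Ω) (v : E) :
    slowProjection Φ c ω v ∈ slowSubmodule Φ c ω :=
  Submodule.starProjection_apply_mem _ _

theorem slowProjection_apply_eq_self {c : ℝ} {ω : Ω} {v : E} (hv : v ∈ slowSubmodule Φ c ω) :
    slowProjection Φ c ω v = v :=
  Submodule.starProjection_eq_self_iff.2 hv

theorem IsIntegrableCocycle.isInvariantField_slowProjection [MeasurableSpace Ω] {μ : Measure Ω}
    (hΦ : IsIntegrableCocycle T μ Φ) (c : ℝ) : IsInvariantField T Φ (slowProjection Φ c) where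
  measurable := by
    refine measurable_starProjection_boundedSubmodule (Z := growthFamily Φ c) ?_
    rintro (n | n)
    · exact (measurable_const.sub (hΦ.measurable 0)).const_smul (n : ℝ)
    · exact (hΦ.measurable n).const_smul (Real.exp (-(n * c)))
  mul_self ω := Submodule.isIdempotentElem_starProjection _
  isSelfAdjoint ω := isSelfAdjoint_starProjection _
  zero_mul_proj ω := by
    ext1 v
    exact (mem_slowSubmodule.1 (slowProjection_apply_mem c ω v)).1
  invariant n ω := by
    ext1 v
    exact slowProjection_apply_eq_self
      (hΦ.apply_mem_slowSubmodule (slowProjection_apply_mem c ω v) n)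

end SlowProjections

section UniformGrowthOfCocycles

variable {Ω E : Type*} [NormedAddCommGroup E]

section NormedSpace

variable [NormedSpace ℝ E] {T : Equiv.Perm Ω} {Φ : ℤ → Ω → E →L[ℝ] E}

namespace IsLinearCocycle

theorem apply_add_apply (hΦ : IsLinearCocycle T Φ) (m n : ℤ) (ω : Ω) (v : E) :
    Φ m ((T ^ n) ω) (Φ n ω v) = Φ (m + n) ω v := by
  rw [hΦ.apply_add]
  rfl

theorem norm_apply_le (hΦ : IsLinearCocycle T Φ) (n : ℤ) (ω : Ω) (v : E) :
    ‖Φ n ω v‖ ≤ ‖Φ n ω‖ * ‖Φ 0 ω v‖ := by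
  have h := (Φ n ω).le_opNorm (Φ 0 ω v)
  rwa [show Φ n ω (Φ 0 ω v) = Φ n ω v from congr($(hΦ.apply_mul_zero n ω) v)] at h

theorem norm_zero_apply_le (hΦ : IsLinearCocycle T Φ) (n : ℤ) (ω : Ω) (v : E) :
    ‖Φ 0 ω v‖ ≤ ‖Φ (-n) ((T ^ n) ω)‖ * ‖Φ n ω v‖ := by
  have h := (Φ (-n) ((T ^ n) ω)).le_opNorm (Φ n ω v)
  rwa [hΦ.apply_add_apply, neg_add_cancel] at h

theorem inv_mul_inv_norm_le_iff (hΦ : IsLinearCocycle T Φ) (n : ℤ) (ω : Ω) (v : E) {C : ℝ}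
    (hC : 0 < C) : C⁻¹ * ‖Φ 0 ω v‖⁻¹ ≤ ‖Φ n ω v‖⁻¹ ↔ ‖Φ n ω v‖ ≤ C * ‖Φ 0 ω v‖ := by
  rcases (norm_nonneg (Φ 0 ω v)).eq_or_lt with h0 | h0
  · have hn : ‖Φ n ω v‖ = 0 := le_antisymm
      ((hΦ.norm_apply_le n ω v).trans_eq (by rw [← h0, mul_zero])) (norm_nonneg _)
    simp [← h0, hn]
  · have hn : 0 < ‖Φ n ω v‖ :=
      pos_of_mul_pos_right (h0.trans_le (hΦ.norm_zero_apply_le n ω v)) (norm_nonneg _)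
    rw [← mul_inv, inv_le_inv₀ (by positivity) hn]

variable [MeasurableSpace Ω] {μ : Measure Ω} [IsProbabilityMeasure μ]

theorem ae_exists_exp_mul_le (hΦ : IsLinearCocycle T Φ) (hT : Ergodic T μ)
    (hT' : Ergodic ⇑T⁻¹ μ) {f : E → ℝ} (hf : ∀ v, 0 ≤ f v) {g : Ω → ℝ} (hg : Integrable g μ)
    (hg0 : ∀ ω, 0 ≤ g ω) {c c' : ℝ} (hc : c' < c) {G : ℕ → Set Ω}
    (hG : ∀ N, MeasurableSet (G N)) (hmono : Monotone G) (hae : ∀ᵐ ω ∂μ, ∃ N, ω ∈ G N)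
    (hstep : ∀ ω v, Real.exp (-g ω) * f (Φ 0 ω v) ≤ f (Φ 1 ω v))
    (hjump : ∀ N, ∀ ω ∈ G N, ∀ v,
      ∃ n : ℕ, 0 < n ∧ n ≤ N ∧ Real.exp (c * n) * f (Φ 0 ω v) ≤ f (Φ n ω v)) :
    ∀ᵐ ω ∂μ, ∃ K : ℝ, ∀ (M : ℕ) (ω₀ : Ω), ω₀ = ω ∨ (T ^ (M : ℤ)) ω₀ = ω → ∀ v,
      Real.exp (c' * M - K) * f (Φ 0 ω₀ v) ≤ f (Φ M ω₀ v) := by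
  let S : (Ω × E) × ℕ → (Ω × E) × ℕ := Prod.map id Nat.succ
  let π : (Ω × E) × ℕ → Ω := fun y => (T ^ (y.2 : ℤ)) y.1.1
  have hS (n : ℕ) (y : (Ω × E) × ℕ) : S^[n] y = (y.1, y.2 + n) := by
    rw [Prod.map_iterate, Prod.map_apply', Function.iterate_id, Nat.succ_iterate, id]
  have hπ : Function.Semiconj π S T := fun y => by
    simp only [π, S, Prod.map, id, Nat.succ_eq_add_one, ← perm_iterate_eq_zpow,
      Function.iterate_succ_apply']
  have hcoc (m : ℤ) (y : (Ω × E) × ℕ) :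
      Φ m (π y) (Φ y.2 y.1.1 y.1.2) = Φ (y.2 + m) y.1.1 y.1.2 := by
    rw [hΦ.apply_add_apply, add_comm]
  filter_upwards [ae_exists_exp_mul_le_iterate hT hT' hπ
    (ν := fun y => f (Φ y.2 y.1.1 y.1.2)) (fun y => hf _) hg hg0 hc hG hmono hae
    (fun y => by
      have h := hstep (π y) (Φ y.2 y.1.1 y.1.2)
      rw [hcoc, hcoc, add_zero] at h
      exact_mod_cast h)
    (fun N y hy => by
      obtain ⟨n, hn, hnN, h⟩ := hjump N _ hy (Φ y.2 y.1.1 y.1.2)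
      rw [hcoc, hcoc, add_zero] at h
      exact ⟨n, hn, hnN, by rw [hS]; exact_mod_cast h⟩)] with ω ⟨K, hK⟩
  refine ⟨K, fun M ω₀ hω₀ v => ?_⟩
  have h := hK M ((ω₀, v), 0)
  simp only [hS, π, zero_add, Nat.cast_zero, zpow_zero, Equiv.Perm.one_apply] at h
  exact h hω₀

end IsLinearCocycle

end NormedSpace

variable [InnerProductSpace ℝ E] [FiniteDimensional ℝ E] [MeasurableSpace Ω] {μ : Measure Ω}
  {T : Equiv.Perm Ω} {Φ : ℤ → Ω → E →L[ℝ] E}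

namespace IsIntegrableCocycle

theorem norm_le_of_forall_norm_apply_le (hΦ : IsIntegrableCocycle T μ Φ) {n : ℤ} {ω : Ω} {C : ℝ}
    (hC : 0 ≤ C) (h : ∀ v, ‖Φ n ω v‖ ≤ C * ‖Φ 0 ω v‖) : ‖Φ n ω‖ ≤ C :=
  ContinuousLinearMap.opNorm_le_bound _ hC fun v => (h v).trans <|
    mul_le_mul_of_nonneg_left
      ((Φ 0 ω).le_of_opNorm_le (hΦ.isStarProjection ω).norm_le v |>.trans_eq (one_mul _)) hC

theorem norm_neg_le_of_forall_le_norm_apply (hΦ : IsIntegrableCocycle T μ Φ) {n : ℤ} {ω : Ω}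
    {a : ℝ} (h : ∀ v, Real.exp a * ‖Φ 0 ω v‖ ≤ ‖Φ n ω v‖) :
    ‖Φ (-n) ((T ^ n) ω)‖ ≤ Real.exp (-a) := by
  refine hΦ.norm_le_of_forall_norm_apply_le (Real.exp_nonneg _) fun w => ?_
  have hw := h (Φ (-n) ((T ^ n) ω) w)
  rw [show Φ 0 ω (Φ (-n) ((T ^ n) ω) w) = Φ (-n) ((T ^ n) ω) w from
      congr($(hΦ.zero_mul_neg n ω) w),
    show Φ n ω (Φ (-n) ((T ^ n) ω) w) = Φ 0 ((T ^ n) ω) w from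
      congr($(hΦ.apply_mul_neg n ω) w)] at hw
  rwa [Real.exp_neg, le_inv_mul_iff₀ (Real.exp_pos _)]

theorem exists_forall_exp_mul_le (hΦ : IsIntegrableCocycle T μ Φ) {c : ℝ} {ω : Ω}
    (hz : slowProjection Φ c ω = 0) :
    ∃ N : ℕ, ∀ v, ∃ n : ℕ, 0 < n ∧ n ≤ N ∧ Real.exp (c * n) * ‖Φ 0 ω v‖ ≤ ‖Φ n ω v‖ := by
  by_contra! hcon
  obtain ⟨u, husphere, hu⟩ := (isCompact_sphere (0 : E) 1).inter_iInter_nonempty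
    (fun n : ℕ => {u | Φ 0 ω u = u} ∩ {u | ‖Φ n ω u‖ ≤ Real.exp (n * c)})
    (fun n => (isClosed_eq (by fun_prop) continuous_id).inter
      (isClosed_le (by fun_prop) continuous_const))
    (fun s => by
      obtain ⟨v, hv⟩ := hcon (s.sup id + 1)
      have hv0 : 0 < ‖Φ 0 ω v‖ := pos_of_mul_pos_right
        ((norm_nonneg _).trans_lt (hv 1 one_pos (by omega))) (Real.exp_nonneg _)
      have hfix (n : ℤ) : Φ n ω (Φ 0 ω v) = Φ n ω v := congr($(hΦ.apply_mul_zero n ω) v)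
      refine ⟨‖Φ 0 ω v‖⁻¹ • Φ 0 ω v, by simp [norm_smul, hv0.ne'], ?_⟩
      simp only [Set.mem_iInter]
      refine fun n hn => ⟨by simp [hfix], ?_⟩
      simp only [Set.mem_ofPred_eq, map_smul, hfix, norm_smul, norm_inv, norm_norm]
      rw [inv_mul_le_iff₀ hv0, mul_comm]
      rcases n.eq_zero_or_pos with rfl | hpos
      · simp
      · rw [mul_comm (n : ℝ)]
        exact (hv n hpos ((Finset.le_sup (f := id) hn).trans (Nat.le_succ _))).le)
  simp only [Set.mem_iInter] at hu
  have hmem : u ∈ slowSubmodule Φ c ω :=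
    mem_slowSubmodule.2 ⟨(hu 0).1, 1, fun n => by rw [one_mul]; exact (hu n).2⟩
  have hu0 : u = 0 := by simpa [hz] using (slowProjection_apply_eq_self hmem).symm
  simp [hu0] at husphere

theorem exists_norm_le_exp (hΦ : IsIntegrableCocycle T μ Φ) {c b : ℝ} (hcb : c < b) {ω : Ω}
    (hz : slowProjection Φ c ω = Φ 0 ω) : ∃ n : ℕ, 0 < n ∧ ‖Φ n ω‖ ≤ Real.exp (b * n) := by
  have hnorm (n : ℕ) {x C : ℝ} : Real.exp (-(n * c)) * x ≤ C ↔ x ≤ C * Real.exp (n * c) := by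
    rw [Real.exp_neg, inv_mul_le_iff₀ (Real.exp_pos _), mul_comm]
  obtain ⟨C, hC⟩ := banach_steinhaus (g := fun n : ℕ => Real.exp (-(n * c)) • Φ n ω) fun v => by
    obtain ⟨-, C, hC⟩ := mem_slowSubmodule.1 (slowProjection_apply_mem (Φ := Φ) c ω v)
    refine ⟨C, fun n => ?_⟩
    rw [smul_apply, norm_smul, Real.norm_eq_abs, Real.abs_exp, hnorm]
    simpa only [hz, show Φ n ω (Φ 0 ω v) = Φ n ω v from congr($(hΦ.apply_mul_zero n ω) v)]
      using hC n
  have hlim : Tendsto (fun n : ℕ => Real.exp (n * (b - c))) atTop atTop :=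
    Real.tendsto_exp_atTop.comp (tendsto_natCast_atTop_atTop.atTop_mul_const (sub_pos.2 hcb))
  obtain ⟨n, hCn, hn⟩ := ((hlim.eventually_ge_atTop C).and (eventually_gt_atTop 0)).exists
  have hle := hC n
  rw [norm_smul, Real.norm_eq_abs, Real.abs_exp, hnorm] at hle
  refine ⟨n, hn, hle.trans ((mul_le_mul_of_nonneg_right hCn (Real.exp_nonneg _)).trans_eq ?_)⟩
  rw [← Real.exp_add]
  ring_nf

theorem measurableSet_forall_exists_exp_mul_le (hΦ : IsIntegrableCocycle T μ Φ) (c : ℝ) (N : ℕ) :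
    MeasurableSet {ω | ∀ v, ∃ n : ℕ, 0 < n ∧ n ≤ N ∧
      Real.exp (c * n) * ‖Φ 0 ω v‖ ≤ ‖Φ n ω v‖} := by
  have hdense (ω : Ω) : (∀ v, ∃ n : ℕ, 0 < n ∧ n ≤ N ∧
        Real.exp (c * n) * ‖Φ 0 ω v‖ ≤ ‖Φ n ω v‖) ↔
      ∀ k, ∃ n : ℕ, 0 < n ∧ n ≤ N ∧ Real.exp (c * n) * ‖Φ 0 ω (TopologicalSpace.denseSeq E k)‖ ≤
        ‖Φ n ω (TopologicalSpace.denseSeq E k)‖ := by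
    refine ⟨fun h k => h _, fun h v =>
      (TopologicalSpace.denseRange_denseSeq E).induction_on v ?_ h⟩
    have hunion : {v | ∃ n : ℕ, 0 < n ∧ n ≤ N ∧ Real.exp (c * n) * ‖Φ 0 ω v‖ ≤ ‖Φ n ω v‖} =
        ⋃ n ∈ Finset.Ioc 0 N, {v | Real.exp (c * n) * ‖Φ 0 ω v‖ ≤ ‖Φ n ω v‖} := by
      ext v
      simp [and_assoc]
    rw [hunion]
    exact isClosed_biUnion_finset fun n _ => isClosed_le (by fun_prop) (by fun_prop)
  simp only [hdense]
  exact Measurable.setOf (.forall fun k => .exists fun n => .and measurable_const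
    (.and measurable_const (measurableSet_setOfPred.1 (measurableSet_le
      ((measurable_norm_apply (hΦ.measurable 0) _).const_mul _)
      (measurable_norm_apply (hΦ.measurable n) _)))))

variable [IsProbabilityMeasure μ]

theorem ae_exists_norm_neg_le (hΦ : IsIntegrableCocycle T μ Φ) (hT : Ergodic T μ)
    (hT' : Ergodic ⇑T⁻¹ μ) {c c' : ℝ} (hc : c' < c)
    (hz : ∀ᵐ ω ∂μ, slowProjection Φ c ω = 0) :
    ∀ᵐ ω ∂μ, ∃ K : ℝ, ∀ (M : ℕ) (ω₀ : Ω), ω₀ = ω ∨ (T ^ (M : ℤ)) ω₀ = ω →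
      ‖Φ (-M) ((T ^ (M : ℤ)) ω₀)‖ ≤ Real.exp (K - c' * M) := by
  have hstep (ω : Ω) (v : E) :
      Real.exp (-Real.posLog ‖Φ (-1) (T ω)‖) * ‖Φ 0 ω v‖ ≤ ‖Φ 1 ω v‖ := by
    rw [Real.exp_neg, inv_mul_le_iff₀ (Real.exp_pos _)]
    exact (hΦ.norm_zero_apply_le 1 ω v).trans
      (mul_le_mul_of_nonneg_right (le_exp_posLog _) (norm_nonneg _))
  filter_upwards [hΦ.ae_exists_exp_mul_le hT hT' norm_nonneg
    (hT.toMeasurePreserving.integrable_comp_of_integrable hΦ.integrable_neg_one)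
    (fun ω => Real.posLog_nonneg) hc (hΦ.measurableSet_forall_exists_exp_mul_le c)
    (fun N N' hN ω hω v => (hω v).imp fun n h => ⟨h.1, h.2.1.trans hN, h.2.2⟩)
    (hz.mono fun ω hω => hΦ.exists_forall_exp_mul_le hω) hstep (fun N ω hω => hω)] with ω ⟨K, hK⟩
  refine ⟨K, fun M ω₀ hω₀ => ?_⟩
  rw [← neg_sub]
  exact hΦ.norm_neg_le_of_forall_le_norm_apply (hK M ω₀ hω₀)

/- The observable `‖·‖⁻¹` turns upper bounds on growth into lower bounds. -/
theorem ae_exists_norm_le (hΦ : IsIntegrableCocycle T μ Φ) (hT : Ergodic T μ)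
    (hT' : Ergodic ⇑T⁻¹ μ) {c c' : ℝ} (hc : c < c')
    (hz : ∀ᵐ ω ∂μ, slowProjection Φ c ω = Φ 0 ω) :
    ∀ᵐ ω ∂μ, ∃ K : ℝ, ∀ (M : ℕ) (ω₀ : Ω), ω₀ = ω ∨ (T ^ (M : ℤ)) ω₀ = ω →
      ‖Φ M ω₀‖ ≤ Real.exp (K + c' * M) := by
  obtain ⟨b, hcb, hbc⟩ := exists_between hc
  have hinv {n : ℤ} {ω : Ω} {v : E} {a : ℝ} :
      Real.exp (-a) * ‖Φ 0 ω v‖⁻¹ ≤ ‖Φ n ω v‖⁻¹ ↔ ‖Φ n ω v‖ ≤ Real.exp a * ‖Φ 0 ω v‖ := by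
    rw [Real.exp_neg, hΦ.inv_mul_inv_norm_le_iff n ω v (Real.exp_pos a)]
  have hbound {n : ℤ} {ω : Ω} {a : ℝ} (h : ‖Φ n ω‖ ≤ Real.exp a) (v : E) :
      Real.exp (-a) * ‖Φ 0 ω v‖⁻¹ ≤ ‖Φ n ω v‖⁻¹ :=
    hinv.2 ((hΦ.norm_apply_le n ω v).trans (mul_le_mul_of_nonneg_right h (norm_nonneg _)))
  filter_upwards [hΦ.ae_exists_exp_mul_le hT hT' (f := fun v => ‖v‖⁻¹) (fun v => by positivity)
    hΦ.integrable_one (fun ω => Real.posLog_nonneg) (neg_lt_neg hbc)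
    (G := fun N => {ω | ∃ n : ℕ, 0 < n ∧ n ≤ N ∧ ‖Φ n ω‖ ≤ Real.exp (b * n)})
    (fun N => Measurable.setOf (.exists fun n => .and measurable_const
      (.and measurable_const (measurableSet_setOfPred.1
        (measurableSet_le (hΦ.measurable n).norm measurable_const)))))
    (fun N N' hN ω hω => hω.imp fun n h => ⟨h.1, h.2.1.trans hN, h.2.2⟩)
    (hz.mono fun ω hω => (hΦ.exists_norm_le_exp hcb hω).imp fun n h => ⟨n, h.1, le_rfl, h.2⟩)
    (fun ω => hbound (le_exp_posLog _))
    (fun N ω hω v => hω.imp fun n h =>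
      ⟨h.1, h.2.1, by rw [neg_mul]; exact hbound h.2.2 v⟩)] with ω ⟨K, hK⟩
  refine ⟨K, fun M ω₀ hω₀ =>
    hΦ.norm_le_of_forall_norm_apply_le (Real.exp_nonneg _) fun v => hinv.1 ?_⟩
  have h := hK M ω₀ hω₀ v
  rwa [show -c' * M - K = -(K + c' * M) by ring] at h

end IsIntegrableCocycle

end UniformGrowthOfCocycles

section SingleExponent

theorem HasRate.of_nat {W : Type*} [Norm W] {u : ℤ → W} {a : ℝ}
    (hpos : ∀ ε > 0, ∃ K : ℝ, ∀ n : ℕ, ‖u n‖ ≤ Real.exp (K + (a + ε) * n))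
    (hneg : ∀ ε > 0, ∃ K : ℝ, ∀ n : ℕ, ‖u (-n)‖ ≤ Real.exp (K - (a - ε) * n)) :
    HasRate u a := by
  intro ε hε
  obtain ⟨K, hK⟩ := hpos ε hε
  obtain ⟨K', hK'⟩ := hneg ε hε
  refine ⟨Real.exp (max K K'), fun k => ?_⟩
  rw [← Real.exp_add]
  obtain ⟨n, rfl | rfl⟩ := k.eq_nat_or_neg
  · refine (hK n).trans (Real.exp_le_exp.2 ?_)
    push_cast
    rw [Nat.abs_cast]
    linarith [le_max_left K K']
  · refine (hK' n).trans (Real.exp_le_exp.2 ?_)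
    push_cast
    rw [abs_neg, Nat.abs_cast]
    linarith [le_max_right K K']

theorem hasRate_of_segment_bounds {Ω W : Type*} [Norm W] {T : Equiv.Perm Ω} {Φ : ℤ → Ω → W}
    {l : ℝ} {ω : Ω}
    (hup : ∀ ε > 0, ∃ K : ℝ, ∀ (M : ℕ) (ω₀ : Ω), ω₀ = ω ∨ (T ^ (M : ℤ)) ω₀ = ω →
      ‖Φ M ω₀‖ ≤ Real.exp (K + (l + ε) * M))
    (hdown : ∀ ε > 0, ∃ K : ℝ, ∀ (M : ℕ) (ω₀ : Ω), ω₀ = ω ∨ (T ^ (M : ℤ)) ω₀ = ω →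
      ‖Φ (-M) ((T ^ (M : ℤ)) ω₀)‖ ≤ Real.exp (K - (l - ε) * M)) :
    HasRate (Φ · ω) l ∧ HasRate (fun k => Φ (-k) ((T ^ k) ω)) (-l) := by
  have hback (M : ℕ) : (T ^ (M : ℤ)) ((T ^ (-(M : ℤ))) ω) = ω := by simp
  constructor
  · refine .of_nat (fun ε hε => (hup ε hε).imp fun K hK M => hK M ω (.inl rfl))
      fun ε hε => (hdown ε hε).imp fun K hK M => ?_
    simpa only [hback] using hK M _ (.inr (hback M))
  · refine .of_nat (fun ε hε => (hdown ε hε).imp fun K hK M => ?_)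
      fun ε hε => (hup ε hε).imp fun K hK M => ?_
    · rw [show K + (-l + ε) * M = K - (l - ε) * M by ring]
      exact hK M ω (.inl rfl)
    · rw [neg_neg, show K - (-l - ε) * M = K + (l + ε) * M by ring]
      exact hK M _ (.inr (hback M))

section Splitting

variable {Ω M : Type*} [NormedRing M] {T : Equiv.Perm Ω} {Φ : ℤ → Ω → M}

theorem IsLinearCocycle.splitsAt_single (hΦ : IsLinearCocycle T Φ) {l : ℝ} {ω : Ω}
    (hrate : HasRate (Φ · ω) l) (hrate' : HasRate (fun k => Φ (-k) ((T ^ k) ω)) (-l)) :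
    SplitsAt T Φ {l} (Pi.single l (Φ 0)) ω where
  sum_eq := by rw [Finset.sum_singleton, Pi.single_eq_same]
  eq_zero l' hl' := by rw [Pi.single_eq_of_ne (Finset.notMem_singleton.1 hl'), Pi.zero_apply]
  mul_self l' := by
    rcases eq_or_ne l' l with rfl | hne
    · rw [Pi.single_eq_same, hΦ.zero_mul_zero]
    · rw [Pi.single_eq_of_ne hne, Pi.zero_apply, mul_zero]
  mul_of_ne l₁ l₂ hne := by
    rcases eq_or_ne l₁ l with rfl | hne₁
    · rw [Pi.single_eq_of_ne hne.symm, Pi.zero_apply, mul_zero]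
    · rw [Pi.single_eq_of_ne hne₁, Pi.zero_apply, zero_mul]
  comm l' n := by
    rcases eq_or_ne l' l with rfl | hne
    · rw [Pi.single_eq_same, hΦ.apply_mul_zero, hΦ.zero_mul_apply]
    · rw [Pi.single_eq_of_ne hne, Pi.zero_apply, Pi.zero_apply, mul_zero, zero_mul]
  rate l' := by
    rcases eq_or_ne l' l with rfl | hne
    · simpa only [Pi.single_eq_same, hΦ.apply_mul_zero] using hrate
    · simpa only [Pi.single_eq_of_ne hne, Pi.zero_apply, mul_zero] using HasRate.zero
  rate_inv l' := by
    rcases eq_or_ne l' l with rfl | hne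
    · simpa only [Pi.single_eq_same, hΦ.zero_mul_neg] using hrate'
    · simpa only [Pi.single_eq_of_ne hne, Pi.zero_apply, zero_mul] using HasRate.zero

theorem IsLinearCocycle.isOseledetsRegular_of_hasRate [MeasurableSpace Ω] [MeasurableSpace M]
    {μ : Measure Ω} (hΦ : IsLinearCocycle T Φ) (hm : Measurable (Φ 0)) {l : ℝ}
    (h : ∀ᵐ ω ∂μ, HasRate (Φ · ω) l ∧ HasRate (fun k => Φ (-k) ((T ^ k) ω)) (-l)) :
    IsOseledetsRegular T μ Φ := by
  refine ⟨{l}, Pi.single l (Φ 0), fun l' => ?_, h.mono fun ω hω => hΦ.splitsAt_single hω.1 hω.2⟩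
  rcases eq_or_ne l' l with rfl | hne
  · rwa [Pi.single_eq_same]
  · rw [Pi.single_eq_of_ne hne]
    exact measurable_const

theorem IsLinearCocycle.hasRate_of_zero_eq_zero (hΦ : IsLinearCocycle T Φ) {ω : Ω}
    (h0 : Φ 0 ω = 0) (l : ℝ) :
    HasRate (Φ · ω) l ∧ HasRate (fun k => Φ (-k) ((T ^ k) ω)) (-l) := by
  have hfwd (k : ℤ) : Φ k ω = 0 := by rw [← hΦ.apply_mul_zero, h0, mul_zero]
  have hbwd (k : ℤ) : Φ (-k) ((T ^ k) ω) = 0 := by rw [← hΦ.zero_mul_neg, h0, zero_mul]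
  simpa only [hfwd, hbwd] using And.intro HasRate.zero HasRate.zero

end Splitting

variable {Ω : Type*} [MeasurableSpace Ω] {μ : Measure Ω} [IsProbabilityMeasure μ]

theorem ae_exists_le_exp_of_submultiplicative {T : Ω → Ω} (hT : Ergodic T μ) {X : ℕ → Ω → ℝ}
    (hX : ∀ n ω, 0 ≤ X n ω) (h0 : ∀ ω, X 0 ω ≤ 1)
    (hadd : ∀ n ω, X (n + 1) ω ≤ X 1 (T^[n] ω) * X n ω)
    (hint : Integrable (fun ω => Real.posLog (X 1 ω)) μ) :
    ∃ a : ℝ, ∀ᵐ ω ∂μ, ∃ b : ℝ, ∀ n : ℕ, X n ω ≤ Real.exp (a * n + b) := by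
  refine ⟨∫ ω, Real.posLog (X 1 ω) ∂μ + 1, ?_⟩
  have hsum (n : ℕ) (ω : Ω) :
      X n ω ≤ Real.exp (birkhoffSum T (fun ω => Real.posLog (X 1 ω)) n ω) := by
    induction n with
    | zero => simpa using h0 ω
    | succ n ih =>
      rw [birkhoffSum_succ, Real.exp_add, mul_comm]
      exact (hadd n ω).trans (mul_le_mul (le_exp_posLog _) ih (hX n ω) (Real.exp_nonneg _))
  filter_upwards [ae_exists_birkhoffSum_le hT hint (lt_add_one _)] with ω ⟨b, hb⟩
  exact ⟨b, fun n => (hsum n ω).trans (Real.exp_le_exp.2 (hb n))⟩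

variable {E : Type*} [NormedAddCommGroup E] [InnerProductSpace ℝ E] [FiniteDimensional ℝ E]
  {T : Equiv.Perm Ω} {Φ : ℤ → Ω → E →L[ℝ] E}

namespace IsIntegrableCocycle

theorem exists_ae_slowProjection_eq (hΦ : IsIntegrableCocycle T μ Φ) (hT : Ergodic T μ) :
    ∃ c, ∀ᵐ ω ∂μ, slowProjection Φ c ω = Φ 0 ω := by
  obtain ⟨c, hc⟩ := ae_exists_le_exp_of_submultiplicative hT (X := fun n ω => ‖Φ n ω‖)
    (fun n ω => norm_nonneg _) (fun ω => (hΦ.isStarProjection ω).norm_le)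
    (fun n ω => by
      rw [perm_iterate_eq_zpow, Nat.cast_succ, add_comm, hΦ.apply_add]
      exact norm_mul_le _ _) hΦ.integrable_one
  refine ⟨c, hc.mono fun ω ⟨b, hb⟩ => ?_⟩
  ext1 v
  have hslow : Φ 0 ω v ∈ slowSubmodule Φ c ω := by
    refine mem_slowSubmodule.2 ⟨congr($(hΦ.zero_mul_zero ω) v), Real.exp b * ‖Φ 0 ω v‖,
      fun n => ((Φ n ω).le_of_opNorm_le (hb n) _).trans_eq ?_⟩
    rw [Real.exp_add]
    ring_nf
  rw [← slowProjection_apply_eq_self hslow]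
  exact congr($(((hΦ.isInvariantField_slowProjection c).isInvariantProjection hΦ).proj_mul_zero ω)
    v).symm

theorem bddBelow_setOf_ae_slowProjection_eq (hΦ : IsIntegrableCocycle T μ Φ) (hT : Ergodic T μ)
    (h0 : ∀ᵐ ω ∂μ, Φ 0 ω ≠ 0) : BddBelow {c | ∀ᵐ ω ∂μ, slowProjection Φ c ω = Φ 0 ω} := by
  obtain ⟨a, ha⟩ := ae_exists_le_exp_of_submultiplicative hT
    (X := fun n ω => ‖Φ (-n) ((T ^ (n : ℤ)) ω)‖) (fun n ω => norm_nonneg _)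
    (fun ω => by simpa using (hΦ.isStarProjection ω).norm_le)
    (fun n ω => by
      rw [perm_iterate_eq_zpow, Nat.cast_succ, add_comm, hΦ.neg_add_apply, mul_comm]
      exact norm_mul_le _ _)
    (hT.toMeasurePreserving.integrable_comp_of_integrable hΦ.integrable_neg_one)
  refine ⟨-a, fun c hc => ?_⟩
  obtain ⟨ω, hω, ⟨b, hb⟩, hslow⟩ := (h0.and (ha.and hc)).exists
  obtain ⟨v, hv⟩ := DFunLike.ne_iff.1 hω
  obtain ⟨hfix, C, hC⟩ :=
    mem_slowSubmodule.1 (hslow ▸ slowProjection_apply_mem (Φ := Φ) c ω v)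
  have hle (n : ℕ) : ‖Φ 0 ω v‖ ≤ Real.exp b * C * Real.exp ((a + c) * n) :=
    calc ‖Φ 0 ω v‖ ≤ ‖Φ (-n) ((T ^ (n : ℤ)) ω)‖ * ‖Φ n ω (Φ 0 ω v)‖ := by
          simpa only [hfix] using hΦ.norm_zero_apply_le n ω (Φ 0 ω v)
      _ ≤ Real.exp (a * n + b) * (C * Real.exp (n * c)) := by
          gcongr
          exacts [hb n, hC n]
      _ = Real.exp b * C * Real.exp ((a + c) * n) := by
          rw [Real.exp_add, add_mul, Real.exp_add]
          ring_nf
  by_contra! hlt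
  have hlim : Tendsto (fun n : ℕ => Real.exp b * C * Real.exp ((a + c) * n)) atTop (𝓝 0) := by
    simpa using (Real.tendsto_exp_atBot.comp (tendsto_natCast_atTop_atTop.const_mul_atTop_of_neg
      (show a + c < 0 by linarith))).const_mul (Real.exp b * C)
  exact hv (norm_le_zero_iff.1 (ge_of_tendsto' hlim hle))

theorem exists_ae_hasRate (hΦ : IsIntegrableCocycle T μ Φ) (hT : Ergodic T μ)
    (hT' : Ergodic ⇑T⁻¹ μ) (h0 : ∀ᵐ ω ∂μ, Φ 0 ω ≠ 0)
    (hslow : ∀ c, (∀ᵐ ω ∂μ, slowProjection Φ c ω = 0) ∨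
      ∀ᵐ ω ∂μ, slowProjection Φ c ω = Φ 0 ω) :
    ∃ l, ∀ᵐ ω ∂μ, HasRate (Φ · ω) l ∧ HasRate (fun k => Φ (-k) ((T ^ k) ω)) (-l) := by
  let U : Set ℝ := {c | ∀ᵐ ω ∂μ, slowProjection Φ c ω = Φ 0 ω}
  have hup : ∀ᵐ ω ∂μ, ∀ ε > 0, ∃ K : ℝ, ∀ (M : ℕ) (ω₀ : Ω), ω₀ = ω ∨ (T ^ (M : ℤ)) ω₀ = ω →
      ‖Φ M ω₀‖ ≤ Real.exp (K + (sInf U + ε) * M) := by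
    refine ae_forall_pos_of_monotone (fun ω ε ε' hε ⟨K, hK⟩ => ⟨K, fun M ω₀ hω₀ =>
      (hK M ω₀ hω₀).trans (by gcongr)⟩) fun ε hε => ?_
    obtain ⟨c, hcU, hc⟩ :=
      exists_lt_of_csInf_lt (hΦ.exists_ae_slowProjection_eq hT) (lt_add_of_pos_right (sInf U) hε)
    exact hΦ.ae_exists_norm_le hT hT' hc hcU
  have hdown : ∀ᵐ ω ∂μ, ∀ ε > 0, ∃ K : ℝ, ∀ (M : ℕ) (ω₀ : Ω), ω₀ = ω ∨ (T ^ (M : ℤ)) ω₀ = ω →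
      ‖Φ (-M) ((T ^ (M : ℤ)) ω₀)‖ ≤ Real.exp (K - (sInf U - ε) * M) := by
    refine ae_forall_pos_of_monotone (fun ω ε ε' hε ⟨K, hK⟩ => ⟨K, fun M ω₀ hω₀ =>
      (hK M ω₀ hω₀).trans (by gcongr)⟩) fun ε hε => ?_
    have hnotMem : sInf U - ε / 2 ∉ U :=
      notMem_of_lt_csInf (sub_lt_self _ (half_pos hε))
        (hΦ.bddBelow_setOf_ae_slowProjection_eq hT h0)
    exact hΦ.ae_exists_norm_neg_le hT hT' (by linarith) ((hslow _).resolve_right hnotMem)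
  refine ⟨sInf U, ?_⟩
  filter_upwards [hup, hdown] with ω hupω hdownω
  exact hasRate_of_segment_bounds hupω hdownω

end IsIntegrableCocycle

end SingleExponent

section Regularity

theorem finrank_range_lt_of_mul_eq {K V : Type*} [DivisionRing K] [AddCommGroup V] [Module K V]
    [FiniteDimensional K V] {p q : Module.End K V} (hq : q * q = q) (hpq : p * q = q)
    (hqp : q * p = q) (hne : q ≠ p) : Module.finrank K q.range < Module.finrank K p.range := by
  refine Submodule.finrank_lt_finrank_of_lt (lt_of_le_of_ne ?_ fun heq => hne ?_)
  · rintro _ ⟨v, rfl⟩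
    exact ⟨q v, congr($hpq v)⟩
  · ext v
    obtain ⟨w, hw⟩ : p v ∈ q.range := heq ▸ ⟨v, rfl⟩
    calc q v = q (p v) := congr($hqp v).symm
      _ = q w := by rw [← hw]; exact congr($hq w)
      _ = p v := hw

namespace IsInvariantProjection

variable {Ω M : Type*} [Ring M] {T : Equiv.Perm Ω} {Φ : ℤ → Ω → M} {R : Ω → M}

theorem eq_zero_of_zpow (hR : IsInvariantProjection T Φ R) (hΦ : IsLinearCocycle T Φ) (n : ℤ)
    (ω : Ω) (h0 : R ((T ^ n) ω) = 0) : R ω = 0 :=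
  calc R ω = Φ (-n) ((T ^ n) ω) * (Φ n ω * R ω) := by
        rw [← mul_assoc, hΦ.neg_mul_apply, hR.zero_mul_proj]
    _ = 0 := by rw [← hR.invariant, h0, zero_mul, mul_zero]

theorem eq_zero_cocycle_of_zpow (hR : IsInvariantProjection T Φ R) (hΦ : IsLinearCocycle T Φ)
    (n : ℤ) (ω : Ω) (h0 : R ((T ^ n) ω) = Φ 0 ((T ^ n) ω)) : R ω = Φ 0 ω :=
  calc R ω = R ω * (Φ (-n) ((T ^ n) ω) * R ((T ^ n) ω)) * Φ n ω := by
        rw [h0, hΦ.apply_mul_zero, mul_assoc, hΦ.neg_mul_apply, hR.proj_mul_zero]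
    _ = Φ 0 ω := by rw [hR.invariant_neg, h0, hΦ.apply_mul_zero, hΦ.neg_mul_apply]

end IsInvariantProjection

variable {Ω : Type*} [MeasurableSpace Ω] {μ : Measure Ω} {T : Equiv.Perm Ω}

theorem ae_or_ae_not_of_forall_zpow (hT : Ergodic T μ) {p : Ω → Prop}
    (hp : MeasurableSet {ω | p ω}) (h : ∀ (n : ℤ) ω, p ((T ^ n) ω) → p ω) :
    (∀ᵐ ω ∂μ, p ω) ∨ ∀ᵐ ω ∂μ, ¬ p ω :=
  hT.ae_mem_or_ae_notMem hp (by
    ext ω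
    refine ⟨h 1 ω, fun hω => h (-1) (T ω) ?_⟩
    rwa [zpow_neg_one, show T⁻¹ (T ω) = ω from T.symm_apply_apply ω])

variable {E : Type*} [NormedAddCommGroup E] [InnerProductSpace ℝ E] [FiniteDimensional ℝ E]
  {Φ : ℤ → Ω → E →L[ℝ] E}

namespace IsIntegrableCocycle

theorem isInvariantField_zero (hΦ : IsIntegrableCocycle T μ Φ) : IsInvariantField T Φ (Φ 0) where
  measurable := hΦ.measurable 0
  mul_self := hΦ.zero_mul_zero
  isSelfAdjoint := hΦ.isSelfAdjoint
  zero_mul_proj := hΦ.zero_mul_zero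
  invariant n ω := by rw [hΦ.apply_mul_zero, hΦ.zero_mul_apply]

theorem ae_eq_zero_or_ae_ne_zero {R : Ω → E →L[ℝ] E} (hΦ : IsIntegrableCocycle T μ Φ)
    (hT : Ergodic T μ) (hR : IsInvariantField T Φ R) :
    (∀ᵐ ω ∂μ, R ω = 0) ∨ ∀ᵐ ω ∂μ, R ω ≠ 0 :=
  ae_or_ae_not_of_forall_zpow hT (hR.measurable (measurableSet_singleton 0))
    ((hR.isInvariantProjection hΦ).eq_zero_of_zpow hΦ.toIsLinearCocycle)

theorem ae_eq_or_ae_ne {R : Ω → E →L[ℝ] E} (hΦ : IsIntegrableCocycle T μ Φ)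
    (hT : Ergodic T μ) (hR : IsInvariantField T Φ R) :
    (∀ᵐ ω ∂μ, R ω = Φ 0 ω) ∨ ∀ᵐ ω ∂μ, R ω ≠ Φ 0 ω :=
  ae_or_ae_not_of_forall_zpow hT (measurableSet_eq_fun hR.measurable (hΦ.measurable 0))
    ((hR.isInvariantProjection hΦ).eq_zero_cocycle_of_zpow hΦ.toIsLinearCocycle)

variable [IsProbabilityMeasure μ]

theorem isOseledetsRegular_of_forall_slowProjection (hΦ : IsIntegrableCocycle T μ Φ)
    (hT : Ergodic T μ) (hT' : Ergodic ⇑T⁻¹ μ)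
    (hslow : ∀ c, (∀ᵐ ω ∂μ, slowProjection Φ c ω = 0) ∨
      ∀ᵐ ω ∂μ, slowProjection Φ c ω = Φ 0 ω) :
    IsOseledetsRegular T μ Φ := by
  obtain ⟨l, hl⟩ :
      ∃ l, ∀ᵐ ω ∂μ, HasRate (Φ · ω) l ∧ HasRate (fun k => Φ (-k) ((T ^ k) ω)) (-l) := by
    rcases hΦ.ae_eq_zero_or_ae_ne_zero hT hΦ.isInvariantField_zero with h0 | h0
    · exact ⟨0, h0.mono fun ω hω => hΦ.hasRate_of_zero_eq_zero hω 0⟩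
    · exact hΦ.exists_ae_hasRate hT hT' h0 hslow
  exact hΦ.isOseledetsRegular_of_hasRate (hΦ.measurable 0) hl

/- Induction on the rank: a slow projection that is neither zero nor everything splits the cocycle
into a restriction and a quotient of smaller rank. -/
theorem isOseledetsRegular_of_finrank_lt (hT : Ergodic T μ) (hT' : Ergodic ⇑T⁻¹ μ) (r : ℕ)
    (hΦ : IsIntegrableCocycle T μ Φ)
    (hr : ∀ᵐ ω ∂μ, Module.finrank ℝ (Φ 0 ω : Module.End ℝ E).range < r) :
    IsOseledetsRegular T μ Φ := by
  induction r generalizing Φ with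
  | zero => exact absurd hr.exists.choose_spec (Nat.not_lt_zero _)
  | succ r ih =>
    by_cases hslow : ∀ c, (∀ᵐ ω ∂μ, slowProjection Φ c ω = 0) ∨
        ∀ᵐ ω ∂μ, slowProjection Φ c ω = Φ 0 ω
    · exact hΦ.isOseledetsRegular_of_forall_slowProjection hT hT' hslow
    simp only [not_forall, not_or] at hslow
    obtain ⟨c, hbot, htop⟩ := hslow
    have hR := hΦ.isInvariantField_slowProjection c
    have hproj := hR.isInvariantProjection hΦ
    have hsmaller {q : Ω → E →L[ℝ] E} (hq : ∀ ω, q ω * q ω = q ω)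
        (hpq : ∀ ω, Φ 0 ω * q ω = q ω) (hqp : ∀ ω, q ω * Φ 0 ω = q ω)
        (hne : ∀ᵐ ω ∂μ, q ω ≠ Φ 0 ω) :
        ∀ᵐ ω ∂μ, Module.finrank ℝ (q ω : Module.End ℝ E).range < r := by
      filter_upwards [hr, hne] with ω hrω hneω
      exact (finrank_range_lt_of_mul_eq congr(($(hq ω)).toLinearMap)
        congr(($(hpq ω)).toLinearMap) congr(($(hqp ω)).toLinearMap)
        (ContinuousLinearMap.coe_injective.ne hneω)).trans_le (Nat.lt_succ_iff.1 hrω)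
    refine hR.isOseledetsRegular hΦ hT hT' (ih (hR.isIntegrableCocycle_restrictCocycle hΦ) ?_)
      (ih (hR.isIntegrableCocycle_quotientCocycle hΦ hT.toMeasurePreserving
        hT'.toMeasurePreserving) ?_)
    · rw [show restrictCocycle Φ (slowProjection Φ c) 0 = _ from
        funext hproj.restrictCocycle_zero]
      exact hsmaller hproj.mul_self hproj.zero_mul_proj hproj.proj_mul_zero
        ((hΦ.ae_eq_or_ae_ne hT hR).resolve_left htop)
    · rw [show quotientCocycle T Φ (slowProjection Φ c) 0 = _ from
        funext (hproj.quotientCocycle_zero hΦ.toIsLinearCocycle)]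
      refine hsmaller (hproj.compl_mul_self hΦ.toIsLinearCocycle)
        (fun ω => by rw [mul_sub, hΦ.zero_mul_zero, hproj.zero_mul_proj])
        (hproj.compl_mul_zero hΦ.toIsLinearCocycle)
        (((hΦ.ae_eq_zero_or_ae_ne_zero hT hR).resolve_left hbot).mono fun ω hω => ?_)
      rwa [Ne, sub_eq_self]

theorem isOseledetsRegular (hΦ : IsIntegrableCocycle T μ Φ) (hT : Ergodic T μ)
    (hT' : Ergodic ⇑T⁻¹ μ) : IsOseledetsRegular T μ Φ :=
  isOseledetsRegular_of_finrank_lt hT hT' (Module.finrank ℝ E + 1) hΦ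
    (Eventually.of_forall fun _ => Nat.lt_succ_of_le (Submodule.finrank_le _))

end IsIntegrableCocycle

end Regularity

section LyapunovExponents

theorem tendsto_div_natCast_of_abs_sub_le {u : ℕ → ℝ} {a : ℝ}
    (h : ∀ ε > 0, ∃ K : ℝ, ∀ n : ℕ, |u n - a * n| ≤ K + ε * n) :
    Tendsto (fun n : ℕ => u n / n) atTop (𝓝 a) := by
  rw [Metric.tendsto_atTop']
  intro ε hε
  obtain ⟨K, hK⟩ := h (ε / 2) (half_pos hε)
  obtain ⟨N, hN⟩ := exists_nat_gt (K / (ε / 2))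
  refine ⟨N, fun n hn => ?_⟩
  have hNn : (N : ℝ) < n := by exact_mod_cast hn
  have hn0 : (0 : ℝ) < n := N.cast_nonneg.trans_lt hNn
  have hKn : K < ε / 2 * n := (div_lt_iff₀' (half_pos hε)).1 (hN.trans hNn)
  rw [Real.dist_eq, div_sub' hn0.ne', abs_div, abs_of_pos hn0, div_lt_iff₀ hn0, mul_comm (n : ℝ)]
  linarith [hK n]

theorem HasRate.tendsto_log_norm_div {V W : Type*} [NormedAddCommGroup V] [NormedAddCommGroup W]
    {u : ℤ → V} {w : ℤ → W} {a c : ℝ} (hu : HasRate u a) (hw : HasRate w (-a)) (hc : 0 < c)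
    (hwu : ∀ k, c ≤ ‖w k‖ * ‖u k‖) :
    Tendsto (fun n : ℕ => Real.log ‖u n‖ / n) atTop (𝓝 a) := by
  refine tendsto_div_natCast_of_abs_sub_le fun ε hε => ?_
  obtain ⟨K, hK⟩ := hu ε hε
  obtain ⟨K', hK'⟩ := hw ε hε
  have hpos (k : ℤ) : 0 < ‖w k‖ ∧ 0 < ‖u k‖ :=
    (pos_and_pos_or_neg_and_neg_of_mul_pos (hc.trans_le (hwu k))).resolve_right
      fun h => h.1.not_ge (norm_nonneg _)
  have hlog {x C b : ℝ} (hx : 0 < x) (h : x ≤ C * Real.exp b) : Real.log x ≤ Real.log C + b := by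
    have hC : 0 < C := pos_of_mul_pos_left (hx.trans_le h) (Real.exp_nonneg b)
    calc Real.log x ≤ Real.log (C * Real.exp b) := Real.log_le_log hx h
      _ = Real.log C + b := by rw [Real.log_mul hC.ne' (Real.exp_ne_zero b), Real.log_exp]
  refine ⟨max (Real.log K) (Real.log K' - Real.log c), fun n => abs_sub_le_iff.2 ⟨?_, ?_⟩⟩
  · have hle := hlog (hpos n).2 (hK n)
    rw [Int.cast_natCast, Nat.abs_cast] at hle
    linarith [le_max_left (Real.log K) (Real.log K' - Real.log c)]
  · have hle := hlog (hpos n).1 (hK' n)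
    have hcle := Real.log_le_log hc (hwu n)
    rw [Real.log_mul (hpos n).1.ne' (hpos n).2.ne'] at hcle
    rw [Int.cast_natCast, Nat.abs_cast] at hle
    linarith [le_max_right (Real.log K) (Real.log K' - Real.log c)]

end LyapunovExponents

section OseledetsSpaces

/-- The subspace of vectors fixed by an operator. The Oseledets spaces are the subspaces fixed by
the projections of a splitting; they agree with the ranges, but as equalizers they are visibly
measurable fields. -/
def fixedSubmodule {R V : Type*} [Semiring R] [AddCommMonoid V] [Module R V]
    (p : Module.End R V) : Submodule R V :=
  LinearMap.eqLocus p LinearMap.id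

theorem mem_fixedSubmodule {R V : Type*} [Semiring R] [AddCommMonoid V] [Module R V]
    {p : Module.End R V} {v : V} : v ∈ fixedSubmodule p ↔ p v = v := Iff.rfl

theorem measurableSet_fixedSubmodule {Ω E : Type*} [MeasurableSpace Ω] [NormedAddCommGroup E]
    [NormedSpace ℝ E] [FiniteDimensional ℝ E] [MeasurableSpace E] [BorelSpace E]
    {p : Ω → E →L[ℝ] E} (hp : Measurable p) :
    MeasurableSet {x : Ω × E | x.2 ∈ fixedSubmodule (p x.1 : Module.End ℝ E)} := by
  refine measurableSet_eq_fun ?_ measurable_snd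
  exact (isBoundedBilinearMap_apply (𝕜 := ℝ)).continuous.measurable.comp
    ((hp.comp measurable_fst).prodMk measurable_snd)

namespace SplitsAt

section NormedRing

variable {Ω M : Type*} [NormedRing M] {T : Equiv.Perm Ω} {Φ : ℤ → Ω → M} {S S' : Finset ℝ}
  {pr : ℝ → Ω → M} {ω : Ω}

theorem nonempty (h : SplitsAt T Φ S pr ω) (h0 : Φ 0 ω ≠ 0) : S.Nonempty := by
  rw [← h.sum_eq] at h0
  exact Finset.nonempty_of_sum_ne_zero h0

theorem of_subset (h : SplitsAt T Φ S pr ω) (hsub : S' ⊆ S)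
    (hzero : ∀ l ∈ S, l ∉ S' → pr l ω = 0) : SplitsAt T Φ S' pr ω where
  __ := h
  sum_eq := by rw [← h.sum_eq, Finset.sum_subset hsub hzero]
  eq_zero l hl := by
    by_cases hlS : l ∈ S
    exacts [hzero l hlS hl, h.eq_zero l hlS]

theorem eq_zero_iff (h : SplitsAt T Φ S pr ω) (h' : SplitsAt T Φ S pr (T ω))
    (hΦ : IsLinearCocycle T Φ) (l : ℝ) : pr l (T ω) = 0 ↔ pr l ω = 0 := by
  constructor <;> intro h0
  · calc pr l ω = Φ (-1) ((T ^ (1 : ℤ)) ω) * (Φ 1 ω * pr l ω) := by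
          rw [← mul_assoc, hΦ.neg_mul_apply, h.zero_mul_proj]
      _ = 0 := by rw [h.comm, zpow_one, h0, zero_mul, mul_zero]
  · calc pr l (T ω) = Φ 1 ω * pr l ω * Φ (-1) ((T ^ (1 : ℤ)) ω) :=
          (h.apply_mul_proj_mul_neg (n := 1) h' hΦ l).symm
      _ = 0 := by rw [h0, mul_zero, zero_mul]

end NormedRing

section Operators

variable {Ω E : Type*} [NormedAddCommGroup E] [NormedSpace ℝ E] {T : Equiv.Perm Ω}
  {Φ : ℤ → Ω → E →L[ℝ] E} {S : Finset ℝ} {pr : ℝ → Ω → E →L[ℝ] E} {ω : Ω}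

theorem apply_mem_fixedSubmodule (h : SplitsAt T Φ S pr ω) (l : ℝ) (v : E) :
    pr l ω v ∈ fixedSubmodule (pr l ω : Module.End ℝ E) :=
  mem_fixedSubmodule.2 congr($(h.mul_self l) v)

theorem fixedSubmodule_ne_bot (h : SplitsAt T Φ S pr ω) {l : ℝ} (hl : pr l ω ≠ 0) :
    fixedSubmodule (pr l ω : Module.End ℝ E) ≠ ⊥ := fun hbot =>
  hl <| ContinuousLinearMap.ext fun v =>
    (Submodule.mem_bot ℝ).1 (hbot ▸ h.apply_mem_fixedSubmodule l v)

theorem iSup_fixedSubmodule_eq_top (h : SplitsAt T Φ S pr ω) (h0 : Φ 0 ω = 1) {ι : Type*}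
    {lam : ι → ℝ} (hlam : Set.range lam = S) :
    ⨆ i, fixedSubmodule (pr (lam i) ω : Module.End ℝ E) = ⊤ := by
  refine eq_top_iff.2 fun v _ => ?_
  have hv : ∑ l ∈ S, pr l ω v = v := by
    rw [← sum_apply, h.sum_eq, h0, one_apply_eq_self]
  rw [← hv]
  refine Submodule.sum_mem _ fun l hl => ?_
  obtain ⟨i, rfl⟩ : l ∈ Set.range lam := hlam ▸ hl
  exact Submodule.mem_iSup_of_mem i (h.apply_mem_fixedSubmodule _ v)

theorem iSupIndep_fixedSubmodule (h : SplitsAt T Φ S pr ω) :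
    iSupIndep fun l => fixedSubmodule (pr l ω : Module.End ℝ E) := fun l => by
  have hker : ⨆ l', ⨆ _ : l' ≠ l, fixedSubmodule (pr l' ω : Module.End ℝ E) ≤
      (pr l ω : Module.End ℝ E).ker := by
    refine iSup₂_le fun l' hne v hv => ?_
    rw [LinearMap.mem_ker, ← mem_fixedSubmodule.1 hv]
    exact congr($(h.mul_of_ne l l' hne.symm) v)
  exact Submodule.disjoint_def.2 fun v hv hsup => (mem_fixedSubmodule.1 hv).symm.trans (hker hsup)

theorem map_fixedSubmodule (h : SplitsAt T Φ S pr ω) (h' : SplitsAt T Φ S pr (T ω))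
    (hΦ : IsLinearCocycle T Φ) (l : ℝ) :
    (fixedSubmodule (pr l ω : Module.End ℝ E)).map (Φ 1 ω : Module.End ℝ E) =
      fixedSubmodule (pr l (T ω) : Module.End ℝ E) := by
  have hcomm (v : E) : Φ 1 ω (pr l ω v) = pr l (T ω) (Φ 1 ω v) := congr($(h.comm l 1) v)
  have hinv (w : E) : Φ 1 ω (pr l ω (Φ (-1) (T ω) w)) = pr l (T ω) w :=
    congr($(h.apply_mul_proj_mul_neg (n := 1) h' hΦ l) w)
  ext w
  constructor
  · rintro ⟨v, hv, rfl⟩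
    exact (hcomm v).symm.trans congr(Φ 1 ω $(mem_fixedSubmodule.1 hv))
  · exact fun hw => ⟨pr l ω (Φ (-1) (T ω) w), h.apply_mem_fixedSubmodule l _, (hinv w).trans hw⟩

theorem tendsto_log_norm_div (h : SplitsAt T Φ S pr ω) (hΦ : IsLinearCocycle T Φ) {l : ℝ} {v : E}
    (hv : v ∈ fixedSubmodule (pr l ω : Module.End ℝ E)) (hv0 : v ≠ 0) :
    Tendsto (fun n : ℕ => Real.log ‖Φ n ω v‖ / n) atTop (𝓝 l) ∧
      Tendsto (fun n : ℕ => Real.log ‖Φ (-n) ω v‖ / n) atTop (𝓝 (-l)) := by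
  have hfix : pr l ω v = v := hv
  have hrate : HasRate (fun k => Φ k ω v) l := fun ε hε => by
    obtain ⟨K, hK⟩ := h.rate l ε hε
    refine ⟨K * ‖v‖, fun k => ?_⟩
    have hle := (Φ k ω * pr l ω).le_of_opNorm_le (hK k) v
    rwa [mul_apply_eq_comp, hfix, mul_right_comm] at hle
  have hle (k : ℤ) : ‖v‖ ≤ ‖pr l ω * Φ (-k) ((T ^ k) ω)‖ * ‖Φ k ω v‖ :=
    calc ‖v‖ = ‖(pr l ω * Φ (-k) ((T ^ k) ω)) (Φ k ω v)‖ := by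
          rw [← mul_apply_eq_comp, mul_assoc, hΦ.neg_mul_apply, h.proj_mul_zero, hfix]
      _ ≤ _ := ContinuousLinearMap.le_opNorm _ _
  exact ⟨hrate.tendsto_log_norm_div (h.rate_inv l) (norm_pos_iff.2 hv0) hle,
    hrate.comp_neg.tendsto_log_norm_div (h.rate_inv l).comp_neg (norm_pos_iff.2 hv0)
      fun k => hle (-k)⟩

end Operators

end SplitsAt

theorem IsOseledetsRegular.exists_splitting_ne_zero {Ω M : Type*} [MeasurableSpace Ω]
    [NormedRing M] [MeasurableSpace M] [MeasurableSingletonClass M] {μ : Measure Ω}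
    {T : Equiv.Perm Ω} {Φ : ℤ → Ω → M} (hreg : IsOseledetsRegular T μ Φ)
    (hΦ : IsLinearCocycle T Φ) (hT : Ergodic T μ) :
    ∃ (S : Finset ℝ) (pr : ℝ → Ω → M), (∀ l, Measurable (pr l)) ∧
      (∀ᵐ ω ∂μ, SplitsAt T Φ S pr ω) ∧ ∀ᵐ ω ∂μ, ∀ l ∈ S, pr l ω ≠ 0 := by
  classical
  obtain ⟨S, pr, hpr, hsplit⟩ := hreg
  have hzeroOne (l : ℝ) : (∀ᵐ ω ∂μ, pr l ω = 0) ∨ ∀ᵐ ω ∂μ, pr l ω ≠ 0 := by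
    refine hT.quasiErgodic.ae_mem_or_ae_notMem₀ (s := {ω | pr l ω = 0})
      (hpr l (measurableSet_singleton 0)).nullMeasurableSet ?_
    filter_upwards [hsplit, hT.quasiMeasurePreserving.ae hsplit] with ω hω hω'
    exact propext (hω.eq_zero_iff hω' hΦ l)
  refine ⟨S.filter fun l => ∀ᵐ ω ∂μ, pr l ω ≠ 0, pr, hpr, ?_,
    (Finset.eventually_all _).2 fun l hl => (Finset.mem_filter.1 hl).2⟩
  have hvanish : ∀ᵐ ω ∂μ, ∀ l ∈ S, l ∉ S.filter (fun l => ∀ᵐ ω ∂μ, pr l ω ≠ 0) → pr l ω = 0 := by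
    refine (Finset.eventually_all _).2 fun l hl => ?_
    rcases hzeroOne l with h0 | h0
    · exact h0.mono fun ω hω _ => hω
    · exact .of_forall fun ω hnot => absurd (Finset.mem_filter.2 ⟨hl, h0⟩) hnot
  filter_upwards [hsplit, hvanish] with ω hω hω'
  exact hω.of_subset (Finset.filter_subset _ _) hω'

theorem exists_strictAnti_range_eq {α : Type*} [LinearOrder α] (S : Finset α) :
    ∃ f : Fin S.card → α, StrictAnti f ∧ Set.range f = S :=
  ⟨fun i => S.orderEmbOfFin rfl i.rev, fun _ _ hij =>
    (S.orderEmbOfFin rfl).strictMono (Fin.rev_lt_rev.2 hij),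
    (Fin.rev_surjective.range_comp _).trans (S.range_orderEmbOfFin rfl)⟩

end OseledetsSpaces

section GroupCocycles

variable {Ω G : Type*} [Group G]

/-- The skew product over `T` whose fibre maps are the left multiplications by `A`. -/
def cocyclePerm (T : Equiv.Perm Ω) (A : Ω → G) : Equiv.Perm (Ω × G) where
  toFun p := (T p.1, A p.1 * p.2)
  invFun p := (T⁻¹ p.1, (A (T⁻¹ p.1))⁻¹ * p.2)
  left_inv p := by simp
  right_inv p := by simp

/-- The two-sided iterates of the cocycle generated by `A` over `T`, read off from the powers of
the skew product. -/
def cocycleZPow (T : Equiv.Perm Ω) (A : Ω → G) (n : ℤ) (ω : Ω) : G :=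
  ((cocyclePerm T A ^ n) (ω, 1)).2

theorem cocyclePerm_zpow_apply (T : Equiv.Perm Ω) (A : Ω → G) (n : ℤ) (ω : Ω) (g : G) :
    (cocyclePerm T A ^ n) (ω, g) = ((T ^ n) ω, cocycleZPow T A n ω * g) := by
  unfold cocycleZPow
  induction n generalizing ω g with
  | zero => simp
  | succ n ih =>
    have hsucc (g : G) : (cocyclePerm T A ^ ((n : ℤ) + 1)) (ω, g) =
        (cocyclePerm T A ^ (n : ℤ)) (T ω, A ω * g) := by rw [zpow_add_one]; rfl
    rw [hsucc, hsucc, ih, ih (T ω) (A ω * 1), zpow_add_one, Equiv.Perm.mul_apply]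
    simp [mul_assoc]
  | pred n ih =>
    have hpred (g : G) : (cocyclePerm T A ^ (-(n : ℤ) - 1)) (ω, g) =
        (cocyclePerm T A ^ (-(n : ℤ))) (T⁻¹ ω, (A (T⁻¹ ω))⁻¹ * g) := by rw [zpow_sub_one]; rfl
    rw [hpred, hpred, ih, ih (T⁻¹ ω) ((A (T⁻¹ ω))⁻¹ * 1), zpow_sub_one, Equiv.Perm.mul_apply]
    simp [mul_assoc]

theorem cocycleZPow_add (T : Equiv.Perm Ω) (A : Ω → G) (m n : ℤ) (ω : Ω) :
    cocycleZPow T A (m + n) ω = cocycleZPow T A m ((T ^ n) ω) * cocycleZPow T A n ω :=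
  calc cocycleZPow T A (m + n) ω = ((cocyclePerm T A ^ m) ((cocyclePerm T A ^ n) (ω, 1))).2 := by
        rw [← perm_zpow_add_apply, cocycleZPow]
    _ = _ := by rw [cocyclePerm_zpow_apply T A n, cocyclePerm_zpow_apply, mul_one]

@[simp]
theorem cocycleZPow_zero (T : Equiv.Perm Ω) (A : Ω → G) (ω : Ω) : cocycleZPow T A 0 ω = 1 := by
  simp [cocycleZPow]

@[simp]
theorem cocycleZPow_one (T : Equiv.Perm Ω) (A : Ω → G) (ω : Ω) :
    cocycleZPow T A 1 ω = A ω := by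
  simp [cocycleZPow, cocyclePerm]

@[simp]
theorem cocycleZPow_neg_one (T : Equiv.Perm Ω) (A : Ω → G) (ω : Ω) :
    cocycleZPow T A (-1) ω = (A (T⁻¹ ω))⁻¹ := by
  have hcancel := cocycleZPow_add T A (-1) 1 (T⁻¹ ω)
  rw [neg_add_cancel, cocycleZPow_zero, zpow_one, cocycleZPow_one,
    show T (T⁻¹ ω) = ω from T.apply_symm_apply ω] at hcancel
  exact eq_inv_of_mul_eq_one_left hcancel.symm

end GroupCocycles

section MatrixCocycles

theorem IsLinearCocycle.measurable {Ω M : Type*} [MeasurableSpace Ω] [Ring M] [MeasurableSpace M]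
    [MeasurableMul₂ M] {T : Equiv.Perm Ω} {Φ : ℤ → Ω → M} (hΦ : IsLinearCocycle T Φ)
    (hT : Measurable T) (hT' : Measurable ⇑T⁻¹) (h0 : Measurable (Φ 0)) (h1 : Measurable (Φ 1))
    (h1' : Measurable (Φ (-1))) (n : ℤ) : Measurable (Φ n) := by
  induction n with
  | zero => exact h0
  | succ n ih =>
    rw [funext (hΦ.apply_add n 1), zpow_one]
    exact (ih.comp hT).mul h1
  | pred n ih =>
    rw [sub_eq_add_neg, funext (hΦ.apply_add (-n) (-1)), zpow_neg_one]
    exact (ih.comp hT').mul h1'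

variable {Ω : Type*} {d : ℕ} {T : Equiv.Perm Ω} {A : Ω → Matrix.GeneralLinearGroup (Fin d) ℝ}

theorem cocycIter_eq_cocycleZPow (n : ℕ) (ω : Ω) :
    cocycIter T (fun ω => (A ω : Matrix (Fin d) (Fin d) ℝ)) n ω = (cocycleZPow T A n ω).val := by
  induction n generalizing ω with
  | zero => simp [cocycIter]
  | succ n ih =>
    rw [cocycIter, ih, Nat.cast_succ, cocycleZPow_add, zpow_one, cocycleZPow_one, Units.val_mul]

theorem backCocycIter_eq_cocycleZPow (n : ℕ) (ω : Ω) :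
    backCocycIter ⇑T⁻¹ A n ω = (cocycleZPow T A (-n) ω).val := by
  induction n generalizing ω with
  | zero => simp [backCocycIter]
  | succ n ih =>
    rw [backCocycIter, ih, Nat.cast_succ, neg_add, cocycleZPow_add, zpow_neg_one,
      cocycleZPow_neg_one, Units.val_mul, Matrix.coe_units_inv]

/-- The two-sided iterates of a matrix cocycle as operators on Euclidean space. -/
noncomputable def euclideanCocycle (T : Equiv.Perm Ω) (A : Ω → Matrix.GeneralLinearGroup (Fin d) ℝ)
    (n : ℤ) (ω : Ω) : EuclideanSpace ℝ (Fin d) →L[ℝ] EuclideanSpace ℝ (Fin d) :=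
  Matrix.toEuclideanCLM (𝕜 := ℝ) (cocycleZPow T A n ω).val

theorem euclideanCocycle_zero : euclideanCocycle T A 0 = 1 := by
  funext ω
  simp [euclideanCocycle]

theorem euclideanCocycle_one :
    euclideanCocycle T A 1 = fun ω => Matrix.toEuclideanCLM (𝕜 := ℝ) (A ω).val := by
  funext ω
  rw [euclideanCocycle, cocycleZPow_one]

theorem euclideanCocycle_neg_one :
    euclideanCocycle T A (-1) =
      fun ω => Matrix.toEuclideanCLM (𝕜 := ℝ) (A (T⁻¹ ω) : Matrix (Fin d) (Fin d) ℝ)⁻¹ := by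
  funext ω
  rw [euclideanCocycle, cocycleZPow_neg_one, Matrix.coe_units_inv]

theorem isLinearCocycle_euclideanCocycle : IsLinearCocycle T (euclideanCocycle T A) where
  apply_add m n ω := by
    rw [euclideanCocycle, cocycleZPow_add, Units.val_mul, map_mul, euclideanCocycle,
      euclideanCocycle]

variable [MeasurableSpace Ω] {μ : Measure Ω}

theorem measurable_toEuclideanCLM {M : Ω → Matrix (Fin d) (Fin d) ℝ}
    (hM : ∀ i j, Measurable fun ω => M ω i j) :
    Measurable fun ω => Matrix.toEuclideanCLM (𝕜 := ℝ) (M ω) :=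
  measurable_of_forall_inner fun x y => by
    simp only [Matrix.inner_toEuclideanCLM, dotProduct, Matrix.mulVec]
    fun_prop

theorem measurable_matrix_inv_apply {M : Ω → Matrix (Fin d) (Fin d) ℝ}
    (hM : ∀ i j, Measurable fun ω => M ω i j) (i j : Fin d) :
    Measurable fun ω => (M ω)⁻¹ i j := by
  have hof : Measurable fun ω => (fun i j => M ω i j : Fin d → Fin d → ℝ) :=
    measurable_pi_lambda _ fun i => measurable_pi_lambda _ fun j => hM i j
  have hdet : Continuous fun m : Fin d → Fin d → ℝ => (Matrix.of m).det :=
    Continuous.matrix_det continuous_id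
  have hadj : Continuous fun m : Fin d → Fin d → ℝ => (Matrix.of m).adjugate i j :=
    (Continuous.matrix_adjugate continuous_id).matrix_elem i j
  simp only [Matrix.inv_def, Matrix.smul_apply, Ring.inverse_eq_inv', smul_eq_mul]
  exact (hdet.measurable.comp hof).inv.mul (hadj.measurable.comp hof)

theorem isIntegrableCocycle_euclideanCocycle (hT : MeasurePreserving T μ μ)
    (hT' : MeasurePreserving ⇑T⁻¹ μ μ)
    (hAmeas : ∀ i j, Measurable fun ω => (A ω : Matrix (Fin d) (Fin d) ℝ) i j)
    (hint : Integrable (fun ω =>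
      max (Real.log (matOpNorm (A ω : Matrix (Fin d) (Fin d) ℝ))) 0) μ)
    (hintInv : Integrable (fun ω =>
      max (Real.log (matOpNorm ((A ω)⁻¹ : Matrix (Fin d) (Fin d) ℝ))) 0) μ) :
    IsIntegrableCocycle T μ (euclideanCocycle T A) where
  __ := isLinearCocycle_euclideanCocycle
  measurable := by
    refine isLinearCocycle_euclideanCocycle.measurable hT.measurable hT'.measurable
      (by rw [euclideanCocycle_zero]; exact measurable_one)
      (by rw [euclideanCocycle_one]; exact measurable_toEuclideanCLM hAmeas) ?_
    rw [euclideanCocycle_neg_one]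
    exact (measurable_toEuclideanCLM (measurable_matrix_inv_apply hAmeas)).comp hT'.measurable
  isSelfAdjoint ω := by
    rw [euclideanCocycle_zero]
    exact .one _
  integrable_one := by
    rw [euclideanCocycle_one]
    exact hint.congr (.of_forall fun ω => max_comm _ _)
  integrable_neg_one := by
    rw [euclideanCocycle_neg_one]
    exact (hT'.integrable_comp_of_integrable hintInv).congr (.of_forall fun ω => max_comm _ _)

end MatrixCocycles

/-- **Oseledets theorem, invertible (two-sided) version.** -/
theorem oseledets_two_sided
    {Ω : Type*} [MeasurableSpace Ω] {μ : Measure Ω} [IsProbabilityMeasure μ]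
    {T : Ω → Ω} (hT : Ergodic T μ)
    (Tinv : Ω → Ω) (hTinvMeas : Measurable Tinv)
    (hinv₁ : ∀ ω, Tinv (T ω) = ω) (hinv₂ : ∀ ω, T (Tinv ω) = ω)
    {d : ℕ} (hd : 0 < d)
    (A : Ω → Matrix.GeneralLinearGroup (Fin d) ℝ)
    (hAmeas : ∀ i j, Measurable fun ω => (A ω : Matrix (Fin d) (Fin d) ℝ) i j)
    (hint : Integrable (fun ω =>
      max (Real.log (matOpNorm (A ω : Matrix (Fin d) (Fin d) ℝ))) 0) μ)
    (hintInv : Integrable (fun ω =>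
      max (Real.log (matOpNorm ((A ω)⁻¹ : Matrix (Fin d) (Fin d) ℝ))) 0) μ) :
    ∃ (k : ℕ), 1 ≤ k ∧
    ∃ (lam : Fin k → ℝ), StrictAnti lam ∧
    ∃ V : Fin k → Ω → Submodule ℝ (EuclideanSpace ℝ (Fin d)),
      (∀ i : Fin k,
        MeasurableSet {p : Ω × EuclideanSpace ℝ (Fin d) | p.2 ∈ V i p.1}) ∧
      ∀ᵐ ω ∂μ,
        (∀ i : Fin k, V i ω ≠ ⊥) ∧
        (⨆ i : Fin k, V i ω) = ⊤ ∧
        (∀ i : Fin k, V i ω ⊓ (⨆ j ∈ ({i}ᶜ : Set (Fin k)), V j ω) = ⊥) ∧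
        (∀ i : Fin k,
          (V i ω).map (Matrix.toEuclideanLin (A ω : Matrix (Fin d) (Fin d) ℝ)) = V i (T ω)) ∧
        (∀ i : Fin k, ∀ v ∈ V i ω, v ≠ 0 →
          Tendsto
            (fun N : ℕ =>
              Real.log ‖Matrix.toEuclideanLin (cocycIter T (fun ω' =>
                (A ω' : Matrix (Fin d) (Fin d) ℝ)) N ω) v‖ / (N : ℝ))
            atTop (𝓝 (lam i)) ∧
          Tendsto
            (fun N : ℕ =>
              Real.log ‖Matrix.toEuclideanLin (backCocycIter Tinv A N ω) v‖ / (N : ℝ))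
            atTop (𝓝 (-lam i))) := by
  let e : Ω ≃ᵐ Ω := ⟨⟨T, Tinv, hinv₁, hinv₂⟩, hT.measurable, hTinvMeas⟩
  have hT' : Ergodic Tinv μ := Ergodic.symm (e := e) hT
  obtain ⟨T, rfl, rfl⟩ : ∃ P : Equiv.Perm Ω, ⇑P = T ∧ ⇑P⁻¹ = Tinv := ⟨e.toEquiv, rfl, rfl⟩
  have hΦ := isIntegrableCocycle_euclideanCocycle hT.toMeasurePreserving hT'.toMeasurePreserving
    hAmeas hint hintInv
  obtain ⟨S, pr, hpr, hsplit, hne⟩ :=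
    (hΦ.isOseledetsRegular hT hT').exists_splitting_ne_zero hΦ.toIsLinearCocycle hT
  obtain ⟨lam, hanti, hrange⟩ := exists_strictAnti_range_eq S
  have hone (ω : Ω) : euclideanCocycle T A 0 ω = 1 := congrFun euclideanCocycle_zero ω
  have : NeZero d := ⟨hd.ne'⟩
  refine ⟨S.card, ?_, lam, hanti, fun i ω => fixedSubmodule (pr (lam i) ω : Module.End ℝ _),
    fun i => measurableSet_fixedSubmodule (hpr _), ?_⟩
  · obtain ⟨ω, hω⟩ := hsplit.exists
    exact (hω.nonempty (by rw [hone]; exact one_ne_zero)).card_pos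
  filter_upwards [hsplit, hT.quasiMeasurePreserving.ae hsplit, hne] with ω hω hTω hneω
  refine ⟨fun i => hω.fixedSubmodule_ne_bot (hneω _ ?_), hω.iSup_fixedSubmodule_eq_top (hone ω)
    hrange, fun i => (hω.iSupIndep_fixedSubmodule.comp hanti.injective i).eq_bot, fun i => ?_,
    fun i v hv hv0 => ?_⟩
  · exact Finset.mem_coe.1 (hrange ▸ Set.mem_range_self i)
  · simpa only [euclideanCocycle_one, Matrix.coe_toEuclideanCLM_eq_toEuclideanLin]
      using hω.map_fixedSubmodule hTω hΦ.toIsLinearCocycle (lam i)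
  · simp only [cocycIter_eq_cocycleZPow, backCocycIter_eq_cocycleZPow]
    exact hω.tendsto_log_norm_div hΦ.toIsLinearCocycle hv hv0
end

section
/- Let ℍ be the hyperbolic plane, realized as the upper half-plane with its hyperbolic metric d, with basepoint i. Let (x_n)_{n≥0} be a sequence of points in ℍ such that d(x_n, x_{n+1})/n → 0 as n → ∞, and such that d(i, x_n)/n → θ for some θ ≥ 0. Then there exists a unit-speed geodesic ray γ : [0, ∞) → ℍ (an isometric embedding) with γ(0) = i such that (1/n) d(x_n, γ(θ·n)) → 0 as n → ∞. -/
open Filter Topology UpperHalfPlane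

/-!
Use geodesic polar coordinates `(t, u)` about `i`, and replace `x n` by the point `y n` with the
same angle `u n` at radius `θ n`, which moves it by `|d(i, x n) - θ n| = o(n)`. Two points at the
same radius `R` satisfy `sinh (d / 2) = |sinh R| * |u - v| / 2`, so along `R → ∞` their distance is
`o(R)` exactly when their angles differ by `O(exp ((ε - 1) R))` for every `0 < ε < 1`. If `θ > 0`,
small steps thus make the angles `u n` converge geometrically to some `v`, at a rate which, read
backwards, says that `y n` stays within `o(n)` of the ray of angle `v`.
-/

open Asymptotics

section Asymptotics

variable {ι α : Type*} [PseudoMetricSpace α] {l : Filter ι}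

lemma isLittleO_dist_trans {a b c : ι → α} {g : ι → ℝ}
    (hab : (fun i => dist (a i) (b i)) =o[l] g) (hbc : (fun i => dist (b i) (c i)) =o[l] g) :
    (fun i => dist (a i) (c i)) =o[l] g := by
  refine (IsBigO.of_norm_le fun i => ?_).trans_isLittleO (hab.add hbc)
  rw [Real.norm_of_nonneg dist_nonneg]
  exact dist_triangle _ _ _

lemma isLittleO_natCast_iff_tendsto_div {f : ℕ → ℝ} :
    f =o[atTop] (fun n => (n : ℝ)) ↔ Tendsto (fun n => f n / n) atTop (𝓝 0) :=
  isLittleO_iff_tendsto' <| (eventually_ne_atTop 0).mono fun _ hn h => absurd h (mod_cast hn)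

lemma isLittleO_sub_mul_of_tendsto_div {f : ℕ → ℝ} {c : ℝ}
    (hf : Tendsto (fun n => f n / n) atTop (𝓝 c)) :
    (fun n => f n - c * n) =o[atTop] (fun n => (n : ℝ)) := by
  rw [isLittleO_natCast_iff_tendsto_div, ← sub_self c]
  refine (hf.sub_const c).congr' ?_
  filter_upwards [eventually_ne_atTop 0] with n hn
  field_simp

lemma exists_forall_dist_le_of_isBigO_pow {f : ℕ → α} {q : ℝ} (hq : 0 < q)
    (h : (fun n => dist (f n) (f (n + 1))) =O[atTop] (q ^ ·)) :
    ∃ C, ∀ n, dist (f n) (f (n + 1)) ≤ C * q ^ n := by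
  obtain ⟨C, -, hC⟩ := bound_of_isBigO_nat_atTop h
  refine ⟨C, fun n => ?_⟩
  simpa [abs_of_pos hq] using hC (pow_ne_zero n hq.ne')

lemma cauchySeq_of_isBigO_pow {f : ℕ → α} {q : ℝ} (hq₀ : 0 < q) (hq₁ : q < 1)
    (h : (fun n => dist (f n) (f (n + 1))) =O[atTop] (q ^ ·)) : CauchySeq f :=
  have ⟨C, hC⟩ := exists_forall_dist_le_of_isBigO_pow hq₀ h
  cauchySeq_of_le_geometric q C hq₁ hC

lemma isBigO_dist_of_isBigO_pow {f : ℕ → α} {a : α} {q : ℝ} (hq₀ : 0 < q) (hq₁ : q < 1)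
    (h : (fun n => dist (f n) (f (n + 1))) =O[atTop] (q ^ ·)) (ha : Tendsto f atTop (𝓝 a)) :
    (fun n => dist (f n) a) =O[atTop] (q ^ ·) := by
  obtain ⟨C, hC⟩ := exists_forall_dist_le_of_isBigO_pow hq₀ h
  refine .of_bound (C / (1 - q)) (.of_forall fun n => ?_)
  rw [Real.norm_of_nonneg dist_nonneg, Real.norm_of_nonneg (by positivity), div_mul_eq_mul_div]
  exact dist_le_of_le_geometric_of_tendsto q C hq₁ hC ha n

lemma abs_sinh_le_exp_abs (x : ℝ) : |Real.sinh x| ≤ Real.exp |x| := by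
  rw [Real.abs_sinh]
  linarith [Real.cosh_add_sinh |x|, Real.cosh_pos |x|]

lemma exp_abs_le_one_add_two_mul_abs_sinh (x : ℝ) : Real.exp |x| ≤ 1 + 2 * |Real.sinh x| := by
  rw [Real.abs_sinh]
  linarith [Real.sinh_eq |x|, Real.exp_le_one_iff.2 (neg_nonpos.2 (abs_nonneg x))]

lemma isTheta_sinh_exp_atTop : Real.sinh =Θ[atTop] Real.exp := by
  refine ⟨.of_bound' ?_, .of_bound 4 ?_⟩
  · filter_upwards [eventually_ge_atTop 0] with x hx
    simpa [abs_of_nonneg hx] using abs_sinh_le_exp_abs x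
  · filter_upwards [eventually_ge_atTop 1] with x hx
    have hexp : 2 ≤ Real.exp x := by linarith [Real.add_one_le_exp x]
    have hsinh := exp_abs_le_one_add_two_mul_abs_sinh x
    rw [abs_of_nonneg (by linarith)] at hsinh
    rw [Real.norm_of_nonneg (Real.exp_pos x).le, Real.norm_eq_abs]
    linarith

lemma isLittleO_iff_forall_sinh_isBigO_exp {f g : ι → ℝ} (hg : Tendsto g l atTop) :
    f =o[l] g ↔ ∀ ε ∈ Set.Ioo (0 : ℝ) 1,
      (fun i => Real.sinh (f i)) =O[l] fun i => Real.exp (ε * g i) := by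
  refine ⟨fun h ε hε => .of_bound' ?_, fun h => isLittleO_iff.2 fun c hc => ?_⟩
  · filter_upwards [h.bound hε.1, hg.eventually_ge_atTop 0] with i hfg hgi
    rw [Real.norm_eq_abs, Real.norm_of_nonneg hgi] at hfg
    rw [Real.norm_eq_abs, Real.norm_of_nonneg (Real.exp_pos _).le]
    exact (abs_sinh_le_exp_abs _).trans (Real.exp_le_exp.2 hfg)
  obtain ⟨ε, hε₀, hε⟩ := exists_between (show 0 < min (c / 2) 1 by positivity)
  obtain ⟨hεc, hε₁⟩ := lt_min_iff.1 hε
  obtain ⟨C, hC, hbound⟩ := (h ε ⟨hε₀, hε₁⟩).exists_nonneg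
  have hlarge : ∀ᶠ i in l, 1 + 2 * C ≤ Real.exp (ε * g i) :=
    (Real.tendsto_exp_atTop.comp (hg.const_mul_atTop hε₀)).eventually_ge_atTop _
  filter_upwards [hbound.bound, hlarge, hg.eventually_ge_atTop 0] with i hi hCi hgi
  rw [Real.norm_eq_abs, Real.norm_of_nonneg (Real.exp_pos _).le] at hi
  have hexp : Real.exp |f i| ≤ Real.exp (2 * ε * g i) := calc
    Real.exp |f i| ≤ 1 + 2 * |Real.sinh (f i)| := exp_abs_le_one_add_two_mul_abs_sinh _
    _ ≤ (1 + 2 * C) * Real.exp (ε * g i) := by linarith [Real.one_le_exp (mul_nonneg hε₀.le hgi)]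
    _ ≤ Real.exp (ε * g i) * Real.exp (ε * g i) := by gcongr
    _ = Real.exp (2 * ε * g i) := by rw [← Real.exp_add]; ring_nf
  rw [Real.norm_eq_abs, Real.norm_of_nonneg hgi]
  exact (Real.exp_le_exp.1 hexp).trans (by gcongr; linarith)

end Asymptotics

section PolarCoordinates

lemma im_lt_sqrt_one_add_norm_sq (p : ℂ) : p.im < √(1 + ‖p‖ ^ 2) :=
  Real.lt_sqrt_of_sq_lt <| by
    linarith [sq_le_sq.2 ((Complex.abs_im_le_norm p).trans_eq (abs_norm p).symm)]

/-- The point of `ℍ` represented by `(√(1 + ‖p‖ ^ 2), p)` in the hyperboloid model, which is used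
here because its distance formula is a bilinear form; the basepoint `i` is `p = 0`. -/
noncomputable def hyperboloidPoint (p : ℂ) : ℍ :=
  ⟨⟨p.re / (√(1 + ‖p‖ ^ 2) - p.im), 1 / (√(1 + ‖p‖ ^ 2) - p.im)⟩,
    one_div_pos.2 (sub_pos.2 (im_lt_sqrt_one_add_norm_sq p))⟩

lemma hyperboloidPoint_re (p : ℂ) :
    (hyperboloidPoint p).re = p.re / (√(1 + ‖p‖ ^ 2) - p.im) := rfl

lemma hyperboloidPoint_im (p : ℂ) :
    (hyperboloidPoint p).im = 1 / (√(1 + ‖p‖ ^ 2) - p.im) := rfl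

lemma hyperboloidPoint_zero : hyperboloidPoint 0 = I := by
  apply UpperHalfPlane.ext_re_im <;> simp [hyperboloidPoint_re, hyperboloidPoint_im]

lemma cosh_dist_hyperboloidPoint (p q : ℂ) :
    Real.cosh (dist (hyperboloidPoint p) (hyperboloidPoint q)) =
      √(1 + ‖p‖ ^ 2) * √(1 + ‖q‖ ^ 2) - inner ℝ p q := by
  have hp := sub_pos.2 (im_lt_sqrt_one_add_norm_sq p)
  have hq := sub_pos.2 (im_lt_sqrt_one_add_norm_sq q)
  have hP : √(1 + ‖p‖ ^ 2) ^ 2 = 1 + (p.re ^ 2 + p.im ^ 2) := by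
    rw [Real.sq_sqrt (by positivity), Complex.sq_norm, Complex.normSq_apply, sq, sq]
  have hQ : √(1 + ‖q‖ ^ 2) ^ 2 = 1 + (q.re ^ 2 + q.im ^ 2) := by
    rw [Real.sq_sqrt (by positivity), Complex.sq_norm, Complex.normSq_apply, sq, sq]
  rw [cosh_dist', Complex.inner]
  simp only [hyperboloidPoint_re, hyperboloidPoint_im, Complex.mul_re, Complex.conj_re,
    Complex.conj_im]
  generalize √(1 + ‖p‖ ^ 2) = P at *
  generalize √(1 + ‖q‖ ^ 2) = Q at *
  field_simp
  linear_combination -(Q - q.im) ^ 2 * hP - (P - p.im) ^ 2 * hQ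

lemma hyperboloidPoint_surjective : Function.Surjective hyperboloidPoint := by
  intro z
  have hz := z.im_pos
  let p : ℂ := ⟨z.re / z.im, (z.re ^ 2 + z.im ^ 2 - 1) / (2 * z.im)⟩
  have htime : √(1 + ‖p‖ ^ 2) = (z.re ^ 2 + z.im ^ 2 + 1) / (2 * z.im) := by
    rw [Real.sqrt_eq_iff_eq_sq (by positivity) (by positivity), Complex.sq_norm,
      Complex.normSq_apply]
    simp only [p]
    field_simp
    ring
  have hdiff : √(1 + ‖p‖ ^ 2) - p.im = 1 / z.im := by
    rw [htime]
    simp only [p]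
    field_simp
    ring
  refine ⟨p, UpperHalfPlane.ext_re_im ?_ ?_⟩
  · rw [hyperboloidPoint_re, hdiff, div_div_eq_mul_div, div_one, div_mul_cancel₀ _ hz.ne']
  · rw [hyperboloidPoint_im, hdiff, one_div_one_div]

/-- The point of `ℍ` with geodesic polar coordinates `(t, u)` about `i`. Negative radii are allowed,
so that `polarPoint u` is a complete geodesic through `i`. -/
noncomputable def polarPoint (u : Circle) (t : ℝ) : ℍ := hyperboloidPoint (Real.sinh t * u)

lemma polarPoint_zero (u : Circle) : polarPoint u 0 = I := by
  rw [polarPoint, Real.sinh_zero, Complex.ofReal_zero, zero_mul, hyperboloidPoint_zero]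

/-- The hyperbolic law of cosines: `dist u v ^ 2 / 2` is `1 - cos` of the angle at `i`. -/
lemma cosh_dist_polarPoint (u v : Circle) (s t : ℝ) :
    Real.cosh (dist (polarPoint u s) (polarPoint v t)) =
      Real.cosh (s - t) + Real.sinh s * Real.sinh t * (dist u v ^ 2 / 2) := by
  have htime (w : Circle) (r : ℝ) : √(1 + ‖(Real.sinh r * w : ℂ)‖ ^ 2) = Real.cosh r := by
    rw [norm_mul, Circle.norm_coe, mul_one, Complex.norm_real, Real.norm_eq_abs, sq_abs, add_comm,
      ← Real.cosh_sq, Real.sqrt_sq (Real.cosh_pos r).le]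
  have hinner : inner ℝ (u : ℂ) v = 1 - dist u v ^ 2 / 2 := by
    have hdist : dist u v = ‖(u - v : ℂ)‖ := dist_eq_norm (u : ℂ) v
    rw [hdist, norm_sub_sq_real, Circle.norm_coe, Circle.norm_coe]
    ring
  rw [polarPoint, polarPoint, cosh_dist_hyperboloidPoint, htime, htime, ← Complex.real_smul,
    ← Complex.real_smul, real_inner_smul_left, real_inner_smul_right, hinner, Real.cosh_sub]
  ring

lemma dist_polarPoint_same_angle (u : Circle) (s t : ℝ) :
    dist (polarPoint u s) (polarPoint u t) = |s - t| := by
  have h := cosh_dist_polarPoint u u s t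
  rw [dist_self, zero_pow two_ne_zero, zero_div, mul_zero, add_zero, ← Real.cosh_abs (s - t)] at h
  exact Real.cosh_strictMonoOn.injOn dist_nonneg (abs_nonneg (s - t)) h

lemma sinh_half_dist_polarPoint_same_radius (u v : Circle) (t : ℝ) :
    Real.sinh (dist (polarPoint u t) (polarPoint v t) / 2) = |Real.sinh t| * (dist u v / 2) := by
  have hcosh := cosh_dist_polarPoint u v t t
  rw [sub_self, Real.cosh_zero] at hcosh
  have hhalf := Real.cosh_two_mul (dist (polarPoint u t) (polarPoint v t) / 2)
  rw [mul_div_cancel₀ _ two_ne_zero, Real.cosh_sq] at hhalf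
  refine (sq_eq_sq₀ (Real.sinh_nonneg_iff.2 (by positivity)) (by positivity)).1 ?_
  rw [mul_pow, sq_abs]
  linarith

lemma exists_polarPoint_dist_eq (z : ℍ) : ∃ u : Circle, polarPoint u (dist I z) = z := by
  obtain ⟨p, rfl⟩ := hyperboloidPoint_surjective z
  have hp : hyperboloidPoint p = polarPoint (Circle.exp p.arg) (Real.arsinh ‖p‖) := by
    rw [polarPoint, Real.sinh_arsinh, Circle.coe_exp, Complex.norm_mul_exp_arg_mul_I]
  refine ⟨Circle.exp p.arg, ?_⟩
  rw [hp, ← polarPoint_zero (Circle.exp p.arg), dist_polarPoint_same_angle, zero_sub, abs_neg,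
    abs_of_nonneg (Real.arsinh_nonneg_iff.2 (norm_nonneg p))]

end PolarCoordinates

lemma isLittleO_dist_polarPoint_iff {ι : Type*} {l : Filter ι} {u v : ι → Circle} {R : ι → ℝ}
    (hR : Tendsto R l atTop) :
    (fun i => dist (polarPoint (u i) (R i)) (polarPoint (v i) (R i))) =o[l] R ↔
      ∀ ε ∈ Set.Ioo (0 : ℝ) 1,
        (fun i => dist (u i) (v i)) =O[l] fun i => Real.exp ((ε - 1) * R i) := by
  have hsinh : (fun i => Real.sinh (2⁻¹ * dist (polarPoint (u i) (R i)) (polarPoint (v i) (R i))))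
      =Θ[l] fun i => Real.exp (R i) * dist (u i) (v i) := by
    simp only [inv_mul_eq_div, sinh_half_dist_polarPoint_same_radius]
    have hsinhR : (fun i => |Real.sinh (R i)|) =Θ[l] fun i => Real.exp (R i) :=
      IsTheta.norm_left ⟨isTheta_sinh_exp_atTop.1.comp_tendsto hR,
        isTheta_sinh_exp_atTop.2.comp_tendsto hR⟩
    have hhalf : (fun i => dist (u i) (v i) / 2) =Θ[l] fun i => dist (u i) (v i) := by
      simpa only [div_eq_inv_mul] using
        (isTheta_const_mul_left (inv_ne_zero two_ne_zero)).2 isTheta_rfl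
    exact hsinhR.mul hhalf
  rw [← isLittleO_const_mul_left_iff (inv_ne_zero (two_ne_zero (α := ℝ))),
    isLittleO_iff_forall_sinh_isBigO_exp hR]
  refine forall₂_congr fun ε _ => hsinh.isBigO_congr_left.trans ?_
  rw [isBigO_mul_iff_isBigO_div (.of_forall fun i => (Real.exp_pos (R i)).ne')]
  simp only [← Real.exp_sub, sub_one_mul]

lemma exists_isLittleO_dist_polarPoint {θ : ℝ} (hθ : 0 < θ) {u : ℕ → Circle}
    (hu : (fun n => dist (polarPoint (u n) (θ * n)) (polarPoint (u (n + 1)) (θ * n))) =o[atTop]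
      fun n => (n : ℝ)) :
    ∃ v, (fun n => dist (polarPoint (u n) (θ * n)) (polarPoint v (θ * n))) =o[atTop]
      fun n => (n : ℝ) := by
  have hR : Tendsto (fun n : ℕ => θ * n) atTop atTop :=
    tendsto_natCast_atTop_atTop.const_mul_atTop hθ
  simp only [← isLittleO_const_mul_right_iff (g := fun n : ℕ => (n : ℝ)) hθ.ne',
    isLittleO_dist_polarPoint_iff hR] at hu ⊢
  have hpow (ε : ℝ) : (fun n : ℕ => Real.exp ((ε - 1) * (θ * n))) =
      (Real.exp ((ε - 1) * θ) ^ ·) := by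
    ext n
    rw [← mul_assoc, mul_comm, Real.exp_nat_mul]
  have hlt {ε : ℝ} (hε : ε < 1) : Real.exp ((ε - 1) * θ) < 1 :=
    Real.exp_lt_one_iff.2 (mul_neg_of_neg_of_pos (sub_neg.2 hε) hθ)
  simp only [hpow] at hu ⊢
  have hhalf : (2⁻¹ : ℝ) ∈ Set.Ioo 0 1 := by norm_num
  obtain ⟨v, hv⟩ := cauchySeq_tendsto_of_complete
    (cauchySeq_of_isBigO_pow (Real.exp_pos _) (hlt hhalf.2) (hu _ hhalf))
  exact ⟨v, fun ε hε => isBigO_dist_of_isBigO_pow (Real.exp_pos _) (hlt hε.2) (hu ε hε) hv⟩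

lemma isLittleO_dist_polarPoint_succ {x : ℕ → ℍ} {u : ℕ → Circle} {θ : ℝ}
    (hsmall : (fun n => dist (x n) (x (n + 1))) =o[atTop] fun n => (n : ℝ))
    (hxu : (fun n => dist (x n) (polarPoint (u n) (θ * n))) =o[atTop] fun n => (n : ℝ)) :
    (fun n => dist (polarPoint (u n) (θ * n)) (polarPoint (u (n + 1)) (θ * n))) =o[atTop]
      fun n => (n : ℝ) := by
  have hconst (c : ℝ) : (fun _ => c) =o[atTop] fun n : ℕ => (n : ℝ) :=
    isLittleO_const_left.2 (.inr (tendsto_norm_atTop_atTop.comp tendsto_natCast_atTop_atTop))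
  have hsucc : (fun n : ℕ => ((n + 1 : ℕ) : ℝ)) =O[atTop] fun n => (n : ℝ) := by
    simpa only [Nat.cast_succ] using (isBigO_refl _ _).add (hconst 1).isBigO
  have hstep : (fun n => dist (x (n + 1)) (polarPoint (u (n + 1)) (θ * (n + 1 : ℕ)))) =o[atTop]
      fun n => (n : ℝ) := (hxu.comp_tendsto (tendsto_add_atTop_nat 1)).trans_isBigO hsucc
  have hradius : (fun n : ℕ => dist (polarPoint (u (n + 1)) (θ * (n + 1 : ℕ)))
      (polarPoint (u (n + 1)) (θ * n))) =o[atTop] fun n => (n : ℝ) := by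
    simp only [dist_polarPoint_same_angle, ← mul_sub, Nat.cast_succ, add_sub_cancel_left]
    exact hconst _
  refine isLittleO_dist_trans ?_ (isLittleO_dist_trans (isLittleO_dist_trans hsmall hstep) hradius)
  simpa only [dist_comm] using hxu

/-- **Kaimanovich's regularity criterion in the hyperbolic plane.**
If a sequence in `ℍ` has small steps (`d(x_n, x_{n+1}) = o(n)`) and linearly convergent
distances to the basepoint `i` (`d(i, x_n)/n → θ`), then it sublinearly tracks a unit-speed
geodesic ray starting at `i`. -/
theorem regular_sequence_hyperbolic_plane
    (x : ℕ → UpperHalfPlane) (θ : ℝ) (hθ : 0 ≤ θ)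
    (hsmall : Tendsto (fun n : ℕ => dist (x n) (x (n + 1)) / (n : ℝ)) atTop (𝓝 0))
    (hdist : Tendsto (fun n : ℕ => dist UpperHalfPlane.I (x n) / (n : ℝ)) atTop (𝓝 θ)) :
    ∃ γ : ℝ → UpperHalfPlane,
      γ 0 = UpperHalfPlane.I ∧
      (∀ s t : ℝ, 0 ≤ s → 0 ≤ t → dist (γ s) (γ t) = |s - t|) ∧
      Tendsto (fun n : ℕ => dist (x n) (γ (θ * n)) / (n : ℝ)) atTop (𝓝 0) := by
  choose u hu using fun n => exists_polarPoint_dist_eq (x n)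
  have hxu : (fun n => dist (x n) (polarPoint (u n) (θ * n))) =o[atTop] fun n => (n : ℝ) := by
    refine (isLittleO_sub_mul_of_tendsto_div hdist).norm_left.congr_left fun n => ?_
    rw [Real.norm_eq_abs, ← dist_polarPoint_same_angle (u n), hu]
  obtain ⟨v, hv⟩ : ∃ v, (fun n => dist (x n) (polarPoint v (θ * n))) =o[atTop]
      fun n => (n : ℝ) := by
    rcases hθ.eq_or_lt with rfl | hθ
    · exact ⟨1, by simpa only [zero_mul, polarPoint_zero] using hxu⟩
    · obtain ⟨v, hv⟩ := exists_isLittleO_dist_polarPoint hθ <|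
        isLittleO_dist_polarPoint_succ (isLittleO_natCast_iff_tendsto_div.2 hsmall) hxu
      exact ⟨v, isLittleO_dist_trans hxu hv⟩
  exact ⟨polarPoint v, polarPoint_zero v, fun s t _ _ => dist_polarPoint_same_angle v s t,
    isLittleO_natCast_iff_tendsto_div.1 hv⟩
end
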